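/- There exists a complex number ρ₀ with 0.85 < Re(ρ₀) < 0.95 and 2.0 < Im(ρ₀) < 2.2 such that the set of zeros of f₁ in the closed right half-plane Re(s) ≥ 1/2 is exactly {1, ρ₀, conj(ρ₀)}, and each of these three zeros is simple (the derivative of f₁ does not vanish there). -/

import Mathlib

open Complex

noncomputable def chi (s : ℂ) : ℂ := s * (s - 1) * completedRiemannZeta₀ s + 1

noncomputable def A : ℂ := Real.pi / 3 - 1

noncomputable def f1 (s : ℂ) : ℂ :=
  (s - 1) * ((s - 1) * (3 * s - 2) * (A * s - A + 1) * chi (s + 1) * chi (3 * s)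
    - (s + 1) * (s - 2) * chi s * chi (3 * s - 1)
    - 2 * (s - 1) * (s - 2) * chi s * chi (3 * s))

noncomputable def f2 (s : ℂ) : ℂ :=
  (s - 2) * ((A * s + 3) * (s - 1) ^ 2 * chi (s + 2)
    - 2 * (s - 1) * (s - 3) * chi (s + 1)
    - (s + 2) * (s - 3) * chi s)

noncomputable def Z1 (s : ℂ) : ℂ := chi (2 * s) * f1 s - chi (2 * s - 1) * f1 (1 - s)

noncomputable def Z2 (s : ℂ) : ℂ := chi (2 * s) * f2 s - chi (2 * s - 1) * f2 (1 - s)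


open MeasureTheory Set HurwitzZeta in
lemma hmod_exists : ∃ h : ℝ → ℝ, (∀ x, 0 ≤ h x) ∧
    (∀ x, (hurwitzEvenFEPair 0).f_modif x = (h x : ℂ)) := by
  suffices H : ∀ x, ∃ r : ℝ, 0 ≤ r ∧ (hurwitzEvenFEPair 0).f_modif x = (r : ℂ) by
    choose h h1 h2 using H
    exact ⟨h, h1, h2⟩
  intro x
  have hk : ∀ y : ℝ, 0 < y → 1 ≤ evenKernel 0 y := by
    intro y hy
    have h := hasSum_int_evenKernel 0 hy
    have h2 := sum_le_hasSum {0} (fun i _ => (Real.exp_pos _).le) h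
    simpa using h2
  rcases lt_trichotomy x 1 with hx | rfl | hx
  · rcases le_or_gt x 0 with hx0 | hx0
    · exact ⟨0, le_rfl, by simp [WeakFEPair.f_modif, not_lt.2 hx0, not_lt.2 hx.le]⟩
    · refine ⟨evenKernel 0 x - x ^ (-(1/2) : ℝ), ?_,
        by simp [WeakFEPair.f_modif, hx0, hx, not_lt.2 hx.le, hurwitzEvenFEPair]⟩
      have h1 := evenKernel_functional_equation 0 x
      rw [← evenKernel_eq_cosKernel_of_zero] at h1
      have h2 := hk (1/x) (by positivity)
      simp only [sub_nonneg]
      rw [h1, Real.rpow_neg hx0.le]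
      have : 0 < x ^ (1/2:ℝ) := by positivity
      field_simp
      exact h2
  · exact ⟨0, le_rfl, by simp [WeakFEPair.f_modif]⟩
  · have hx0 : 0 < x := by linarith
    refine ⟨evenKernel 0 x - 1, ?_, by simp [WeakFEPair.f_modif, hx, not_lt.2 hx.le, hurwitzEvenFEPair]⟩
    have := hk x hx0
    linarith

open MeasureTheory Set HurwitzZeta in
lemma kern_exists : ∃ k : ℝ → ℝ, (∀ x ∈ Ioi (0:ℝ), 0 ≤ k x) ∧
    (∀ w : ℂ, IntegrableOn (fun x : ℝ => Complex.exp (w * (Real.log x / 2 : ℝ)) * (k x : ℂ)) (Ioi 0)) ∧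
    (∀ w : ℂ, completedRiemannZeta₀ (1/2 + w) =
      ∫ x in Ioi (0:ℝ), Complex.exp (w * (Real.log x / 2 : ℝ)) * (k x : ℂ)) := by
  obtain ⟨h, h0, hh⟩ := hmod_exists
  have key : ∀ w : ℂ, ∀ x ∈ Ioi (0:ℝ), (x:ℂ) ^ ((1/2 + w)/2 - 1) • (hurwitzEvenFEPair 0).f_modif x
      = 2 * (Complex.exp (w * (Real.log x / 2 : ℝ)) * ((x ^ (-(3/4):ℝ) * h x / 2 : ℝ) : ℂ)) := by
    intro w x hx
    have hx : 0 < x := hx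
    have hxc : (x:ℂ) ≠ 0 := by exact_mod_cast hx.ne'
    rw [hh]
    push_cast
    rw [Complex.ofReal_cpow hx.le, Complex.cpow_def_of_ne_zero hxc, Complex.cpow_def_of_ne_zero hxc,
      smul_eq_mul, Complex.ofReal_log hx.le]
    rw [show 2 * (cexp (w * (log ↑x / 2)) * (cexp (log ↑x * ((-(3 / 4) : ℝ):ℂ)) * ↑(h x) / 2))
      = cexp (w * (log ↑x / 2)) * cexp (log ↑x * ((-(3 / 4) : ℝ):ℂ)) * ↑(h x) by ring, ← Complex.exp_add]
    congr 2
    push_cast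
    ring
  have hc : ∀ s, MellinConvergent (hurwitzEvenFEPair 0).f_modif s := by
    intro s
    obtain ⟨_, ht⟩ := exists_gt s.re
    obtain ⟨_, hu⟩ := exists_lt s.re
    have hP := (hurwitzEvenFEPair 0).isStrongFEPair_toStrongFEPair
    exact mellinConvergent_of_isBigO_rpow (hurwitzEvenFEPair 0).hf_modif_int (hP.hf_top _) ht (hP.hf_zero _) hu
  refine ⟨fun x => x ^ (-(3/4):ℝ) * h x / 2, fun x hx => ?_, fun w => ?_, fun w => ?_⟩
  · have hx : 0 < x := hx
    have := h0 x
    positivity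
  · have := hc ((1/2+w)/2)
    unfold MellinConvergent at this
    rw [integrableOn_congr_fun (key w) measurableSet_Ioi] at this
    have h3 := this.const_mul (1/2)
    refine h3.congr (Filter.Eventually.of_forall fun x => ?_)
    simp only; ring
  · have : completedRiemannZeta₀ (1/2 + w) = mellin (hurwitzEvenFEPair 0).f_modif ((1/2+w)/2) / 2 := rfl
    rw [this, mellin, setIntegral_congr_fun measurableSet_Ioi (key w), integral_const_mul]
    ring

def PosSer (f : ℂ → ℂ) : Prop :=
  ∃ a : ℕ → ℝ, (∀ n, 0 ≤ a n) ∧ ∀ z : ℂ, HasSum (fun n => (a n : ℂ) * z ^ n) (f z)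

open MeasureTheory Set in
lemma zeta0_posSer : ∃ f : ℂ → ℂ, PosSer f ∧ ∀ w : ℂ, completedRiemannZeta₀ (1/2 + w) = f (w^2) := by
  obtain ⟨k, k0, ki, kz⟩ := kern_exists
  have sym : ∀ w : ℂ, completedRiemannZeta₀ (1/2 - w) = completedRiemannZeta₀ (1/2 + w) := by
    intro w
    rw [← completedRiemannZeta₀_one_sub]; ring_nf
  have hci : ∀ w : ℂ, IntegrableOn (fun x : ℝ => Complex.cosh (w * (Real.log x / 2 : ℝ)) * (k x : ℂ)) (Ioi 0) := by
    intro w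
    refine (((ki w).add (ki (-w))).const_mul (1/2)).congr (Filter.Eventually.of_forall fun x => ?_)
    simp only [Complex.cosh, Pi.add_apply]; ring_nf
  have hcz : ∀ w : ℂ, completedRiemannZeta₀ (1/2 + w) =
      ∫ x in Ioi (0:ℝ), Complex.cosh (w * (Real.log x / 2 : ℝ)) * (k x : ℂ) := by
    intro w
    have h1 := kz w
    have h2 := kz (-w)
    rw [← sub_eq_add_neg, sym] at h2
    have h3 := integral_add (ki w) (ki (-w))
    rw [← h1, ← h2] at h3
    rw [show completedRiemannZeta₀ (1/2 + w) = (1/2:ℂ) * (completedRiemannZeta₀ (1/2 + w) + completedRiemannZeta₀ (1/2 + w)) by ring,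
      ← h3, ← integral_const_mul]
    congr 1; ext x
    simp only [Complex.cosh]; ring_nf
  have kmeas : AEStronglyMeasurable (fun x => (k x : ℂ)) (volume.restrict (Ioi (0:ℝ))) := by
    have := (ki 0).aestronglyMeasurable
    simpa using this
  have main : ∀ w : ℂ, HasSum (fun n : ℕ => ((∫ x in Ioi (0:ℝ), (Real.log x / 2)^(2*n) / (Nat.factorial (2*n)) * k x : ℝ) : ℂ) * (w^2)^n)
      (completedRiemannZeta₀ (1/2 + w)) := by
    intro w
    rw [hcz]
    have hs : ∀ w x : ℂ, HasSum (fun n : ℕ => (w * x)^(2*n) / (Nat.factorial (2*n))) (Complex.cosh (w*x)) :=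
      fun w x => Complex.hasSum_cosh _
    have := hasSum_integral_of_dominated_convergence (μ := volume.restrict (Ioi (0:ℝ)))
      (F := fun (n : ℕ) (x : ℝ) => (w * (Real.log x / 2 : ℝ))^(2*n) / (Nat.factorial (2*n)) * (k x : ℂ))
      (f := fun x : ℝ => Complex.cosh (w * (Real.log x / 2 : ℝ)) * (k x : ℂ))
      (fun n x => (‖w‖ * (Real.log x / 2 : ℝ))^(2*n) / (Nat.factorial (2*n)) * k x)
      ?_ ?_ ?_ ?_ ?_
    · have e : ∀ g h : ℕ → ℂ, g = h → ∀ c, HasSum g c → HasSum h c := fun g h e c hg => e ▸ hg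
      refine e _ _ ?_ _ this
      ext n
      symm
      rw [← integral_complex_ofReal, ← integral_mul_const]
      congr 1; ext x
      push_cast
      rw [← pow_mul]
      ring
    · intro n
      refine AEStronglyMeasurable.mul ?_ kmeas
      exact Measurable.aestronglyMeasurable (by fun_prop)
    · intro n
      filter_upwards [ae_restrict_mem measurableSet_Ioi] with x hx
      have := k0 x hx
      rw [norm_mul, norm_div, norm_pow, norm_mul, Complex.norm_real, Complex.norm_natCast, Complex.norm_real,
        Real.norm_of_nonneg this, mul_pow, mul_pow, Real.norm_eq_abs, Even.pow_abs ⟨n, by ring⟩]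
    · filter_upwards with x
      have := (Real.hasSum_cosh (‖w‖ * (Real.log x / 2))).mul_right (k x)
      exact this.summable
    · have h := hci (‖w‖)
      have h2 := h.re
      refine h2.congr ?_
      filter_upwards with x
      have := (Real.hasSum_cosh (‖w‖ * (Real.log x / 2))).mul_right (k x)
      rw [this.tsum_eq]
      simp only [RCLike.re_to_complex]
      rw [← Complex.ofReal_mul, ← Complex.ofReal_cosh, ← Complex.ofReal_mul, Complex.ofReal_re]
    · filter_upwards with x
      exact (Complex.hasSum_cosh _).mul_right _
  choose r hr using fun z : ℂ => IsAlgClosed.exists_pow_nat_eq z (n := 2) two_pos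
  refine ⟨fun z => completedRiemannZeta₀ (1/2 + r z), ⟨fun n => ∫ x in Ioi (0:ℝ), (Real.log x / 2)^(2*n) / (Nat.factorial (2*n)) * k x, ?_, ?_⟩, ?_⟩
  · intro n
    refine setIntegral_nonneg measurableSet_Ioi fun x hx => ?_
    have := k0 x hx
    have h2 : 0 ≤ (Real.log x / 2)^(2*n) := Even.pow_nonneg ⟨n, by ring⟩ _
    positivity
  · intro z
    have := main (r z)
    rwa [hr z] at this
  · intro w
    have h1 := main w
    have h2 := main (r (w^2))
    rw [hr (w^2)] at h2
    exact h1.unique h2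

open MeasureTheory Set in
lemma zeta0_norm_le (s : ℂ) : ‖completedRiemannZeta₀ s‖ ≤ ‖completedRiemannZeta₀ (s.re : ℂ)‖ := by
  obtain ⟨k, k0, ki, kz⟩ := kern_exists
  have h1 := kz (s - 1/2)
  have h2 := kz ((s.re : ℂ) - 1/2)
  rw [add_sub_cancel] at h1 h2
  have e : ∀ x ∈ Ioi (0:ℝ), Complex.exp (((s.re : ℂ) - 1/2) * (Real.log x / 2 : ℝ)) * (k x : ℂ)
     = ((Real.exp ((s.re - 1/2) * (Real.log x / 2 : ℝ)) * k x : ℝ) : ℂ) := by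
    intro x hx; push_cast; rfl
  rw [setIntegral_congr_fun measurableSet_Ioi e, integral_complex_ofReal] at h2
  rw [h2, Complex.norm_real]
  refine le_trans ?_ (le_abs_self _)
  rw [h1]
  refine (norm_integral_le_integral_norm _).trans (le_of_eq ?_)
  refine setIntegral_congr_fun measurableSet_Ioi fun x hx => ?_
  simp only [norm_mul, Complex.norm_exp, Complex.norm_real]
  rw [Real.norm_of_nonneg (k0 x hx), Complex.re_mul_ofReal]
  simp

lemma PosSer.norm_le {f : ℂ → ℂ} (hf : PosSer f) {z : ℂ} {R : ℝ} (h : ‖z‖ ≤ R) : ‖f z‖ ≤ ‖f (R:ℂ)‖ := by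
  obtain ⟨a, a0, ha⟩ := hf
  have hR : HasSum (fun n => a n * R ^ n) (f R).re := by
    have := Complex.hasSum_re (ha R)
    convert this using 2 with n
    rw [← Complex.ofReal_pow, ← Complex.ofReal_mul, Complex.ofReal_re]
  refine le_trans ?_ (Complex.re_le_norm _)
  rw [← (ha z).tsum_eq]
  refine tsum_of_norm_bounded hR fun n => ?_
  rw [norm_mul, norm_pow, Complex.norm_real, Real.norm_of_nonneg (a0 n)]
  exact mul_le_mul_of_nonneg_left (pow_le_pow_left₀ (norm_nonneg _) h _) (a0 n)

lemma PosSer.conj {f : ℂ → ℂ} (hf : PosSer f) (z : ℂ) : f ((starRingEnd ℂ) z) = (starRingEnd ℂ) (f z) := by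
  obtain ⟨a, a0, ha⟩ := hf
  have h1 := (ha z).map (starRingEnd ℂ) Complex.continuous_conj
  refine (ha _).unique ?_
  convert h1 using 2 with n
  simp

lemma PosSer.smul {f : ℂ → ℂ} (hf : PosSer f) {c : ℝ} (hc : 0 ≤ c) : PosSer (fun z => c * f z) := by
  obtain ⟨a, a0, ha⟩ := hf
  refine ⟨fun n => c * a n, fun n => mul_nonneg hc (a0 n), fun z => ?_⟩
  have := (ha z).mul_left (c:ℂ)
  have e : (fun n => ((c * a n : ℝ):ℂ) * z^n) = fun n => (c:ℂ) * ((a n : ℂ) * z^n) := by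
    ext n; push_cast; ring
  rw [e]; exact this

lemma PosSer.newton {f : ℂ → ℂ} (hf : PosSer f) {c : ℝ} (hc : 0 ≤ c) :
    ∃ g : ℂ → ℂ, PosSer g ∧ ∀ z, f z = f c + (z - c) * g z := by
  obtain ⟨a, a0, ha⟩ := hf
  have hR : ∀ R : ℝ, HasSum (fun n => a n * R ^ n) (f R).re := by
    intro R
    have := Complex.hasSum_re (ha R)
    convert this using 2 with n
    rw [← Complex.ofReal_pow, ← Complex.ofReal_mul, Complex.ofReal_re]
  have hsh : ∀ (R : ℝ) (i : ℕ), Summable (fun j => a (j + i) * R ^ (j + i)) := fun R i =>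
    (summable_nat_add_iff (f := fun n => a n * R ^ n) i).2 (hR R).summable
  have hle : ∀ (R : ℝ) (i : ℕ), 0 ≤ R → ∑' j, a (j + i) * R ^ (j + i) ≤ (f R).re := by
    intro R i h0
    rw [← (hR R).tsum_eq, ← (hR R).summable.sum_add_tsum_nat_add i]
    have : 0 ≤ ∑ n ∈ Finset.range i, a n * R ^ n := Finset.sum_nonneg fun n _ => mul_nonneg (a0 n) (pow_nonneg h0 _)
    linarith
  have hbs : ∀ i, Summable (fun j => a (j + (i + 1)) * c ^ j) := by
    intro i
    have h1 := hsh (c + 1) (i+1)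
    refine Summable.of_nonneg_of_le (fun j => mul_nonneg (a0 _) (pow_nonneg hc _)) (fun j => ?_) h1
    refine mul_le_mul_of_nonneg_left ?_ (a0 _)
    calc c ^ j ≤ (c+1)^j := pow_le_pow_left₀ hc (by linarith) _
      _ ≤ (c+1)^(j + (i+1)) := pow_le_pow_right₀ (by linarith) (by omega)
  set b : ℕ → ℝ := fun i => ∑' j, a (j + (i + 1)) * c ^ j with hb
  have b0 : ∀ i, 0 ≤ b i := fun i => tsum_nonneg fun j => mul_nonneg (a0 _) (pow_nonneg hc _)
  have brec : ∀ i, b i = a (i+1) + c * b (i+1) := by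
    intro i
    rw [hb]
    simp only
    rw [(hbs i).tsum_eq_zero_add, ← tsum_mul_left]
    simp only [zero_add, pow_zero, mul_one]
    congr 1
    refine tsum_congr fun j => ?_
    rw [show j + 1 + (i + 1) = j + (i + 1 + 1) by ring, pow_succ]; ring
  have bR : ∀ (R : ℝ) (i : ℕ), c ≤ R → b i * R ^ (i+1) ≤ (f R).re := by
    intro R i h
    refine le_trans ?_ (hle R (i+1) (hc.trans h))
    rw [hb]; simp only
    rw [← tsum_mul_right]
    refine Summable.tsum_le_tsum (fun j => ?_) ((hbs i).mul_right _) (hsh R (i+1))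
    rw [mul_assoc, pow_add R j]
    refine mul_le_mul_of_nonneg_left ?_ (a0 _)
    exact mul_le_mul_of_nonneg_right (pow_le_pow_left₀ hc h _) (pow_nonneg (hc.trans h) _)
  have bsum : ∀ z : ℂ, Summable (fun n => (b n : ℂ) * z ^ n) := by
    intro z
    set R : ℝ := ‖z‖ + c + 1
    have hRp : 0 < R := by positivity
    have hz : ‖z‖ / R < 1 := by
      rw [div_lt_one hRp]; simp only [R]; linarith
    refine Summable.of_norm_bounded (g := fun n => (f R).re / R * (‖z‖ / R)^n) 
      ((summable_geometric_of_lt_one (by positivity) hz).mul_left _) fun n => ?_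
    rw [norm_mul, norm_pow, Complex.norm_real, Real.norm_of_nonneg (b0 n)]
    have := bR R n (by simp only [R]; linarith [norm_nonneg z])
    have h2 : b n ≤ (f R).re / R ^ (n+1) := by
      rw [le_div_iff₀ (by positivity)]; exact this
    calc b n * ‖z‖^n ≤ (f R).re / R ^ (n+1) * ‖z‖^n := mul_le_mul_of_nonneg_right h2 (by positivity)
      _ = _ := by rw [div_pow, pow_succ]; field_simp
  refine ⟨fun z => ∑' n, (b n : ℂ) * z ^ n, ⟨b, b0, fun z => (bsum z).hasSum⟩, fun z => ?_⟩
  have e1 : f z = a 0 + ∑' n, (a (n+1) : ℂ) * z ^ (n+1) := by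
    rw [← (ha z).tsum_eq, (ha z).summable.tsum_eq_zero_add]; simp
  have e2 : f c = a 0 + c * b 0 := by
    rw [← (ha c).tsum_eq, (ha c).summable.tsum_eq_zero_add]
    simp only [pow_zero, mul_one, hb]
    rw [← Complex.ofReal_mul, ← tsum_mul_left]
    rw [Complex.ofReal_tsum]
    congr 1
    refine tsum_congr fun j => ?_
    push_cast; ring
  clear_value b
  have e3 : ∑' n, (b n : ℂ) * z ^ n = b 0 + ∑' n, (b (n+1) : ℂ) * z ^ (n+1) := by
    rw [(bsum z).tsum_eq_zero_add]; simp
  have e4 : z * ∑' n, (b n : ℂ) * z ^ n = ∑' n, (a (n+1) : ℂ) * z ^ (n+1) + c * ∑' n, (b (n+1) : ℂ) * z ^ (n+1) := by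
    rw [← tsum_mul_left, ← tsum_mul_left, ← Summable.tsum_add]
    · refine tsum_congr fun n => ?_
      rw [brec n]; push_cast; ring
    · exact (summable_nat_add_iff (f := fun n => (a n : ℂ) * z ^ n) 1).2 (ha z).summable
    · exact ((summable_nat_add_iff (f := fun n => (b n : ℂ) * z ^ n) 1).2 (bsum z)).mul_left _
  simp only
  rw [sub_mul, e4, e1, e2]
  rw [e3]
  ring


structure Bl where
  x : ℤ
  y : ℤ
  r : ℤ

namespace Bl
def S : ℤ := Int.ofNat 1152921504606846976
def hst (m n : ℕ) : ℕ := Nat.succ (Nat.div (Nat.add m (Nat.div n m)) 2)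
def nbN (a b : ℕ) : ℕ := (fun n => hst (hst (Nat.succ (Nat.add a b)) n) n) (Nat.add (Nat.mul a a) (Nat.mul b b))
def nb (p : Bl) : ℤ := Int.ofNat (nbN p.x.natAbs p.y.natAbs)
def add (p q : Bl) : Bl := ⟨Int.add p.x q.x, Int.add p.y q.y, Int.add p.r q.r⟩
def sub (p q : Bl) : Bl := ⟨Int.sub p.x q.x, Int.sub p.y q.y, Int.add p.r q.r⟩
def cj (p : Bl) : Bl := ⟨p.x, Int.neg p.y, p.r⟩
def sc (n : ℕ) (p : Bl) : Bl := ⟨Int.mul (Int.ofNat n) p.x, Int.mul (Int.ofNat n) p.y, Int.mul (Int.ofNat n) p.r⟩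
def dv (n : ℕ) (p : Bl) : Bl :=
  ⟨Int.ediv p.x (Int.ofNat n), Int.ediv p.y (Int.ofNat n), Int.add (Int.ediv p.r (Int.ofNat n)) (Int.ofNat 3)⟩
def mul (p q : Bl) : Bl :=
  ⟨Int.ediv (Int.sub (Int.mul p.x q.x) (Int.mul p.y q.y)) S,
   Int.ediv (Int.add (Int.mul p.x q.y) (Int.mul p.y q.x)) S,
   Int.add (Int.ediv (Int.add (Int.add (Int.mul p.nb q.r) (Int.mul q.nb p.r)) (Int.mul p.r q.r)) S) (Int.ofNat 3)⟩
def lbd (p : Bl) : ℤ := Int.sub (Int.ediv (Int.add (Int.mul p.x p.x) (Int.mul p.y p.y)) p.nb) p.r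

/-- center -/
noncomputable def c (p : Bl) : ℂ := (p.x : ℂ) + (p.y : ℂ) * I
def Mem (p : Bl) (z : ℂ) : Prop := ‖(S : ℂ) * z - p.c‖ ≤ p.r

lemma S_pos : (0:ℝ) < (S:ℝ) := by norm_num [S]
lemma S_posZ : (0:ℤ) < S := by norm_num [S]
lemma S_ne : (S:ℂ) ≠ 0 := by norm_num [S]

lemma hst_le {m n : ℕ} (hm : 0 < m) {x : ℝ} (_hx : 0 ≤ x) (h : x^2 ≤ n) : x ≤ hst m n := by
  have h1 : hst m n = (m + n / m) / 2 + 1 := rfl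
  have hm' : (0:ℝ) < m := by exact_mod_cast hm
  have h2 : (n:ℝ) / m < ((n / m : ℕ):ℝ) + 1 := by
    rw [div_lt_iff₀ hm']
    have h5 : n < (n / m + 1) * m := by
      have := Nat.div_add_mod n m
      have := Nat.mod_lt n hm
      nlinarith
    exact_mod_cast h5
  have h3 : ((m + n/m : ℕ):ℝ) ≤ 2 * ((m + n/m)/2 : ℕ) + 1 := by
    have : m + n/m ≤ 2 * ((m + n/m)/2) + 1 := by omega
    exact_mod_cast this
  rw [h1]
  push_cast at h3 ⊢
  have h4 : 2 * x ≤ m + n / m := by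
    have : x^2 / m ≤ n / m := div_le_div_of_nonneg_right h hm'.le
    have h5 : 2 * x ≤ m + x^2 / m := by
      have := sq_nonneg (m - x)
      rw [← sub_nonneg]
      have : (m:ℝ) + x^2/m - 2*x = (m-x)^2/m := by field_simp; ring
      rw [this]; positivity
    linarith
  linarith

lemma hst_pos (m n : ℕ) : 0 < hst m n := Nat.succ_pos _

lemma nb_pos (p : Bl) : (0:ℤ) < p.nb := by
  have : 0 < nbN p.x.natAbs p.y.natAbs := hst_pos _ _
  exact Int.natCast_pos.2 this

lemma c_normSq (p : Bl) : ‖p.c‖^2 = (p.x:ℝ)^2 + (p.y:ℝ)^2 := by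
  rw [← Complex.normSq_eq_norm_sq, c]
  have : (p.x : ℂ) + (p.y : ℂ) * I = ((p.x:ℝ):ℂ) + ((p.y:ℝ):ℂ) * I := by push_cast; rfl
  rw [this, Complex.normSq_add_mul_I]

lemma norm_c_le (p : Bl) : ‖p.c‖ ≤ p.nb := by
  have h0 : ‖p.c‖^2 ≤ ((p.x.natAbs * p.x.natAbs + p.y.natAbs * p.y.natAbs : ℕ):ℝ) := by
    rw [c_normSq]
    have h : ((p.x.natAbs * p.x.natAbs + p.y.natAbs * p.y.natAbs : ℕ):ℤ) = p.x^2 + p.y^2 := by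
      push_cast [Int.natAbs_mul_self', Int.natAbs_mul_self]
      rw [← abs_mul, ← abs_mul, abs_mul_self, abs_mul_self]; ring
    have h' : ((p.x.natAbs * p.x.natAbs + p.y.natAbs * p.y.natAbs : ℕ):ℝ) = (p.x:ℝ)^2 + (p.y:ℝ)^2 := by
      have h2 : (((p.x.natAbs * p.x.natAbs + p.y.natAbs * p.y.natAbs : ℕ):ℤ):ℝ) = ((p.x^2 + p.y^2 : ℤ):ℝ) := by rw [h]
      rw [Int.cast_natCast] at h2
      rw [h2]; push_cast; ring
    rw [h']
  have := hst_le (hst_pos _ _) (norm_nonneg _) h0 (m := hst (p.x.natAbs + p.y.natAbs + 1) (p.x.natAbs * p.x.natAbs + p.y.natAbs * p.y.natAbs))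
  exact this

lemma Mem.norm_le {p : Bl} {z : ℂ} (h : p.Mem z) : (S:ℝ) * ‖z‖ ≤ p.nb + p.r := by
  have h1 := norm_c_le p
  have h2 : ‖(S:ℂ) * z‖ = (S:ℝ) * ‖z‖ := by rw [norm_mul]; simp [S]
  have := norm_le_norm_add_norm_sub' ((S:ℂ) * z) p.c
  unfold Mem at h
  linarith

lemma Mem.le_norm {p : Bl} {z : ℂ} (h : p.Mem z) : (p.lbd : ℝ) ≤ (S:ℝ) * ‖z‖ := by
  have h1 := norm_c_le p
  have h2 : ‖(S:ℂ) * z‖ = (S:ℝ) * ‖z‖ := by rw [norm_mul]; simp [S]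
  have h3 := norm_le_norm_add_norm_sub' p.c ((S:ℂ) * z)
  rw [norm_sub_rev] at h3
  unfold Mem at h
  have e : p.lbd = (p.x*p.x + p.y*p.y)/p.nb - p.r := rfl
  have h4 : (((p.x*p.x + p.y*p.y)/p.nb : ℤ):ℝ) ≤ ‖p.c‖ := by
    have hp : (0:ℝ) < p.nb := by exact_mod_cast nb_pos p
    have : (((p.x*p.x + p.y*p.y)/p.nb * p.nb : ℤ):ℝ) ≤ ((p.x*p.x + p.y*p.y:ℤ):ℝ) := by
      exact_mod_cast Int.ediv_mul_le _ (nb_pos p).ne'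
    push_cast at this
    have h5 := c_normSq p
    have h6 : ‖p.c‖ * ‖p.c‖ ≤ ‖p.c‖ * p.nb := mul_le_mul_of_nonneg_left h1 (norm_nonneg _)
    refine le_of_mul_le_mul_right ?_ hp
    nlinarith
  rw [e]; push_cast; linarith

lemma Mem.add {p q : Bl} {z w : ℂ} (hp : p.Mem z) (hq : q.Mem w) : (p.add q).Mem (z + w) := by
  unfold Mem at *
  have e1 : (p.add q).c = p.c + q.c := by
    show (((p.x + q.x : ℤ):ℂ)) + ((p.y+q.y : ℤ):ℂ) * I = _
    unfold c; push_cast; ring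
  have e2 : ((p.add q).r : ℝ) = p.r + q.r := by
    show ((p.r + q.r : ℤ):ℝ) = _
    push_cast; ring
  rw [e1, e2, show (S:ℂ) * (z+w) - (p.c + q.c) = ((S:ℂ)*z - p.c) + ((S:ℂ)*w - q.c) by ring]
  exact (norm_add_le _ _).trans (add_le_add hp hq)

lemma Mem.sub {p q : Bl} {z w : ℂ} (hp : p.Mem z) (hq : q.Mem w) : (p.sub q).Mem (z - w) := by
  unfold Mem at *
  have e1 : (p.sub q).c = p.c - q.c := by
    show (((p.x - q.x : ℤ):ℂ)) + ((p.y-q.y : ℤ):ℂ) * I = _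
    unfold c; push_cast; ring
  have e2 : ((p.sub q).r : ℝ) = p.r + q.r := by
    show ((p.r + q.r : ℤ):ℝ) = _
    push_cast; ring
  rw [e1, e2, show (S:ℂ) * (z-w) - (p.c - q.c) = ((S:ℂ)*z - p.c) - ((S:ℂ)*w - q.c) by ring]
  exact (norm_sub_le _ _).trans (add_le_add hp hq)

lemma Mem.cj {p : Bl} {z : ℂ} (hp : p.Mem z) : (p.cj).Mem ((starRingEnd ℂ) z) := by
  unfold Mem at *
  have e1 : (p.cj).c = (starRingEnd ℂ) p.c := by
    show ((p.x:ℂ)) + ((-p.y : ℤ):ℂ) * I = _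
    unfold c; simp
  rw [e1, show (S:ℂ) * (starRingEnd ℂ) z - (starRingEnd ℂ) p.c = (starRingEnd ℂ) ((S:ℂ)*z - p.c) by simp, RCLike.norm_conj]
  exact hp

lemma Mem.sc {p : Bl} {z : ℂ} (hp : p.Mem z) (n : ℕ) : (p.sc n).Mem (n * z) := by
  unfold Mem at *
  have e1 : (p.sc n).c = n * p.c := by
    show (((n * p.x : ℤ):ℂ)) + ((n * p.y : ℤ):ℂ) * I = _
    unfold c; push_cast; ring
  have e2 : ((p.sc n).r : ℝ) = n * p.r := by
    show (((n:ℤ) * p.r : ℤ):ℝ) = _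
    push_cast; ring
  rw [e1, e2, show (S:ℂ) * (n*z) - (n * p.c) = n * ((S:ℂ)*z - p.c) by ring, norm_mul, Complex.norm_natCast]
  exact mul_le_mul_of_nonneg_left hp (Nat.cast_nonneg n)

lemma fl_le (r n : ℤ) (hn : 0 < n) : (r:ℝ)/n ≤ ((r / n : ℤ):ℝ) + 1 := by
  have hn' : (0:ℝ) < n := by exact_mod_cast hn
  rw [div_le_iff₀ hn']
  have := (Int.lt_ediv_add_one_mul_self r hn).le
  exact_mod_cast this

lemma le_fl (r n : ℤ) (hn : 0 < n) : ((r / n : ℤ):ℝ) ≤ (r:ℝ)/n := by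
  have hn' : (0:ℝ) < n := by exact_mod_cast hn
  rw [le_div_iff₀ hn']
  have := (Int.ediv_mul_le r hn.ne')
  exact_mod_cast this

lemma round_le (X Y n : ℤ) (hn : 0 < n) :
    ‖((X:ℂ) + Y * I) / n - (((X / n : ℤ):ℂ) + ((Y / n : ℤ):ℂ) * I)‖ ≤ 2 := by
  have e : ((X:ℂ) + Y * I) / n - (((X / n : ℤ):ℂ) + ((Y / n : ℤ):ℂ) * I)
    = (((X:ℝ)/n - ((X/n:ℤ):ℝ) : ℝ):ℂ) + (((Y:ℝ)/n - ((Y/n:ℤ):ℝ) : ℝ):ℂ) * I := by push_cast; ring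
  rw [e]
  refine (norm_add_le _ _).trans ?_
  rw [norm_mul, Complex.norm_I, mul_one, Complex.norm_real, Complex.norm_real, Real.norm_eq_abs, Real.norm_eq_abs]
  have h1 : |(X:ℝ)/n - ((X/n:ℤ):ℝ)| ≤ 1 := abs_le.2 ⟨by linarith [le_fl X n hn], by linarith [fl_le X n hn]⟩
  have h2 : |(Y:ℝ)/n - ((Y/n:ℤ):ℝ)| ≤ 1 := abs_le.2 ⟨by linarith [le_fl Y n hn], by linarith [fl_le Y n hn]⟩
  linarith

lemma Mem.dv {p : Bl} {z : ℂ} (hp : p.Mem z) {n : ℕ} (hn : 0 < n) : (p.dv n).Mem (z / n) := by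
  unfold Mem at *
  have hn' : (0:ℤ) < n := by exact_mod_cast hn
  have hnR : (0:ℝ) < n := by exact_mod_cast hn
  have hnC : (n:ℂ) ≠ 0 := by exact_mod_cast hn.ne'
  have e1 : (p.dv n).c = ((p.x / n : ℤ):ℂ) + ((p.y / n : ℤ):ℂ) * I := rfl
  have e2 : ((p.dv n).r : ℝ) = ((p.r / n : ℤ) : ℝ) + 3 := by
    show ((p.r/n + 3 : ℤ):ℝ) = _
    push_cast; ring
  have h1 := round_le p.x p.y n hn'
  have h2 := fl_le p.r n hn'
  rw [e1, e2, show (S:ℂ) * (z/n) - (((p.x / n : ℤ):ℂ) + ((p.y / n : ℤ):ℂ) * I) =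
    ((S:ℂ)*z - p.c)/n + (((p.x:ℂ) + p.y * I) / (n:ℤ) - (((p.x / n : ℤ):ℂ) + ((p.y / n : ℤ):ℂ) * I)) by
      unfold c; push_cast; field_simp; ring]
  refine (norm_add_le _ _).trans ?_
  rw [norm_div, Complex.norm_natCast]
  have h3 : ‖(S:ℂ)*z - p.c‖ / n ≤ p.r / n := div_le_div_of_nonneg_right hp hnR.le
  push_cast at h2
  linarith

lemma Mem.mul {p q : Bl} {z w : ℂ} (hp : p.Mem z) (hq : q.Mem w) : (p.mul q).Mem (z * w) := by
  unfold Mem at *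
  have e1 : (p.mul q).c = (((p.x*q.x - p.y*q.y) / S : ℤ):ℂ) + (((p.x*q.y + p.y*q.x) / S : ℤ):ℂ) * I := rfl
  have e2 : ((p.mul q).r : ℝ) = (((p.nb*q.r + q.nb*p.r + p.r*q.r) / S : ℤ) : ℝ) + 3 := by
    show (((p.nb*q.r + q.nb*p.r + p.r*q.r) / S + 3 : ℤ):ℝ) = _
    push_cast; ring
  have h1 := round_le (p.x*q.x - p.y*q.y) (p.x*q.y + p.y*q.x) S S_posZ
  have h2 := fl_le (p.nb*q.r + q.nb*p.r + p.r*q.r) S S_posZ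
  rw [e1, e2, show (S:ℂ) * (z*w) - ((((p.x*q.x - p.y*q.y) / S : ℤ):ℂ) + (((p.x*q.y + p.y*q.x) / S : ℤ):ℂ) * I) =
    (p.c * ((S:ℂ)*w - q.c) + q.c * ((S:ℂ)*z - p.c) + ((S:ℂ)*z - p.c) * ((S:ℂ)*w - q.c))/S
     + ((((p.x*q.x - p.y*q.y : ℤ):ℂ) + ((p.x*q.y + p.y*q.x : ℤ):ℂ) * I) / (S:ℤ) - ((((p.x*q.x - p.y*q.y) / S : ℤ):ℂ) + (((p.x*q.y + p.y*q.x) / S : ℤ):ℂ) * I)) by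
      have := S_ne
      unfold c; push_cast; field_simp; ring_nf; simp only [Complex.I_sq]; ring]
  refine (norm_add_le _ _).trans ?_
  rw [norm_div]
  have hS : ‖(S:ℂ)‖ = S := by simp [S]
  rw [hS]
  have h3 : ‖p.c * ((S:ℂ)*w - q.c) + q.c * ((S:ℂ)*z - p.c) + ((S:ℂ)*z - p.c) * ((S:ℂ)*w - q.c)‖ ≤ p.nb*q.r + q.nb*p.r + p.r*q.r := by
    refine (norm_add₃_le).trans ?_
    rw [norm_mul, norm_mul, norm_mul]
    have a1 := norm_c_le p
    have a2 := norm_c_le q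
    have n1 := norm_nonneg p.c
    have n2 := norm_nonneg q.c
    have n3 := norm_nonneg ((S:ℂ)*z - p.c)
    have n4 := norm_nonneg ((S:ℂ)*w - q.c)
    gcongr <;> linarith
  have h4 := div_le_div_of_nonneg_right h3 S_pos.le
  push_cast at h2
  linarith
end Bl

namespace Bl
def evalH : List (ℤ × Bl) → ℤ → Bl → Bl
  | [], R, _ => ⟨0, 0, R⟩
  | (n, V) :: t, R, z => V.add (((z.sub ⟨n, 0, 0⟩).dv 64).mul (evalH t R z))
def nstep (m0 : ℕ) (V0 : Bl) : List (ℕ × Bl) → List (ℕ × Bl)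
  | [] => []
  | (m, V) :: t => (m, ((V.sub V0).sc 64).dv ((m - m0) * (m + m0 - 1))) :: nstep m0 V0 t
def newt : ℕ → List (ℕ × Bl) → List (ℤ × Bl) × ℤ
  | _, [] => ([], 0)
  | 0, (_, V) :: _ => ([], V.nb + V.r)
  | k + 1, (m, V) :: t => (((2 * m - 1)^2 * 288230376151711744, V) :: (newt k (nstep m V t)).1, (newt k (nstep m V t)).2)
def T1 : List (ℕ × Bl) :=
  [(2, ⟨27207535869670082, 0, 2000⟩), (3, ⟨28415631298285404, 0, 2000⟩),
   (4, ⟨30355198571410553, 0, 2000⟩), (5, ⟨33200750466380199, 0, 2000⟩),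
   (6, ⟨37226009449628827, 0, 2000⟩), (7, ⟨42850630841755042, 0, 2000⟩),
   (8, ⟨50716900622374505, 0, 2000⟩), (9, ⟨61816107115677196, 0, 2000⟩)]
def T0 : List (ℕ × Bl) := T1 ++ [(10, ⟨77699089370832302, 0, 2000⟩)]
def lt (a b : ℤ) : Bool := Nat.blt 0 (Int.toNat (Int.sub b a))
def H0 : List (ℤ × Bl) :=
  [(Int.ofNat 2594073385365405696, ⟨Int.ofNat 27207535869670082, Int.ofNat 0, Int.ofNat 2000⟩),
   (Int.ofNat 7205759403792793600, ⟨Int.ofNat 19329526857845152, Int.ofNat 0, Int.ofNat 64003⟩),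
   (Int.ofNat 14123288431433875456, ⟨Int.ofNat 8698820621801194, Int.ofNat 0, Int.ofNat 955800⟩),
   (Int.ofNat 23346660468288651264, ⟨Int.ofNat 2809182577559432, Int.ofNat 0, Int.ofNat 10507331⟩),
   (Int.ofNat 34875875514357121024, ⟨Int.ofNat 697995826230534, Int.ofNat 0, Int.ofNat 93435484⟩),
   (Int.ofNat 48710933569639284736, ⟨Int.ofNat 139555231461653, Int.ofNat 0, Int.ofNat 697124456⟩),
   (Int.ofNat 64851834634135142400, ⟨Int.ofNat 23167778511323, Int.ofNat 0, Int.ofNat 4478831001⟩),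
   (Int.ofNat 83298578707844694016, ⟨Int.ofNat 3268601253224, Int.ofNat 0, Int.ofNat 25264672139⟩)]
def R0 : ℤ := Int.ofNat 526013096856
def one : Bl := ⟨S, Int.ofNat 0, Int.ofNat 0⟩
def unit : Bl := ⟨Int.ofNat 0, Int.ofNat 0, S⟩
def quar : Bl := ⟨Int.ofNat 288230376151711744, Int.ofNat 0, Int.ofNat 0⟩
/-- chi at 1/2 + w from z = w^2 -/
def chiZ (z : Bl) : Bl := one.add ((z.sub quar).mul (evalH H0 R0 z))
def chiW (w : Bl) : Bl := chiZ (w.mul w)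
def quo (X Y : Bl) (N : ℤ) : Bl :=
  ⟨Int.ediv (Int.mul (Int.add (Int.mul X.x Y.x) (Int.mul X.y Y.y)) S) N,
   Int.ediv (Int.mul (Int.sub (Int.mul X.y Y.x) (Int.mul X.x Y.y)) S) N, Int.ofNat 0⟩
def sqn (Y : Bl) : ℤ := Int.add (Int.mul Y.x Y.x) (Int.mul Y.y Y.y)
def dvr (q D : Bl) (l : ℤ) : Bl := bif (lt (Int.ofNat 0) l) then
  ⟨q.x, q.y, Int.add (Int.ediv (Int.mul (Int.add D.nb D.r) S) l) (Int.ofNat 1)⟩ else unit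
def dvB (X Y : Bl) : Bl := dvr (quo X Y Y.sqn) (X.sub ((quo X Y Y.sqn).mul Y)) Y.lbd
def uB (w : Bl) : Bl := dvB (chiW w) (chiW (w.add one))
def nearr (a : Bl) (num den : ℤ) : Bl := bif (lt (Int.ofNat 0) den) then
  ⟨a.x, a.y, Int.add (Int.ediv (Int.mul num S) den) (Int.ofNat 1)⟩ else unit
def near (a : Bl) (dl : ℤ) : Bl :=
  nearr a (Int.add (Int.ediv (Int.mul dl (Int.ofNat (Int.sub (Int.mul S S) a.sqn).natAbs)) (Int.mul S S))
      (Int.add (Int.ofNat 1) (Int.mul (Int.ofNat 2) a.r)))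
    (Int.sub (Int.sub S (Int.ediv (Int.mul dl a.nb) S)) (Int.ofNat 1))
def S3 : ℤ := Int.mul S (Int.mul S S)
def S6 : ℤ := Int.mul S3 S3
def sqr4 (n : ℕ) : ℕ := hst (hst (hst (hst 1152921504606846976 n) n) n) n
def farr (a : Bl) (d2 N D k : ℤ) : Bl :=
  bif (lt (Int.ofNat 0) D) then
    bif (lt N (Int.add (Int.mul S S) (Int.ofNat 1))) then
    ⟨Int.ediv (Int.mul k a.x) S, Int.ediv (Int.mul k a.y) S,
      Int.add (Int.ofNat 2) (Int.ofNat (sqr4 (Int.toNat (Int.add (Int.ofNat 1) (Int.ediv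
        (Int.add (Int.add (Int.mul (Int.mul (Int.ofNat 2) (Int.ofNat (Int.sub (Int.mul (Int.sub S d2) S3) (Int.mul k D)).natAbs)) S3)
          (Int.mul (Int.mul (Int.mul k k) N) D))
          (Int.add (Int.mul (Int.add d2 (Int.mul (Int.ofNat 4) a.r)) S6) (Int.neg (Int.mul N (Int.mul S (Int.mul S S3))))))
        (Int.mul D (Int.mul S S)))))))⟩ else unit
  else unit
def far1 (a : Bl) (d2 N D : ℤ) : Bl := farr a d2 N D (Int.ediv (Int.mul (Int.sub S d2) S3) D)
def far0 (a : Bl) (d2 N : ℤ) : Bl := far1 a d2 N (Int.sub S3 (Int.mul d2 N))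
/-- distance j / 1024 -/
def far (a : Bl) (j : ℕ) : Bl :=
  far0 a (Int.add (Int.ediv (Int.mul S (Int.ofNat (Nat.mul j j))) (Int.ofNat (Nat.add 1048576 (Nat.mul j j)))) (Int.ofNat 1)) a.sqn
def AB : Bl := ⟨Int.ofNat 54415071739340165, Int.ofNat 0, Int.ofNat 10⟩
/-- ρ₀ ≈ 0.9003 + 2.0888 i, radius 1/100 -/
def rB : Bl := ⟨Int.ofNat 1037975230597544332, Int.ofNat 2408222438822781963, Int.ofNat 11529215046068480⟩
def fullM (s h : Bl) : Bl :=
  ((s.sub (rB.mul h)).mul (s.sub (rB.cj.mul h))).mul (s.add (h.sc 5))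
def fullF (s h u v s1 : Bl) : Bl :=
  ((s1.mul ((s.sc 3).sub (h.sc 2))).mul (h.add (AB.mul s1))).sub
    ((h.mul ((s.sub (h.sc 2)).mul u)).mul ((s1.sc 2).add ((s.add h).mul v)))
def posRe (p : Bl) : Bool := lt p.r p.x
def full (s h u v : Bl) : Bool := posRe ((fullF s h u v (s.sub h)).mul (fullM s h).cj)
def hf : ℤ := Int.ofNat 576460752303423488
def q1024 : ℤ := Int.ofNat 1125899906842624
def wB (m : ℕ) : Bl := ⟨Int.ofNat 0, Int.mul (Int.ofNat m) q1024, Int.ofNat 0⟩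
def Y0 : ℕ := 7424
def a0 : Bl := ⟨Int.ofNat 1041910347422306399, Int.negSucc 403553230612587799, Int.ofNat 1169838397055013⟩
def selU (m e : ℕ) : Bl := bif Nat.ble m Y0 then near (uB (wB m)) (Int.mul (Int.ofNat e) q1024)
  else far a0 (Nat.sub (Nat.add m e) Y0)
def seg (m e : ℕ) : Bool :=
  full ⟨hf, Int.mul (Int.ofNat m) q1024, Int.mul (Int.ofNat e) q1024⟩ one (selU m e) (selU (Nat.mul 3 m) (Nat.mul 3 e))
/-- check the segments [m-e,m+e], m = m₀, m₀+2e, ... -/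
def segs : ℕ → ℕ → ℕ → Bool
  | 0, _, _ => true
  | n+1, m, e => and (seg m e) (segs n (Nat.add m (Nat.mul 2 e)) e)
def hseg (m : ℕ) : Bool :=
  full ⟨Int.mul (Int.ofNat m) (Int.ofNat 562949953421312), S, Int.ofNat 562949953421312⟩ ⟨Int.mul (Int.ofNat m) q1024, Int.ofNat 0, q1024⟩ unit unit
def hsegs : ℕ → ℕ → Bool
  | 0, _ => true
  | n+1, m => and (hseg m) (hsegs n (Nat.add m 2))
end Bl
namespace Bl
lemma nstep_append (m0 : ℕ) (V0 : Bl) (L : List (ℕ × Bl)) (m : ℕ) (V : Bl) :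
    nstep m0 V0 (L ++ [(m, V)]) = nstep m0 V0 L ++ [(m, ((V.sub V0).sc 64).dv ((m - m0) * (m + m0 - 1)))] := by
  induction L with
  | nil => rfl
  | cons p L ih => obtain ⟨a, b⟩ := p; simp [nstep, ih]

lemma nstep_length (m0 : ℕ) (V0 : Bl) (L : List (ℕ × Bl)) : (nstep m0 V0 L).length = L.length := by
  induction L with
  | nil => rfl
  | cons p L ih => obtain ⟨a, b⟩ := p; simp [nstep, ih]

lemma nstep_mem (m0 : ℕ) (V0 : Bl) (L : List (ℕ × Bl)) (P : ℕ × Bl → Prop)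
    (h : ∀ p ∈ L, P (p.1, ((p.2.sub V0).sc 64).dv ((p.1 - m0) * (p.1 + m0 - 1)))) :
    ∀ p ∈ nstep m0 V0 L, P p := by
  induction L with
  | nil => simp [nstep]
  | cons p L ih =>
    obtain ⟨a, b⟩ := p
    simp only [nstep, List.mem_cons, forall_eq_or_imp] at h ⊢
    exact ⟨h.1, ih h.2⟩

lemma nstep_pw (m0 : ℕ) (V0 : Bl) (L : List (ℕ × Bl)) (h : L.Pairwise (fun p q => p.1 < q.1)) :
    (nstep m0 V0 L).Pairwise (fun p q => p.1 < q.1) := by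
  induction L with
  | nil => exact h
  | cons p L ih =>
    obtain ⟨a, b⟩ := p
    rw [List.pairwise_cons] at h
    simp only [nstep, List.pairwise_cons]
    exact ⟨nstep_mem m0 V0 L (fun q => a < q.1) (fun q hq => h.1 q hq), ih h.2⟩

lemma Mem.mono {p : Bl} {z : ℂ} {r : ℤ} (h : p.Mem z) (hr : p.r ≤ r) : Mem ⟨p.x, p.y, r⟩ z := by
  unfold Mem at *
  have : (p.r:ℝ) ≤ r := by exact_mod_cast hr
  exact le_trans h this

lemma exact_mem {x y : ℤ} {z : ℂ} (h : (S:ℂ) * z = x + y * I) : Mem ⟨x, y, 0⟩ z := by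
  unfold Mem c; simp [h]

noncomputable def nd (m : ℕ) : ℝ := ((m:ℝ) - 1/2)^2
def NT (f : ℂ → ℂ) (p : ℕ × Bl) : Prop := p.2.Mem (f (nd p.1 : ℝ))

theorem newt_sound (k : ℕ) : ∀ (f : ℂ → ℂ) (_ : PosSer f) (L : List (ℕ × Bl)) (M : ℕ) (V : Bl),
    L.length = k → (∀ p ∈ L ++ [(M, V)], NT f p ∧ 1 ≤ p.1) → (L ++ [(M, V)]).Pairwise (fun p q => p.1 < q.1) →
    ∀ (z : ℂ) (p : Bl), ‖z‖ ≤ nd M → p.Mem z →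
      (evalH (newt k (L ++ [(M, V)])).1 (newt k (L ++ [(M, V)])).2 p).Mem (f z) := by
  induction k with
  | zero =>
    intro f hf L M V hL hT _ z p hz hp
    obtain rfl := List.length_eq_zero_iff.1 hL
    simp only [List.nil_append, newt, evalH]
    have h1 := hf.norm_le hz
    have h2 := (hT (M, V) (by simp)).1.norm_le
    unfold Mem c
    have h3 : ‖(S:ℂ) * f z‖ = (S:ℝ) * ‖f z‖ := by rw [norm_mul]; simp [S]
    have h4 := mul_le_mul_of_nonneg_left h1 S_pos.le
    simp only at h2
    push_cast
    simp only [zero_mul, add_zero, sub_zero]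
    linarith
  | succ k ih =>
    intro f hf L M V hL hT hpw z p hz hp
    obtain ⟨⟨m, V0⟩, L, rfl⟩ := List.exists_cons_of_length_eq_add_one hL
    simp only [List.cons_append, List.pairwise_cons, List.mem_cons, forall_eq_or_imp, List.length_cons, Nat.add_right_cancel_iff] at hT hpw hL
    obtain ⟨g, hg, hfg⟩ := hf.newton (c := nd m) (sq_nonneg _)
    have hg' : PosSer (fun z => (64:ℝ) * g z) := hg.smul (by norm_num)
    simp only [List.cons_append, newt, evalH]
    rw [nstep_append]
    have key := ih _ hg' (nstep m V0 L) M (((V.sub V0).sc 64).dv ((M - m) * (M + m - 1)))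
      (by rw [nstep_length]; exact hL) (by
        rw [← nstep_append]
        apply nstep_mem
        intro q hq
        obtain ⟨h1, h2⟩ := hT.2 q hq
        have h3 : m < q.1 := hpw.1 q hq
        refine ⟨?_, h2⟩
        have h0 := hT.1.1
        unfold NT at h0 h1 ⊢
        have hpos : 0 < (q.1 - m) * (q.1 + m - 1) := Nat.mul_pos (by omega) (by have := hT.1.2; omega)
        have := (((h1.sub h0).sc 64).dv hpos)
        convert this using 1
        have e : (((q.1 - m) * (q.1 + m - 1) : ℕ) : ℂ) = ((nd q.1 : ℝ):ℂ) - (nd m : ℝ) := by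
          rw [Nat.cast_mul, Nat.cast_sub h3.le, Nat.cast_sub (by omega)]
          unfold nd; push_cast; ring
        have e0 : (((q.1 - m) * (q.1 + m - 1) : ℕ) : ℂ) ≠ 0 := by exact_mod_cast hpos.ne'
        rw [eq_div_iff e0, hfg (nd q.1 : ℝ), e]
        push_cast; ring)
      (by rw [← nstep_append]; exact nstep_pw _ _ _ hpw.2) z p hz hp
    have hn : Mem ⟨(2 * m - 1)^2 * 288230376151711744, 0, 0⟩ (nd m : ℝ) := by
      apply exact_mem
      unfold nd S; push_cast; ring
    have := hT.1.1.add (((hp.sub hn).dv (n := 64) (by norm_num)).mul key)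
    convert this using 1
    rw [hfg z]; push_cast; ring

lemma lt_iff {a b : ℤ} : lt a b = true ↔ a < b := by
  unfold lt
  rw [Nat.blt_eq]
  show 0 < (b - a).toNat ↔ _
  omega

lemma unit_mem {z : ℂ} (h : ‖z‖ ≤ 1) : unit.Mem z := by
  unfold Mem c
  have h3 : ‖(S:ℂ) * z‖ = (S:ℝ) * ‖z‖ := by rw [norm_mul]; simp [S]
  have e : (S:ℂ) * z - ((unit.x:ℂ) + unit.y * I) = S * z := by simp [unit]
  rw [e, h3]
  have := mul_le_mul_of_nonneg_left h S_pos.le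
  show _ ≤ (S:ℝ)
  linarith

lemma one_mem : one.Mem 1 := by
  apply exact_mem; simp

lemma quar_mem : quar.Mem (1/4) := by
  apply exact_mem; unfold S; push_cast; norm_num

lemma dvB_mem {X Y : Bl} {x y : ℂ} (hX : X.Mem x) (hY : Y.Mem y) (h1 : ‖x / y‖ ≤ 1) : (dvB X Y).Mem (x / y) := by
  unfold dvB dvr
  by_cases hl : lt (Int.ofNat 0) Y.lbd = true
  swap
  · simp only [Bool.not_eq_true] at hl
    rw [hl]; exact unit_mem h1
  rw [hl]; simp only [cond_true]
  rw [lt_iff] at hl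
  set q := quo X Y Y.sqn with hq
  set q' : ℂ := ((q.x : ℂ) + q.y * I) / S with hq'
  have hqm : q.Mem q' := by
    unfold Mem c
    rw [hq', mul_div_cancel₀ _ S_ne]; simp [hq, quo]
  have hD := (hX.sub (hqm.mul hY)).norm_le
  have hYl := hY.le_norm
  set D := X.sub (q.mul Y)
  have hl' : (0:ℝ) < Y.lbd := by exact_mod_cast hl
  have hy : 0 < ‖y‖ := by
    by_contra h
    have : ‖y‖ = 0 := le_antisymm (not_lt.1 h) (norm_nonneg _)
    rw [this, mul_zero] at hYl; linarith
  have hy0 : y ≠ 0 := norm_pos_iff.1 hy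
  unfold Mem
  have e1 : (S:ℂ) * (x/y) - c ⟨q.x, q.y, Int.add (Int.ediv (Int.mul (Int.add D.nb D.r) S) Y.lbd) (Int.ofNat 1)⟩ = S * ((x - q' * y) / y) := by
    unfold c; rw [hq']; have := S_ne; field_simp
  rw [e1]
  have h2 := fl_le ((D.nb + D.r) * S) Y.lbd hl
  have e2 : ((Int.add (Int.ediv (Int.mul (Int.add D.nb D.r) S) Y.lbd) (Int.ofNat 1) : ℤ):ℝ) = ((((D.nb + D.r) * S) / Y.lbd : ℤ):ℝ) + 1 := by
    show ((((D.nb + D.r) * S) / Y.lbd + 1 : ℤ):ℝ) = _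
    push_cast; ring
  show _ ≤ ((Int.add (Int.ediv (Int.mul (Int.add D.nb D.r) S) Y.lbd) (Int.ofNat 1) : ℤ):ℝ)
  rw [e2]
  refine le_trans ?_ h2
  rw [norm_mul, norm_div, show ‖(S:ℂ)‖ = S by simp [S], le_div_iff₀ hl']
  push_cast
  have h3 : 0 ≤ ‖x - q' * y‖ / ‖y‖ := by positivity
  have hS := S_pos
  calc (S:ℝ) * (‖x - q' * y‖ / ‖y‖) * Y.lbd ≤ (S:ℝ) * (‖x - q' * y‖ / ‖y‖) * (S * ‖y‖) := by gcongr
    _ = S * (S * ‖x - q' * y‖) := by field_simp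
    _ ≤ S * (D.nb + D.r) := by gcongr
    _ = _ := by ring
end Bl

namespace Bl
lemma normS : ‖(S:ℂ)‖ = S := by simp [S]

lemma sqn_eq (a : Bl) : (a.sqn : ℝ) = ‖a.c‖^2 := by
  rw [c_normSq]
  show ((a.x * a.x + a.y * a.y : ℤ):ℝ) = _
  push_cast; ring

lemma Mem.ctr {a : Bl} {z : ℂ} (h : a.Mem z) : ‖z - a.c / S‖ ≤ a.r / S := by
  unfold Mem at h
  have hS := S_pos
  rw [le_div_iff₀ hS, ← normS, ← norm_mul]
  have e : (z - a.c / S) * S = S * z - a.c := by have := S_ne; field_simp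
  rw [e]; exact h

lemma near_mem {a : Bl} {u w : ℂ} {δ : ℝ} {dl : ℤ} (ha : a.Mem u) (hw : ‖w‖ ≤ 1)
    (h0 : 0 ≤ δ) (h1 : δ ≤ 1) (hdl : S * δ ≤ dl)
    (h : ‖w - u‖ ≤ δ * ‖1 - (starRingEnd ℂ) u * w‖) : (near a dl).Mem w := by
  unfold near nearr
  set num := Int.add (Int.ediv (Int.mul dl (Int.ofNat (Int.sub (Int.mul S S) a.sqn).natAbs)) (Int.mul S S))
      (Int.add (Int.ofNat 1) (Int.mul (Int.ofNat 2) a.r)) with hnum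
  set den := Int.sub (Int.sub S (Int.ediv (Int.mul dl a.nb) S)) (Int.ofNat 1) with hden
  by_cases hl : lt (Int.ofNat 0) den = true
  swap
  · simp only [Bool.not_eq_true] at hl
    rw [hl]; exact unit_mem hw
  rw [hl]; simp only [cond_true]
  rw [lt_iff] at hl
  have hl' : (0:ℝ) < den := by exact_mod_cast hl
  have hS := S_pos
  set b : ℂ := a.c / S with hb
  set ε : ℝ := a.r / S with hε
  have hc := ha.ctr
  rw [← hb, ← hε] at hc
  have hε0 : 0 ≤ ε := (norm_nonneg _).trans hc
  have hd0 : 0 ≤ (dl:ℝ) := le_trans (by positivity) hdl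
  -- main inequality
  have m1 : ‖1 - (starRingEnd ℂ) u * w‖ ≤ |1 - ‖b‖^2| + ‖b‖ * ‖w - b‖ + ε := by
    have e : 1 - (starRingEnd ℂ) u * w = ((1 - ‖b‖^2 : ℝ):ℂ) - (starRingEnd ℂ) b * (w - b) - (starRingEnd ℂ) (u - b) * w := by
      have : ((‖b‖^2 : ℝ):ℂ) = (starRingEnd ℂ) b * b := by
        rw [mul_comm, Complex.mul_conj, Complex.normSq_eq_norm_sq]
      push_cast at this ⊢
      rw [this, map_sub]; ring
    rw [e]
    refine (norm_sub_le _ _).trans ?_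
    have t1 := norm_sub_le ((1 - ‖b‖^2 : ℝ):ℂ) ((starRingEnd ℂ) b * (w - b))
    rw [Complex.norm_real, Real.norm_eq_abs, norm_mul, RCLike.norm_conj] at t1
    have t2 : ‖(starRingEnd ℂ) (u - b) * w‖ ≤ ε := by
      rw [norm_mul, RCLike.norm_conj]
      calc _ ≤ ε * 1 := by gcongr
        _ = ε := mul_one _
    linarith
  have m2 : ‖w - b‖ ≤ δ * (|1 - ‖b‖^2| + ‖b‖ * ‖w - b‖ + ε) + ε := by
    have e : w - b = (w - u) + (u - b) := by ring
    calc ‖w - b‖ ≤ ‖w - u‖ + ‖u - b‖ := by rw [e]; exact norm_add_le _ _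
      _ ≤ δ * ‖1 - (starRingEnd ℂ) u * w‖ + ε := add_le_add h hc
      _ ≤ _ := by gcongr
  have nbb : S * ‖b‖ ≤ a.nb := by
    rw [hb, norm_div, normS, mul_div_cancel₀ _ hS.ne']; exact norm_c_le a
  -- integer bounds
  have i1 : S * (δ * |1 - ‖b‖^2| + 2 * ε) ≤ num := by
    have t := fl_le (dl * (S * S - a.sqn).natAbs) (S * S) (mul_pos S_posZ S_posZ)
    have e : (num:ℝ) = ((dl * (S * S - a.sqn).natAbs / (S*S) : ℤ):ℝ) + (1 + 2 * a.r) := by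
      show ((dl * (S * S - a.sqn).natAbs / (S*S) + (1 + 2 * a.r) : ℤ):ℝ) = _
      push_cast; ring
    have e2 : (((S * S - a.sqn).natAbs : ℤ):ℝ) = S * S * |1 - ‖b‖^2| := by
      rw [Int.natCast_natAbs, Int.cast_abs]
      push_cast
      rw [sqn_eq, hb, norm_div, normS, ← abs_of_pos (mul_pos hS hS), ← abs_mul, abs_of_pos (mul_pos hS hS)]
      congr 1; field_simp
    have e3 : S * ε = a.r := by rw [hε]; field_simp
    push_cast at t e2
    rw [e2] at t
    have e4 : (dl:ℝ) * (S * S * |1 - ‖b‖^2|) / (S*S) = dl * |1 - ‖b‖^2| := by field_simp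
    rw [e4] at t
    rw [e]
    have : S * δ * |1 - ‖b‖^2| ≤ dl * |1 - ‖b‖^2| := by gcongr
    push_cast
    nlinarith
  have i2 : (den:ℝ) ≤ S * (1 - δ * ‖b‖) := by
    have t := fl_le (dl * a.nb) S S_posZ
    have e : (den:ℝ) = S - ((dl * a.nb / S : ℤ):ℝ) - 1 := by
      show ((S - dl * a.nb / S - 1 : ℤ):ℝ) = _
      push_cast; ring
    rw [e]
    push_cast at t ⊢
    have : S * δ * (S * ‖b‖) ≤ dl * a.nb := by gcongr
    have : S * (δ * ‖b‖) ≤ dl * a.nb / S := by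
      rw [le_div_iff₀ hS]; nlinarith
    linarith
  have fin : (S * ‖w - b‖) * den ≤ num * S := by
    have t1 : (S * ‖w - b‖) * den ≤ (S * ‖w - b‖) * (S * (1 - δ * ‖b‖)) := by gcongr
    have t2 : ‖w - b‖ * (1 - δ * ‖b‖) ≤ δ * |1 - ‖b‖^2| + 2 * ε := by nlinarith
    have t3 : (S * S) * (‖w - b‖ * (1 - δ * ‖b‖)) ≤ (S * S) * (δ * |1 - ‖b‖^2| + 2 * ε) := by gcongr
    nlinarith
  have t := fl_le (num * S) den hl
  have e2 : ((Int.add (Int.ediv (Int.mul num S) den) (Int.ofNat 1) : ℤ):ℝ) = ((num * S / den : ℤ):ℝ) + 1 := by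
    show ((num * S / den + 1 : ℤ):ℝ) = _
    push_cast; ring
  unfold Mem
  show _ ≤ ((Int.add (Int.ediv (Int.mul num S) den) (Int.ofNat 1) : ℤ):ℝ)
  have e1 : (S:ℂ) * w - c ⟨a.x, a.y, Int.add (Int.ediv (Int.mul num S) den) (Int.ofNat 1)⟩ = S * (w - b) := by
    rw [hb]; unfold c; have := S_ne; field_simp
  rw [e1, e2, norm_mul, normS]
  refine le_trans ?_ t
  rw [le_div_iff₀ hl']
  push_cast
  exact fin

lemma sqr4_le {n : ℕ} {x : ℝ} (hx : 0 ≤ x) (h : x^2 ≤ n) : x ≤ sqr4 n :=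
  hst_le (hst_pos _ _) hx h

lemma far_real {u w b : ℂ} {d ε κ : ℝ} (hu : ‖u‖ ≤ 1) (hw : ‖w‖ ≤ 1) (hb : ‖b‖ ≤ 1) (hc : ‖u - b‖ ≤ ε)
    (h0 : 0 ≤ d) (h1 : d ≤ 1)
    (h : ‖w - u‖^2 ≤ d * ‖1 - (starRingEnd ℂ) u * w‖^2) :
    (1 - d * ‖b‖^2) * ‖w - κ * b‖^2 ≤ 2 * |1 - d - κ * (1 - d * ‖b‖^2)| + κ^2 * ‖b‖^2 * (1 - d * ‖b‖^2) - ‖b‖^2 + d + 4 * ε := by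
  have ex : ∀ p q : ℂ, ‖p - q‖^2 = ‖p‖^2 + ‖q‖^2 - 2 * ((starRingEnd ℂ) q * p).re := by
    intro p q
    rw [← Complex.normSq_eq_norm_sq, ← Complex.normSq_eq_norm_sq, ← Complex.normSq_eq_norm_sq, Complex.normSq_sub]
    congr 2; rw [mul_comm]
  have e1 := ex w u
  have e2 : ‖1 - (starRingEnd ℂ) u * w‖^2 = 1 + ‖u‖^2*‖w‖^2 - 2 * ((starRingEnd ℂ) u * w).re := by
    rw [norm_sub_rev, ex]; simp [mul_pow]; ring
  have e3 := ex w (κ * b)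
  have e4 : ((starRingEnd ℂ) (κ * b) * w).re = κ * ((starRingEnd ℂ) b * w).re := by
    rw [map_mul, Complex.conj_ofReal, mul_assoc, Complex.re_ofReal_mul]
  have e5 : ‖(κ:ℂ) * b‖^2 = κ^2 * ‖b‖^2 := by
    rw [norm_mul, mul_pow, Complex.norm_real, Real.norm_eq_abs, sq_abs]
  rw [e4, e5] at e3
  rw [e1, e2] at h
  have hε0 : 0 ≤ ε := (norm_nonneg _).trans hc
  -- bounds
  have c1 : |((starRingEnd ℂ) b * w).re| ≤ 1 := by
    refine (Complex.abs_re_le_norm _).trans ?_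
    rw [norm_mul, RCLike.norm_conj]
    exact mul_le_one₀ hb (norm_nonneg _) hw
  have c2 : |((starRingEnd ℂ) u * w).re - ((starRingEnd ℂ) b * w).re| ≤ ε := by
    rw [← Complex.sub_re, ← sub_mul, ← map_sub]
    refine (Complex.abs_re_le_norm _).trans ?_
    rw [norm_mul, RCLike.norm_conj]
    calc _ ≤ ε * 1 := by gcongr
      _ = ε := mul_one _
  have c3 : |‖u‖ - ‖b‖| ≤ ε := (abs_norm_sub_norm_le _ _).trans hc
  have c4 : ‖b‖^2 - ‖u‖^2 ≤ 2 * ε := by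
    have := (abs_le.1 c3).1
    nlinarith [norm_nonneg u, norm_nonneg b]
  set P := ((starRingEnd ℂ) b * w).re
  set Q := ((starRingEnd ℂ) u * w).re
  have hw2 : ‖w‖^2 ≤ 1 := by nlinarith [norm_nonneg w]
  have hd : 0 ≤ 1 - d * ‖w‖^2 ∧ 1 - d * ‖w‖^2 ≤ 1 := ⟨by nlinarith [sq_nonneg ‖w‖], by nlinarith [sq_nonneg ‖w‖]⟩
  have k1 : (‖b‖^2 - ‖u‖^2) * (1 - d * ‖w‖^2) ≤ 2 * ε := by nlinarith
  have k2 : (1 - d) * (Q - P) ≤ ε := by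
    have := (abs_le.1 c2).2
    nlinarith
  have k3 : (1 - d - κ * (1 - d * ‖b‖^2)) * P ≤ |1 - d - κ * (1 - d * ‖b‖^2)| := by
    refine (le_abs_self _).trans ?_
    rw [abs_mul]
    exact mul_le_of_le_one_right (abs_nonneg _) c1
  rw [e3]
  nlinarith
end Bl

namespace Bl
lemma farr_mem {a : Bl} {u w : ℂ} {d2 k : ℤ} (ha : a.Mem u) (hu : ‖u‖ ≤ 1) (hw : ‖w‖ ≤ 1)
    (h0 : 0 ≤ d2) (h1 : d2 ≤ S) (h : ‖w - u‖^2 ≤ (d2 / S : ℝ) * ‖1 - (starRingEnd ℂ) u * w‖^2) :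
    (farr a d2 a.sqn (Int.sub S3 (Int.mul d2 a.sqn)) k).Mem w := by
  unfold farr
  set D : ℤ := Int.sub S3 (Int.mul d2 a.sqn) with hD
  by_cases hl : lt (Int.ofNat 0) D = true
  swap
  · simp only [Bool.not_eq_true] at hl
    rw [hl]; exact unit_mem hw
  rw [hl]; simp only [cond_true]
  by_cases hn : lt a.sqn (Int.add (Int.mul S S) (Int.ofNat 1)) = true
  swap
  · simp only [Bool.not_eq_true] at hn
    rw [hn]; exact unit_mem hw
  rw [hn]; simp only [cond_true]
  rw [lt_iff] at hl hn
  have hl' : (0:ℝ) < D := by exact_mod_cast hl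
  have hS := S_pos
  set b : ℂ := a.c / S with hb
  set ε : ℝ := a.r / S with hε
  have hc := ha.ctr
  rw [← hb, ← hε] at hc
  have hN : (a.sqn:ℝ) = S^2 * ‖b‖^2 := by
    rw [sqn_eq, hb, norm_div, normS]; field_simp
  have hb1 : ‖b‖ ≤ 1 := by
    have hn' : a.sqn < S * S + 1 := hn
    have : (a.sqn:ℝ) ≤ S * S := by exact_mod_cast (Int.lt_add_one_iff.1 hn')
    rw [hN] at this
    have : ‖b‖^2 ≤ 1 := by
      by_contra hh
      push Not at hh
      nlinarith [mul_pos hS hS]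
    nlinarith [norm_nonneg b]
  have hDr : (D:ℝ) = S^3 * (1 - (d2/S) * ‖b‖^2) := by
    have : (D:ℝ) = S * (S * S) - d2 * a.sqn := by
      show ((S * (S * S) - d2 * a.sqn : ℤ):ℝ) = _
      push_cast; ring
    rw [this, hN]; field_simp
  have key := far_real (κ := k / S) hu hw hb1 hc (d := d2 / S) (div_nonneg (by exact_mod_cast h0) hS.le)
    (by rw [div_le_one hS]; exact_mod_cast h1) h
  set num : ℤ := (Int.add (Int.add (Int.mul (Int.mul (Int.ofNat 2) (Int.ofNat (Int.sub (Int.mul (Int.sub S d2) S3) (Int.mul k D)).natAbs)) S3)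
          (Int.mul (Int.mul (Int.mul k k) a.sqn) D))
          (Int.add (Int.mul (Int.add d2 (Int.mul (Int.ofNat 4) a.r)) S6) (Int.neg (Int.mul a.sqn (Int.mul S (Int.mul S S3)))))) with hnum
  have hnr : (num:ℝ) = S^7 * (2 * |1 - (d2/S) - (k/S) * (1 - (d2/S) * ‖b‖^2)| + (k/S:ℝ)^2 * ‖b‖^2 * (1 - (d2/S) * ‖b‖^2) - ‖b‖^2 + d2/S + 4 * ε) := by
    have e1 : (num:ℝ) = 2 * |((S:ℝ) - d2) * (S * (S * S)) - k * D| * (S * (S * S)) + k * k * a.sqn * D + ((d2 + 4 * a.r) * (S * (S * S) * (S * (S * S))) + -(a.sqn * (S * (S * (S * (S * S)))))) := by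
      show (((2 * ((S - d2) * (S * (S * S)) - k * D).natAbs) * (S * (S * S)) + k * k * a.sqn * D + ((d2 + 4 * a.r) * (S * (S * S) * (S * (S * S))) + -(a.sqn * (S * (S * (S * (S * S)))))) : ℤ):ℝ) = _
      push_cast [Int.natCast_natAbs, Int.cast_abs]; ring
    have e2 : |((S:ℝ) - d2) * (S * (S * S)) - k * D| = S^4 * |1 - (d2/S) - (k/S) * (1 - (d2/S) * ‖b‖^2)| := by
      rw [← abs_of_pos (pow_pos hS 4)]
      rw [← abs_mul, hDr]
      congr 1; field_simp
    rw [e1, e2, hN, hDr, hε]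
    field_simp; ring
  have hx : (S * ‖w - (k/S:ℝ) * b‖)^2 ≤ (num:ℝ) / (D * (S * S)) := by
    rw [le_div_iff₀ (by positivity), hnr, hDr]
    have := mul_le_mul_of_nonneg_left key (pow_pos hS 7).le
    refine le_trans (le_of_eq ?_) this
    ring
  have hposZ : (0:ℤ) < D * (S * S) := mul_pos hl (mul_pos S_posZ S_posZ)
  have t := fl_le num (D * (S * S)) hposZ
  have t2 : (S * ‖w - (k/S:ℝ) * b‖)^2 ≤ (((1 + num / (D * (S*S)) : ℤ).toNat : ℕ):ℝ) := by
    have : ((1 + num / (D * (S*S)) : ℤ):ℝ) ≤ (((1 + num / (D * (S*S)) : ℤ).toNat : ℤ):ℝ) := by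
      exact_mod_cast Int.self_le_toNat _
    push_cast at this t
    refine hx.trans (t.trans ?_)
    linarith
  have t3 := sqr4_le (by positivity) t2
  unfold Mem
  have r1 := round_le (k * a.x) (k * a.y) S S_posZ
  have e5 : ∀ r : ℤ, (S:ℂ) * w - c ⟨Int.ediv (Int.mul k a.x) S, Int.ediv (Int.mul k a.y) S, r⟩ = S * (w - (k/S:ℝ) * b)
      + ((((k * a.x : ℤ):ℂ) + ((k * a.y : ℤ):ℂ) * I) / S - (((k * a.x / S : ℤ):ℂ) + ((k * a.y / S : ℤ):ℂ) * I)) := by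
    intro r
    have e6 : c ⟨Int.ediv (Int.mul k a.x) S, Int.ediv (Int.mul k a.y) S, r⟩ = (((k * a.x / S : ℤ):ℂ) + ((k * a.y / S : ℤ):ℂ) * I) := rfl
    rw [e6, hb]; unfold c; have := S_ne; push_cast; field_simp; ring
  rw [e5]
  refine (norm_add_le _ _).trans ?_
  rw [norm_mul, normS]
  show _ ≤ ((2 + ((sqr4 (1 + num / (D * (S*S)) : ℤ).toNat : ℕ):ℤ) : ℤ):ℝ)
  rw [Int.cast_add, Int.cast_natCast, Int.cast_ofNat]
  linarith

lemma far_mem {a : Bl} {u w : ℂ} {j : ℕ} {Δ : ℝ} (ha : a.Mem u) (hu : ‖u‖ ≤ 1) (hw : ‖w‖ ≤ 1)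
    (hj : |Δ| ≤ j / 1024) (h : ‖w - u‖^2 * (1 + Δ^2) ≤ Δ^2 * ‖1 - (starRingEnd ℂ) u * w‖^2) :
    (far a j).Mem w := by
  unfold far far0 far1
  have hS := S_pos
  have hp : (0:ℤ) < (1048576 + j * j : ℕ) := by positivity
  have hpr : (0:ℝ) < 1048576 + j * j := by positivity
  have e : (Int.add (Int.ediv (Int.mul S (Int.ofNat (Nat.mul j j))) (Int.ofNat (Nat.add 1048576 (Nat.mul j j)))) (Int.ofNat 1)) = S * (j * j : ℕ) / (1048576 + j * j : ℕ) + 1 := rfl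
  rw [e]
  apply farr_mem ha hu hw
  · have : 0 ≤ S * (j * j : ℕ) / (1048576 + j * j : ℕ) := Int.ediv_nonneg (mul_nonneg S_posZ.le (by positivity)) hp.le
    linarith
  · have : S * (j * j : ℕ) / (1048576 + j * j : ℕ) < S := by
      apply Int.ediv_lt_of_lt_mul hp
      have := S_posZ
      push_cast
      nlinarith
    linarith
  · have t := fl_le (S * (j * j : ℕ)) (1048576 + j * j : ℕ) hp
    have hd : Δ^2 / (1 + Δ^2) ≤ ((S * (j * j : ℕ) / (1048576 + j * j : ℕ) + 1 : ℤ) : ℝ) / S := by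
      rw [le_div_iff₀ hS]
      push_cast at t ⊢
      refine le_trans ?_ t
      have : Δ^2 ≤ (j/1024)^2 := by rw [← sq_abs]; gcongr
      rw [div_mul_eq_mul_div, div_le_div_iff₀ (by positivity) hpr]
      have h2 : Δ^2 * 1048576 ≤ j * j := by nlinarith
      nlinarith
    have h3 : ‖w - u‖^2 ≤ Δ^2 / (1 + Δ^2) * ‖1 - (starRingEnd ℂ) u * w‖^2 := by
      rw [div_mul_eq_mul_div, le_div_iff₀ (by positivity)]; exact h
    refine h3.trans ?_
    gcongr
end Bl

noncomputable def uu (s : ℂ) : ℂ := chi s / chi (s + 1)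
def NodesOK : Prop := ∀ p ∈ Bl.T0, p.2.Mem (completedRiemannZeta₀ (p.1 : ℂ))
def UnitOK : Prop := ∀ s : ℂ, 0 ≤ s.re → ‖uu s‖ ≤ 1
def SPOK : Prop := ∀ s c : ℂ, 0 < s.re → 0 < c.re →
  ‖uu s - uu c‖ * ‖s + (starRingEnd ℂ) c‖ ≤ ‖s - c‖ * ‖1 - (starRingEnd ℂ) (uu c) * uu s‖
noncomputable def Fh (s h u v : ℂ) : ℂ :=
  (s - h) * (3 * s - 2 * h) * (h + A * (s - h)) - h * ((s - 2 * h) * u) * (2 * (s - h) + (s + h) * v)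
noncomputable def Mh (s h ρ : ℂ) : ℂ := (s - ρ * h) * (s - (starRingEnd ℂ) ρ * h) * (s + 5 * h)

namespace Bl
theorem newt_eq : newt 8 (T1 ++ [(10, ⟨77699089370832302, 0, 2000⟩)]) = (H0, R0) := by rfl
theorem a0_eq : uB (wB 7424) = a0 := by rfl

lemma chiW_mem (hN : NodesOK) {p : Bl} {w : ℂ} (hp : p.Mem w) (hw : ‖w‖ ≤ 19/2) : (chiW p).Mem (chi (1/2 + w)) := by
  obtain ⟨f, hf, hfz⟩ := zeta0_posSer
  have hz : ‖w * w‖ ≤ nd 10 := by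
    rw [norm_mul]; unfold nd
    norm_num
    nlinarith [norm_nonneg w]
  have h := newt_sound 8 f hf T1 10 ⟨77699089370832302, 0, 2000⟩ rfl (by
    intro q hq
    constructor
    · have := hN q hq
      unfold NT nd
      have e := hfz ((q.1:ℂ) - 1/2)
      rw [show (1/2 : ℂ) + ((q.1:ℂ) - 1/2) = q.1 by ring] at e
      rw [e] at this
      convert this using 2
      push_cast; ring
    · revert q; simp [T1]) (by simp [T1]) (w * w) (p.mul p) hz (hp.mul hp)
  rw [newt_eq] at h
  have := one_mem.add (((hp.mul hp).sub quar_mem).mul h)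
  unfold chiW chiZ
  convert this using 1
  unfold chi
  rw [hfz w]; ring_nf

lemma uB_mem (hN : NodesOK) (hU : UnitOK) {p : Bl} {w : ℂ} (hp : p.Mem w) (hw : ‖w‖ ≤ 17/2) (hr : 0 ≤ (1/2 + w).re) :
    (uB p).Mem (uu (1/2 + w)) := by
  have h1 := chiW_mem hN hp (by linarith)
  have h2 := chiW_mem hN (hp.add one_mem) (by
    refine (norm_add_le _ _).trans ?_
    rw [norm_one]; linarith)
  have := hU _ hr
  unfold uB
  unfold uu at this ⊢
  rw [show (1/2 : ℂ) + (w + 1) = 1/2 + w + 1 by ring] at h2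
  exact dvB_mem h1 h2 this

lemma wB_mem (m : ℕ) : (wB m).Mem (((m / 1024 : ℝ):ℂ) * I) := by
  apply exact_mem
  have : (S:ℂ) = 1024 * q1024 := by unfold S q1024; norm_num
  have e2 : ((Int.mul (Int.ofNat m) q1024 : ℤ):ℂ) = m * q1024 := by
    show (((m:ℤ) * q1024 : ℤ):ℂ) = _
    push_cast; ring
  rw [this, e2]; push_cast; simp; ring

lemma Sq : (S:ℝ) = 1024 * q1024 := by unfold S q1024; norm_num

lemma line_sp (hS : SPOK) (x y : ℝ) : ‖uu (1/2 + y * I) - uu (1/2 + x * I)‖^2 * (1 + (y-x)^2) ≤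
    (y-x)^2 * ‖1 - (starRingEnd ℂ) (uu (1/2 + x * I)) * uu (1/2 + y * I)‖^2 := by
  have h := hS (1/2 + y * I) (1/2 + x * I) (by simp) (by simp)
  have e1 : ‖(1/2 + y * I : ℂ) + (starRingEnd ℂ) (1/2 + x * I)‖^2 = 1 + (y-x)^2 := by
    have : (1/2 + y * I : ℂ) + (starRingEnd ℂ) (1/2 + x * I) = ((1:ℝ):ℂ) + ((y - x:ℝ):ℂ) * I := by
      simp [Complex.ext_iff]; constructor <;> ring
    rw [this, ← Complex.normSq_eq_norm_sq, Complex.normSq_add_mul_I]; ring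
  have e2 : ‖(1/2 + y * I : ℂ) - (1/2 + x * I)‖^2 = (y-x)^2 := by
    have : (1/2 + y * I : ℂ) - (1/2 + x * I) = ((0:ℝ):ℂ) + ((y - x:ℝ):ℂ) * I := by
      push_cast; ring
    rw [this, ← Complex.normSq_eq_norm_sq, Complex.normSq_add_mul_I]; ring
  have h2 := pow_le_pow_left₀ (by positivity) h 2
  rw [mul_pow, mul_pow, e1, e2] at h2
  exact h2

lemma seljj (m e : ℕ) : Nat.sub (Nat.add m e) Y0 = m + e - 7424 := by rw [Nat.sub_eq, Nat.add_eq, Y0]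
lemma selb1 (m : ℕ) (hm : m ≤ 7424) : Nat.ble m Y0 = true := by rw [Y0, Nat.ble_eq]; exact hm
lemma selb2 (m : ℕ) (hm : ¬ m ≤ 7424) : Nat.ble m Y0 = false := by rw [Bool.eq_false_iff, Y0, Ne, Nat.ble_eq]; exact hm

lemma selFar (hU : UnitOK) (hSP : SPOK) (K m e : ℕ) (y : ℝ) (hK : K < m)
    (hy : |y - m / 1024| ≤ e / 1024) (h0 : a0.Mem (uu (1/2 + ((K / 1024 : ℝ):ℂ) * I))) :
    (far a0 (m + e - K)).Mem (uu (1/2 + y * I)) := by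
  have n1 : ∀ x : ℝ, ‖uu (1/2 + x * I)‖ ≤ 1 := fun x => hU _ (by simp)
  refine far_mem h0 (n1 _) (n1 _) (Δ := y - (K:ℝ)/1024) ?_ (line_sp hSP _ _)
  rw [Nat.cast_sub (by omega)]
  have := abs_le.1 hy
  have hm3 : (K:ℝ) ≤ m := by exact_mod_cast hK.le
  push_cast
  rw [abs_le]; constructor <;> linarith

lemma selmm (hN : NodesOK) (hU : UnitOK) : ∀ k : ℕ, k ≤ 7424 → (uB (wB k)).Mem (uu (1/2 + ((k / 1024 : ℝ):ℂ) * I)) := by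
  intro k hk
  refine uB_mem hN hU (wB_mem k) ?_ (by simp)
  rw [norm_mul, Complex.norm_I, mul_one, Complex.norm_real, Real.norm_of_nonneg (by positivity)]
  have : (k:ℝ) ≤ 7424 := by exact_mod_cast hk
  linarith

lemma selA (hN : NodesOK) (hU : UnitOK) : a0.Mem (uu (1/2 + (((7424:ℕ) / 1024 : ℝ):ℂ) * I)) := by
  rw [← a0_eq]; exact selmm hN hU 7424 le_rfl

lemma selU1 (m e : ℕ) (hm : m ≤ 7424) : selU m e = near (uB (wB m)) (Int.mul (Int.ofNat e) q1024) := by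
  unfold selU; rw [selb1 m hm]; exact cond_true _ _
lemma selU2 (m e : ℕ) (hm : ¬ m ≤ 7424) : selU m e = far a0 (m + e - 7424) := by
  unfold selU; rw [selb2 m hm, seljj]; exact cond_false _ _

lemma selU_mem (hN : NodesOK) (hU : UnitOK) (hSP : SPOK) (m e : ℕ) (he : e ≤ 1024) (y : ℝ)
    (hy : |y - m / 1024| ≤ e / 1024) : (selU m e).Mem (uu (1/2 + y * I)) := by
  have hS := S_pos
  have he' : (e:ℝ) / 1024 ≤ 1 := by rw [div_le_one (by norm_num)]; exact_mod_cast he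
  have n1 : ∀ x : ℝ, ‖uu (1/2 + x * I)‖ ≤ 1 := fun x => hU _ (by simp)
  have mm := selmm hN hU
  by_cases hm : m ≤ 7424
  · rw [selU1 m e hm]
    refine near_mem (mm m hm) (n1 y) (δ := |y - m/1024|) (abs_nonneg _) (hy.trans he') ?_ ?_
    · have e2 : ((Int.mul (Int.ofNat e) q1024 : ℤ):ℝ) = e * q1024 := by
        show (((e:ℤ) * q1024 : ℤ):ℝ) = _
        push_cast; ring
      rw [e2]
      calc (S:ℝ) * |y - m/1024| ≤ S * (e/1024) := by gcongr
        _ = _ := by rw [Sq]; ring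
    · have h := line_sp hSP (m/1024) y
      rw [← abs_of_nonneg (norm_nonneg (uu (1/2 + y * I) - _)), ← abs_of_nonneg (norm_nonneg (1 - _ : ℂ)), ← abs_mul, ← sq_le_sq, mul_pow]
      refine le_trans ?_ h
      exact le_mul_of_one_le_right (sq_nonneg _) (le_add_of_nonneg_right (sq_nonneg _))
  · rw [selU2 m e hm]
    have hm2 : 7424 < m := not_le.1 hm
    exact selFar hU hSP 7424 m e y hm2 hy (selA hN hU)

lemma posRe_mem {p : Bl} {z : ℂ} (h : p.Mem z) (hp : posRe p = true) : 0 < z.re := by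
  unfold posRe at hp
  rw [lt_iff] at hp
  have hp' : (p.r:ℝ) < p.x := by exact_mod_cast hp
  unfold Mem at h
  have h1 := (Complex.abs_re_le_norm _).trans h
  have e : ((S:ℂ) * z - p.c).re = S * z.re - p.x := by
    unfold c; simp
  rw [e] at h1
  have := (abs_le.1 h1).1
  have hS := S_pos
  by_contra hh
  push Not at hh
  nlinarith

lemma full_sound (hA : AB.Mem A) {s h u v ρ : ℂ} {sB hB uB' vB : Bl} (hs : sB.Mem s) (hh : hB.Mem h) (hu : uB'.Mem u)
    (hv : vB.Mem v) (hρ : rB.Mem ρ) (hc : full sB hB uB' vB = true) :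
    0 < (Fh s h u v * (starRingEnd ℂ) (Mh s h ρ)).re := by
  refine posRe_mem (Mem.mul ?_ (Mem.cj ?_)) hc
  · unfold fullF Fh
    have := (((hs.sub hh).mul ((hs.sc 3).sub (hh.sc 2))).mul (hh.add (hA.mul (hs.sub hh)))).sub
      ((hh.mul ((hs.sub (hh.sc 2)).mul hu)).mul (((hs.sub hh).sc 2).add ((hs.add hh).mul hv)))
    exact_mod_cast this
  · unfold fullM Mh
    have := ((hs.sub (hρ.mul hh)).mul (hs.sub (hρ.cj.mul hh))).mul (hs.add (hh.sc 5))
    exact_mod_cast this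

lemma seg_sound (hA : AB.Mem A) (hN : NodesOK) (hU : UnitOK) (hSP : SPOK) {ρ : ℂ} (hρ : rB.Mem ρ) (m e : ℕ) (he : e ≤ 300)
    (hc : seg m e = true) (t : ℝ) (ht : |t - m/1024| ≤ e/1024) :
    0 < (Fh (1/2 + t * I) 1 (uu (1/2 + t * I)) (uu (3 * (1/2 + t * I) - 1)) * (starRingEnd ℂ) (Mh (1/2 + t * I) 1 ρ)).re := by
  unfold seg at hc
  have h1 := selU_mem hN hU hSP m e (by omega) t ht
  have h2 := selU_mem hN hU hSP (3 * m) (3 * e) (by omega) (3 * t) (by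
    push_cast
    rw [show 3 * t - 3 * (m:ℝ)/1024 = 3 * (t - m/1024) by ring, abs_mul, abs_of_pos (by norm_num : (0:ℝ) < 3)]
    linarith)
  rw [show (1/2 : ℂ) + ((3 * t : ℝ):ℂ) * I = 3 * (1/2 + t * I) - 1 by push_cast; ring] at h2
  refine full_sound hA ?_ one_mem h1 h2 hρ hc
  unfold Mem c
  have e1 : ((Int.mul (Int.ofNat m) q1024 : ℤ):ℂ) = m * q1024 := by
    show (((m:ℤ) * q1024 : ℤ):ℂ) = _
    push_cast; ring
  have e2 : ((Int.mul (Int.ofNat e) q1024 : ℤ):ℝ) = e * q1024 := by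
    show (((e:ℤ) * q1024 : ℤ):ℝ) = _
    push_cast; ring
  have e3 : (S:ℂ) = 1024 * q1024 := by unfold S q1024; norm_num
  have e4 : (hf:ℂ) = 512 * q1024 := by unfold hf q1024; norm_num
  have hq : (0:ℝ) < q1024 := by unfold q1024; norm_num
  simp only []
  rw [e1, e2, e3, e4]
  have : (1024 * q1024 : ℂ) * (1/2 + t * I) - (512 * q1024 + m * q1024 * I) = ((q1024 * 1024 * (t - m/1024) : ℝ):ℂ) * I := by
    push_cast; ring
  rw [this, norm_mul, Complex.norm_I, mul_one, Complex.norm_real, Real.norm_eq_abs, abs_mul, abs_of_pos (by positivity)]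
  calc _ ≤ (q1024 * 1024 : ℝ) * (e/1024) := by gcongr
    _ = _ := by ring

lemma segs_sound (hA : AB.Mem A) (hN : NodesOK) (hU : UnitOK) (hSP : SPOK) {ρ : ℂ} (hρ : rB.Mem ρ) (n m e : ℕ) (he : e ≤ 300)
    (hc : segs n m e = true) (t : ℝ) (ht : ((m:ℝ) - e)/1024 ≤ t) (ht2 : t < ((m:ℝ) - e + 2 * e * n)/1024) :
    0 < (Fh (1/2 + t * I) 1 (uu (1/2 + t * I)) (uu (3 * (1/2 + t * I) - 1)) * (starRingEnd ℂ) (Mh (1/2 + t * I) 1 ρ)).re := by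
  induction n generalizing m with
  | zero => simp at ht2; linarith
  | succ n ih =>
    simp only [segs, Bool.and_eq_true] at hc
    by_cases h : t ≤ ((m:ℝ) + e)/1024
    · exact seg_sound hA hN hU hSP hρ m e he hc.1 t (by rw [abs_le]; constructor <;> linarith)
    · push Not at h
      have e1 : ((Nat.add m (Nat.mul 2 e) : ℕ):ℝ) = m + 2 * e := by
        show ((m + 2 * e : ℕ):ℝ) = _
        push_cast; ring
      refine ih _ hc.2 ?_ ?_
      · rw [e1]; linarith
      · rw [e1]; push_cast at ht2; linarith

lemma hsegs_sound (hA : AB.Mem A) {ρ : ℂ} (hρ : rB.Mem ρ) (n m : ℕ) (hc : hsegs n m = true) (h : ℝ)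
    (ht : ((m:ℝ) - 1)/1024 ≤ h) (ht2 : h < ((m:ℝ) - 1 + 2 * n)/1024) (u v : ℂ) (hu : ‖u‖ ≤ 1) (hv : ‖v‖ ≤ 1) :
    0 < (Fh (h/2 + I) h u v * (starRingEnd ℂ) (Mh (h/2 + I) h ρ)).re := by
  induction n generalizing m with
  | zero => simp at ht2; linarith
  | succ n ih =>
    simp only [hsegs, Bool.and_eq_true] at hc
    by_cases hh : h ≤ ((m:ℝ) + 1)/1024
    · have ha : |h - m/1024| ≤ 1/1024 := by rw [abs_le]; constructor <;> linarith
      have hq : (0:ℝ) < q1024 := by unfold q1024; norm_num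
      have e1 : ((Int.mul (Int.ofNat m) q1024 : ℤ):ℂ) = m * q1024 := by
        show (((m:ℤ) * q1024 : ℤ):ℂ) = _
        push_cast; ring
      have e5 : ((Int.mul (Int.ofNat m) (Int.ofNat 562949953421312) : ℤ):ℂ) = m * (q1024 / 2) := by
        show (((m:ℤ) * 562949953421312 : ℤ):ℂ) = _
        unfold q1024; push_cast; ring
      have e6 : ((Int.ofNat 562949953421312 : ℤ):ℝ) = q1024 / 2 := by
        unfold q1024; norm_num
      have e3 : (S:ℂ) = 1024 * q1024 := by unfold S q1024; norm_num
      refine full_sound hA ?_ ?_ (unit_mem hu) (unit_mem hv) hρ hc.1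
      · unfold Mem c
        simp only []
        rw [e5, e6, e3]
        have : (1024 * q1024 : ℂ) * (h/2 + I) - (m * (q1024/2) + 1024 * q1024 * I) = ((q1024 * 512 * (h - m/1024) : ℝ):ℂ) := by
          push_cast; ring
        rw [this, Complex.norm_real, Real.norm_eq_abs, abs_mul, abs_of_pos (by positivity)]
        calc _ ≤ (q1024 * 512 : ℝ) * (1/1024) := by gcongr
          _ = _ := by ring
      · unfold Mem c
        simp only []
        rw [e1, e3]
        have : (1024 * q1024 : ℂ) * h - (m * q1024 + ((Int.ofNat 0 : ℤ):ℂ) * I) = ((q1024 * 1024 * (h - m/1024) : ℝ):ℂ) := by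
          push_cast; simp; ring
        rw [this, Complex.norm_real, Real.norm_eq_abs, abs_mul, abs_of_pos (by positivity)]
        calc _ ≤ (q1024 * 1024 : ℝ) * (1/1024) := by gcongr
          _ = _ := by ring
    · push Not at hh
      have e1 : ((Nat.add m 2 : ℕ):ℝ) = m + 2 := by
        show ((m + 2 : ℕ):ℝ) = _
        push_cast; ring
      refine ih _ hc.2 ?_ ?_
      · rw [e1]; linarith
      · rw [e1]; push_cast at ht2; linarith
end Bl

namespace Bl
set_option maxRecDepth 100000 in
theorem chk1 : segs 60 14 14 = true := by decide +kernel
set_option maxRecDepth 100000 in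
theorem chk2 : segs 60 1694 14 = true := by decide +kernel
set_option maxRecDepth 100000 in
theorem chk3 : segs 60 3374 14 = true := by decide +kernel
set_option maxRecDepth 100000 in
theorem chk4 : segs 50 5070 30 = true := by decide +kernel
set_option maxRecDepth 100000 in
theorem chk5 : segs 106 8100 60 = true := by decide +kernel
set_option maxRecDepth 100000 in
theorem chk6 : hsegs 26 1 = true := by decide +kernel

lemma seg_all (hA : AB.Mem A) (hN : NodesOK) (hU : UnitOK) (hSP : SPOK) {ρ : ℂ} (hρ : rB.Mem ρ) (t : ℝ) (ht : 0 ≤ t) (ht2 : t ≤ 20) :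
    0 < (Fh (1/2 + t * I) 1 (uu (1/2 + t * I)) (uu (3 * (1/2 + t * I) - 1)) * (starRingEnd ℂ) (Mh (1/2 + t * I) 1 ρ)).re := by
  by_cases h1 : t < 1680/1024
  · exact segs_sound hA hN hU hSP hρ 60 14 14 (by norm_num) chk1 t (by norm_num; linarith) (by norm_num; linarith)
  by_cases h2 : t < 3360/1024
  · exact segs_sound hA hN hU hSP hρ 60 1694 14 (by norm_num) chk2 t (by norm_num; linarith) (by norm_num; linarith)
  by_cases h3 : t < 5040/1024
  · exact segs_sound hA hN hU hSP hρ 60 3374 14 (by norm_num) chk3 t (by norm_num; linarith) (by norm_num; linarith)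
  by_cases h4 : t < 8040/1024
  · exact segs_sound hA hN hU hSP hρ 50 5070 30 (by norm_num) chk4 t (by norm_num; linarith) (by norm_num; linarith)
  · exact segs_sound hA hN hU hSP hρ 106 8100 60 (by norm_num) chk5 t (by norm_num; linarith) (by norm_num; linarith)

lemma hseg_all (hA : AB.Mem A) {ρ : ℂ} (hρ : rB.Mem ρ) (h : ℝ) (ht : 0 ≤ h) (ht2 : h ≤ 1/20) (u v : ℂ) (hu : ‖u‖ ≤ 1) (hv : ‖v‖ ≤ 1) :
    0 < (Fh (h/2 + I) h u v * (starRingEnd ℂ) (Mh (h/2 + I) h ρ)).re :=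
  hsegs_sound hA hρ 26 1 chk6 h (by norm_num; linarith) (by norm_num; linarith) u v hu hv
end Bl

section nodes
def sumR (m : ℕ) : ℕ → ℕ → ℕ
  | 0, a => Nat.div (Nat.pow 10 30) (Nat.pow a m)
  | k+1, a => Nat.add (sumR m k a) (sumR m k (Nat.add a (Nat.pow 2 k)))

lemma sumR_sound (m k : ℕ) : ∀ a : ℕ, 0 < a →
    (sumR m k a : ℝ) ≤ 10^30 * ∑ n ∈ Finset.range (2^k), 1/((a + n : ℕ):ℝ)^m ∧
    10^30 * ∑ n ∈ Finset.range (2^k), 1/((a + n : ℕ):ℝ)^m ≤ sumR m k a + 2^k := by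
  induction k with
  | zero =>
    intro a ha
    have h1 : (sumR m 0 a : ℕ) = 10^30 / a^m := rfl
    have hp : (0:ℝ) < (a:ℝ)^m := by positivity
    rw [h1]
    have e := Nat.div_add_mod (10^30) (a^m)
    have l := Nat.mod_lt (10^30) (show 0 < a^m by positivity)
    generalize 10^30 / a^m = q at *
    generalize hr : 10^30 % a^m = r at *
    have e' : (a:ℝ)^m * q + r = 10^30 := by
      have : ((a^m*q+r : ℕ):ℝ) = ((10^30:ℕ):ℝ) := by rw [e]
      push_cast at this; rw [this]; norm_num
    have l' : (r:ℝ) < (a:ℝ)^m := by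
      have : ((r:ℕ):ℝ) < ((a^m:ℕ):ℝ) := by exact_mod_cast l
      push_cast at this; exact this
    have r0 : (0:ℝ) ≤ r := Nat.cast_nonneg _
    simp only [pow_zero, Finset.range_one, Finset.sum_singleton, add_zero, mul_one_div]
    rw [le_div_iff₀ hp, div_le_iff₀ hp]
    constructor <;> nlinarith
  | succ k ih =>
    intro a ha
    have h1 : sumR m (k+1) a = sumR m k a + sumR m k (a + 2^k) := rfl
    obtain ⟨i1, i2⟩ := ih a ha
    obtain ⟨i3, i4⟩ := ih (a + 2^k) (by positivity)
    rw [h1, show 2^(k+1) = 2^k + 2^k by ring, show (2:ℝ)^(k+1) = 2^k + 2^k by ring, Finset.sum_range_add, mul_add]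
    simp only [← add_assoc] at *
    push_cast at *
    constructor <;> linarith

lemma tsum_up {f G : ℕ → ℝ} {a : ℕ} (hf : Summable f) (hG : ∀ n, 0 ≤ G n) (h : ∀ n, a ≤ n → f n ≤ G n - G (n+1)) :
    ∑' n, f n ≤ ∑ n ∈ Finset.range a, f n + G a := by
  rw [← hf.sum_add_tsum_nat_add a]
  gcongr
  have key : ∀ M, ∑ i ∈ Finset.range M, f (i + a) ≤ G a - G (M + a) := by
    intro M
    induction M with
    | zero => simp
    | succ M ih =>
      rw [Finset.sum_range_succ]
      have := h (M + a) (by omega)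
      rw [show M + 1 + a = M + a + 1 by ring]; linarith
  have ht := ((summable_nat_add_iff a).2 hf).hasSum.tendsto_sum_nat
  exact le_of_tendsto' ht (fun M => (key M).trans (by linarith [hG (M + a)]))

lemma tsum_dn {f G : ℕ → ℝ} {a : ℕ} (hf : Summable f) (hG : Filter.Tendsto G Filter.atTop (nhds 0)) (h : ∀ n, a ≤ n → G n - G (n+1) ≤ f n) :
    ∑ n ∈ Finset.range a, f n + G a ≤ ∑' n, f n := by
  rw [← hf.sum_add_tsum_nat_add a]
  gcongr
  have key : ∀ M, G a - G (M + a) ≤ ∑ i ∈ Finset.range M, f (i + a) := by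
    intro M
    induction M with
    | zero => simp
    | succ M ih =>
      rw [Finset.sum_range_succ]
      have := h (M + a) (by omega)
      rw [show M + 1 + a = M + a + 1 by ring]; linarith
  have ht := ((summable_nat_add_iff a).2 hf).hasSum.tendsto_sum_nat
  have h2 : Filter.Tendsto (fun M => G a - G (M + a)) Filter.atTop (nhds (G a - 0)) :=
    tendsto_const_nhds.sub (hG.comp (Filter.tendsto_add_atTop_nat a))
  rw [sub_zero] at h2
  exact le_of_tendsto_of_tendsto' h2 ht key

noncomputable def zr (m : ℕ) : ℝ := ∑' n : ℕ, 1/(n:ℝ)^m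

lemma zr_eq {m : ℕ} (hm : 1 < m) : riemannZeta m = (zr m : ℂ) := by
  rw [zeta_nat_eq_tsum_of_gt_one hm, zr]; push_cast; rfl

lemma step_pow (j n : ℕ) (hn : 1 ≤ n) : 1/((n+1:ℕ):ℝ)^(j+2) ≤ 1/(n:ℝ)^(j+1) - 1/((n+1:ℕ):ℝ)^(j+1) := by
  have h0 : (0:ℝ) < n := by exact_mod_cast hn
  have h1 : (n:ℝ)^j ≤ ((n:ℝ)+1)^j := by gcongr; linarith
  have hp : (0:ℝ) < (n:ℝ)^j := by positivity
  push_cast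
  rw [div_sub_div _ _ (by positivity) (by positivity), div_le_div_iff₀ (by positivity) (by positivity)]
  have e : (1 * ((n:ℝ)+1)^(j+1) - (n:ℝ)^(j+1) * 1) * (n+1)^(j+2) - 1 * ((n:ℝ)^(j+1) * (n+1)^(j+1))
     = (n+1)^(j+1) * (((n:ℝ)+1)^j * (n+1)^2 - (n:ℝ)^j * (n * (n+2))) := by ring
  have : 0 ≤ ((n:ℝ)+1)^j * (n+1)^2 - (n:ℝ)^j * (n * (n+2)) := by nlinarith [mul_nonneg h0.le hp.le]
  have := mul_nonneg (show 0 ≤ ((n:ℝ)+1)^(j+1) by positivity) this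
  linarith

lemma range_split (m k : ℕ) (hm : m ≠ 0): ∑ n ∈ Finset.range (2^k+1), 1/(n:ℝ)^m = ∑ n ∈ Finset.range (2^k), 1/((1 + n : ℕ):ℝ)^m := by
  rw [Finset.sum_range_succ']; simp [hm, add_comm]

lemma zr_bd (j k : ℕ) : (sumR (j+2) k 1 : ℝ) ≤ 10^30 * zr (j+2) ∧ 10^30 * zr (j+2) ≤ sumR (j+2) k 1 + 2^k + 10^30/(2^k)^(j+1) := by
  obtain ⟨h1, h2⟩ := sumR_sound (j+2) k 1 one_pos
  have hs : Summable (fun n : ℕ => 1/(n:ℝ)^(j+2)) := Real.summable_one_div_nat_pow.2 (by omega)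
  have hu := tsum_up (a := 2^k+1) (G := fun n => 1/((n-1:ℕ):ℝ)^(j+1)) hs (fun n => by positivity) (by
    intro n hn
    have k1 : 1 ≤ 2^k := Nat.one_le_two_pow
    obtain ⟨n, rfl⟩ : ∃ p, n = p + 1 := ⟨n-1, by omega⟩
    have : 1 ≤ n := by omega
    simpa using step_pow j n this)
  have hd := hs.sum_le_tsum (Finset.range (2^k+1)) (fun n _ => by positivity)
  rw [range_split _ _ (by omega)] at hu hd
  unfold zr
  simp only [Nat.add_sub_cancel] at hu
  constructor
  · linarith
  · have : (10:ℝ)^30/(2^k)^(j+1) = 10^30 * (1 / ((2^k:ℕ):ℝ)^(j+1)) := by push_cast; ring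
    rw [this]; linarith

lemma g3 (n : ℕ) (hn : 2 ≤ n) : 1/(2*((n:ℝ)^2-n+1/2)) - 1/(2*(((n+1:ℕ):ℝ)^2-((n+1:ℕ):ℝ)+1/2)) ≤ 1/(n:ℝ)^3 ∧
   1/(n:ℝ)^3 ≤ 1/(2*((n:ℝ)^2-n+1/2)) - 1/(2*(((n+1:ℕ):ℝ)^2-((n+1:ℕ):ℝ)+1/2)) + 1/(n:ℝ)^7 := by
  have h0 : (2:ℝ) ≤ n := by exact_mod_cast hn
  have a1 : (0:ℝ) < (n:ℝ)^2-n+1/2 := by nlinarith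
  have a2 : (0:ℝ) < ((n+1:ℕ):ℝ)^2-((n+1:ℕ):ℝ)+1/2 := by push_cast; nlinarith
  have e : 1/(2*((n:ℝ)^2-n+1/2)) - 1/(2*(((n+1:ℕ):ℝ)^2-((n+1:ℕ):ℝ)+1/2)) = n / ((n:ℝ)^4+1/4) := by
    have : (n:ℝ)^4 + 1/4 = ((n:ℝ)^2-n+1/2) * (((n+1:ℕ):ℝ)^2-((n+1:ℕ):ℝ)+1/2) := by push_cast; ring
    rw [this, div_sub_div _ _ (by positivity) (by positivity), div_eq_div_iff (by positivity) (by positivity)]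
    push_cast; ring
  rw [e]
  constructor
  · rw [div_le_div_iff₀ (by positivity) (by positivity)]; nlinarith
  · rw [div_add_div _ _ (by positivity) (by positivity), div_le_div_iff₀ (by positivity) (by positivity)]
    have : (0:ℝ) < (n:ℝ)^3 := by positivity
    nlinarith [pow_pos (show (0:ℝ) < n by linarith) 7]

lemma zr3_bd (k : ℕ) (hk : 1 ≤ k): (sumR 3 k 1 : ℝ) + 10^30/(2*((2^k+1:ℝ)^2-(2^k+1)+1/2)) ≤ 10^30 * zr 3 ∧
    10^30 * zr 3 ≤ sumR 3 k 1 + 2^k + 10^30/(2*((2^k+1:ℝ)^2-(2^k+1)+1/2)) + 10^30/(2^k)^6 := by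
  obtain ⟨h1, h2⟩ := sumR_sound 3 k 1 one_pos
  have hs : Summable (fun n : ℕ => 1/(n:ℝ)^3) := Real.summable_one_div_nat_pow.2 (by omega)
  have gp : ∀ n : ℕ, (0:ℝ) < (n:ℝ)^2-n+1/2 := fun n => by nlinarith [sq_nonneg ((n:ℝ) - 1/2)]
  have k2 : 2 ≤ 2^k := by
    calc 2 = 2^1 := rfl
      _ ≤ 2^k := Nat.pow_le_pow_right (by norm_num) hk
  have hu := tsum_up (a := 2^k+1) (G := fun n => 1/(2*((n:ℝ)^2-n+1/2)) + 1/((n-1:ℕ):ℝ)^6) hs (fun n => by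
      have := gp n
      positivity) (by
    intro n hn
    obtain ⟨n, rfl⟩ : ∃ p, n = p + 1 := ⟨n-1, by omega⟩
    have := step_pow 5 n (by omega)
    have := (g3 (n+1) (by omega)).2
    simp only [Nat.add_sub_cancel] at *
    norm_num at *
    linarith)
  have hd := tsum_dn (a := 2^k+1) (G := fun n => 1/(2*((n:ℝ)^2-n+1/2))) hs (by
      have ht : Filter.Tendsto (fun n : ℕ => 1/(n:ℝ)) Filter.atTop (nhds 0) := tendsto_one_div_atTop_nhds_zero_nat
      refine squeeze_zero' (Filter.Eventually.of_forall fun n => by have := gp n; positivity) ?_ ht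
      filter_upwards [Filter.eventually_ge_atTop 2] with n hn
      have h0 : (2:ℝ) ≤ n := by exact_mod_cast hn
      gcongr
      nlinarith) (by
    intro n hn
    exact (g3 n (by omega)).1)
  rw [range_split _ _ (by omega)] at hu hd
  unfold zr
  simp only [Nat.add_sub_cancel] at hu
  push_cast at hu hd
  push_cast at h1 h2
  generalize ((2:ℝ)^k+1)^2-(2^k+1)+1/2 = X at *
  rw [show (10:ℝ)^30/(2*X) = 10^30 * (1/(2*X)) by ring, show (10:ℝ)^30/(2^k)^6 = 10^30 * (1/(2^k)^6) by ring]
  constructor <;> linarith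

lemma node_real (m : ℕ) (hm : 1 < m) (a p q : ℝ) (hG : Gammaℝ (m:ℂ) = ((a / p : ℝ):ℂ)) (hq : q = 1/(m*(m-1))) :
    completedRiemannZeta₀ (m:ℂ) = ((a * zr m / p - q : ℝ) : ℂ) := by
  have h0 : (m:ℂ) ≠ 0 := by exact_mod_cast (show m ≠ 0 by omega)
  have h1' : (1:ℝ) < m := by exact_mod_cast hm
  have h1 : (m:ℂ) - 1 ≠ 0 := by
    rw [sub_ne_zero]; exact_mod_cast (show m ≠ 1 by omega)
  have h1b : 1 - (m:ℂ) ≠ 0 := by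
    rw [sub_ne_zero]; exact_mod_cast (show 1 ≠ m by omega)
  have e := riemannZeta_def_of_ne_zero h0
  have g0 : Gammaℝ (m:ℂ) ≠ 0 := Gammaℝ_ne_zero_of_re_pos (by simp; linarith)
  rw [eq_div_iff g0, completedRiemannZeta_eq, zr_eq hm, hG] at e
  have : completedRiemannZeta₀ (m:ℂ) = (zr m : ℂ) * ((a/p : ℝ):ℂ) + 1/(m:ℂ) + 1/(1-(m:ℂ)) := by rw [e]; ring
  rw [this, hq]; push_cast
  field_simp
  ring

lemma node_mem (m : ℕ) (hm : 1 < m) (a p q pl ph l h : ℝ) (c : ℤ) (hG : Gammaℝ (m:ℂ) = ((a / p : ℝ):ℂ)) (hq : q = 1/(m*(m-1)))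
    (hp0 : 0 < pl) (ha : 0 < a) (hp1 : pl ≤ p) (hp2 : p ≤ ph) (hl0 : 0 ≤ l) (hl : l ≤ zr m) (hh : zr m ≤ h)
    (e1 : (c - 2000)/2^60 + q ≤ a * l / ph) (e2 : a * h / pl ≤ (c + 2000)/2^60 + q) :
    (Bl.mk c 0 2000).Mem (completedRiemannZeta₀ (m:ℂ)) := by
  rw [node_real m hm a p q hG hq]
  have b1 : a * l / ph ≤ a * zr m / p := by
    have : 0 ≤ zr m := hl0.trans hl
    gcongr
    linarith
  have b2 : a * zr m / p ≤ a * h / pl := by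
    have : 0 ≤ h := hl0.trans (hl.trans hh)
    gcongr
  have : ‖((2^60 * (a * zr m / p - q) - c : ℝ):ℂ)‖ ≤ 2000 := by
    rw [Complex.norm_real, Real.norm_eq_abs, abs_le]
    constructor <;> linarith
  unfold Bl.Mem Bl.c
  convert this using 1
  · congr 1; simp [Bl.S]; norm_num
  · simp

lemma GR2 : Gammaℝ ((2:ℕ):ℂ) = ((1/Real.pi^1 : ℝ):ℂ) := by
  rw [Gammaℝ_def]; norm_num [Complex.cpow_neg_one]
lemma GR_step (m k : ℕ) (a a' : ℝ) (hm : 0 < m) (h : Gammaℝ (m:ℂ) = ((a / Real.pi^k : ℝ):ℂ)) (ha : a' = a * m / 2) :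
    Gammaℝ ((m+2:ℕ):ℂ) = ((a' / Real.pi^(k+1) : ℝ):ℂ) := by
  push_cast
  rw [Gammaℝ_add_two (by exact_mod_cast hm.ne'), h, ha]; push_cast; ring
lemma GR1 : Gammaℝ ((1:ℕ):ℂ) = ((1/Real.pi^0 : ℝ):ℂ) := by
  simp
lemma GR3 : Gammaℝ ((3:ℕ):ℂ) = (((1/2)/Real.pi^1 : ℝ):ℂ) := GR_step 1 0 1 (1/2) (by norm_num) GR1 (by norm_num)
lemma GR4 : Gammaℝ ((4:ℕ):ℂ) = ((1/Real.pi^2 : ℝ):ℂ) := GR_step 2 1 1 1 (by norm_num) GR2 (by norm_num)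
lemma GR5 : Gammaℝ ((5:ℕ):ℂ) = (((3/4)/Real.pi^2 : ℝ):ℂ) := GR_step 3 1 (1/2) (3/4) (by norm_num) GR3 (by norm_num)
lemma GR6 : Gammaℝ ((6:ℕ):ℂ) = ((2/Real.pi^3 : ℝ):ℂ) := GR_step 4 2 1 2 (by norm_num) GR4 (by norm_num)
lemma GR7 : Gammaℝ ((7:ℕ):ℂ) = (((15/8)/Real.pi^3 : ℝ):ℂ) := GR_step 5 2 (3/4) (15/8) (by norm_num) GR5 (by norm_num)
lemma GR8 : Gammaℝ ((8:ℕ):ℂ) = ((6/Real.pi^4 : ℝ):ℂ) := GR_step 6 3 2 6 (by norm_num) GR6 (by norm_num)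
lemma GR9 : Gammaℝ ((9:ℕ):ℂ) = (((105/16)/Real.pi^4 : ℝ):ℂ) := GR_step 7 3 (15/8) (105/16) (by norm_num) GR7 (by norm_num)
lemma GR10 : Gammaℝ ((10:ℕ):ℂ) = ((24/Real.pi^5 : ℝ):ℂ) := GR_step 8 4 6 24 (by norm_num) GR8 (by norm_num)

lemma pi_pow_bd (k : ℕ) : (3.14159265358979323846:ℝ)^k ≤ Real.pi^k ∧ Real.pi^k ≤ (3.14159265358979323847:ℝ)^k :=
  ⟨pow_le_pow_left₀ (by norm_num) Real.pi_gt_d20.le k, pow_le_pow_left₀ Real.pi_pos.le Real.pi_lt_d20.le k⟩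
lemma sr3 : sumR 3 8 1 = 1202049303509178058236539102558 := by decide +kernel
lemma zb3 : (1202049303509178058236539102558:ℝ)/10^30 + 1/131585 ≤ zr 3 ∧ zr 3 ≤ (1202049303509178058236539102558+2^8)/10^30 + 1/131585 + 1/(2^8)^6 := by
  have h := zr3_bd 8 (by norm_num)
  rw [sr3] at h
  norm_num at h ⊢
  constructor <;> linarith [h.1, h.2]
lemma sr5 : sumR 5 12 1 = 1036927755143369038586538420729 := by decide +kernel
lemma zb5 : (1036927755143369038586538420729:ℝ)/10^30 ≤ zr 5 ∧ zr 5 ≤ (1036927755143369038586538420729+2^12)/10^30 + 1/(2^12)^4 := by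
  have h := zr_bd 3 12
  norm_num only [sr5] at h
  norm_num
  constructor <;> linarith [h.1, h.2]
lemma sr6 : sumR 6 10 1 = 1017343061984448962512091342160 := by decide +kernel
lemma zb6 : (1017343061984448962512091342160:ℝ)/10^30 ≤ zr 6 ∧ zr 6 ≤ (1017343061984448962512091342160+2^10)/10^30 + 1/(2^10)^5 := by
  have h := zr_bd 4 10
  norm_num only [sr6] at h
  norm_num
  constructor <;> linarith [h.1, h.2]
lemma sr7 : sumR 7 8 1 = 1008349277381922241628123002527 := by decide +kernel
lemma zb7 : (1008349277381922241628123002527:ℝ)/10^30 ≤ zr 7 ∧ zr 7 ≤ (1008349277381922241628123002527+2^8)/10^30 + 1/(2^8)^6 := by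
  have h := zr_bd 5 8
  norm_num only [sr7] at h
  norm_num
  constructor <;> linarith [h.1, h.2]
lemma sr8 : sumR 8 7 1 = 1004077356197944092480042842237 := by decide +kernel
lemma zb8 : (1004077356197944092480042842237:ℝ)/10^30 ≤ zr 8 ∧ zr 8 ≤ (1004077356197944092480042842237+2^7)/10^30 + 1/(2^7)^7 := by
  have h := zr_bd 6 7
  norm_num only [sr8] at h
  norm_num
  constructor <;> linarith [h.1, h.2]
lemma sr9 : sumR 9 6 1 = 1002008392826081797433988135166 := by decide +kernel
lemma zb9 : (1002008392826081797433988135166:ℝ)/10^30 ≤ zr 9 ∧ zr 9 ≤ (1002008392826081797433988135166+2^6)/10^30 + 1/(2^6)^8 := by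
  have h := zr_bd 7 6
  norm_num only [sr9] at h
  norm_num
  constructor <;> linarith [h.1, h.2]
lemma sr10 : sumR 10 6 1 = 1000994575127818079591633422464 := by decide +kernel
lemma zb10 : (1000994575127818079591633422464:ℝ)/10^30 ≤ zr 10 ∧ zr 10 ≤ (1000994575127818079591633422464+2^6)/10^30 + 1/(2^6)^9 := by
  have h := zr_bd 8 6
  norm_num only [sr10] at h
  norm_num
  constructor <;> linarith [h.1, h.2]

lemma zb2 : zr 2 = Real.pi^2/6 := by
  have := zr_eq (m := 2) (by norm_num)
  push_cast at this
  rw [riemannZeta_two] at this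
  exact_mod_cast this.symm
lemma zb4 : zr 4 = Real.pi^4/90 := by
  have := zr_eq (m := 4) (by norm_num)
  push_cast at this
  rw [riemannZeta_four] at this
  exact_mod_cast this.symm
lemma nd2 : (Bl.mk 27207535869670082 0 2000).Mem (completedRiemannZeta₀ ((2:ℕ):ℂ)) := by
  have zb : ((3.14159265358979323846:ℝ)^2/6) ≤ zr 2 ∧ zr 2 ≤ ((3.14159265358979323847:ℝ)^2/6) := by
    rw [zb2]
    constructor
    · linarith [(pi_pow_bd 2).1]
    · linarith [(pi_pow_bd 2).2]
  refine node_mem 2 (by norm_num) 1 (Real.pi^1) (1/2) _ _ _ _ _ GR2 (by norm_num) (by positivity) (by norm_num) (pi_pow_bd 1).1 (pi_pow_bd 1).2 ?_ zb.1 zb.2 ?_ ?_ <;> norm_num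
lemma nd3 : (Bl.mk 28415631298285404 0 2000).Mem (completedRiemannZeta₀ ((3:ℕ):ℂ)) := by
  have zb := zb3
  refine node_mem 3 (by norm_num) (1/2) (Real.pi^1) (1/6) _ _ _ _ _ GR3 (by norm_num) (by positivity) (by norm_num) (pi_pow_bd 1).1 (pi_pow_bd 1).2 ?_ zb.1 zb.2 ?_ ?_ <;> norm_num
lemma nd4 : (Bl.mk 30355198571410553 0 2000).Mem (completedRiemannZeta₀ ((4:ℕ):ℂ)) := by
  have zb : ((3.14159265358979323846:ℝ)^4/90) ≤ zr 4 ∧ zr 4 ≤ ((3.14159265358979323847:ℝ)^4/90) := by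
    rw [zb4]
    constructor
    · linarith [(pi_pow_bd 4).1]
    · linarith [(pi_pow_bd 4).2]
  refine node_mem 4 (by norm_num) 1 (Real.pi^2) (1/12) _ _ _ _ _ GR4 (by norm_num) (by positivity) (by norm_num) (pi_pow_bd 2).1 (pi_pow_bd 2).2 ?_ zb.1 zb.2 ?_ ?_ <;> norm_num
lemma nd5 : (Bl.mk 33200750466380199 0 2000).Mem (completedRiemannZeta₀ ((5:ℕ):ℂ)) := by
  have zb := zb5
  refine node_mem 5 (by norm_num) (3/4) (Real.pi^2) (1/20) _ _ _ _ _ GR5 (by norm_num) (by positivity) (by norm_num) (pi_pow_bd 2).1 (pi_pow_bd 2).2 ?_ zb.1 zb.2 ?_ ?_ <;> norm_num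
lemma nd6 : (Bl.mk 37226009449628827 0 2000).Mem (completedRiemannZeta₀ ((6:ℕ):ℂ)) := by
  have zb := zb6
  refine node_mem 6 (by norm_num) 2 (Real.pi^3) (1/30) _ _ _ _ _ GR6 (by norm_num) (by positivity) (by norm_num) (pi_pow_bd 3).1 (pi_pow_bd 3).2 ?_ zb.1 zb.2 ?_ ?_ <;> norm_num
lemma nd7 : (Bl.mk 42850630841755042 0 2000).Mem (completedRiemannZeta₀ ((7:ℕ):ℂ)) := by
  have zb := zb7
  refine node_mem 7 (by norm_num) (15/8) (Real.pi^3) (1/42) _ _ _ _ _ GR7 (by norm_num) (by positivity) (by norm_num) (pi_pow_bd 3).1 (pi_pow_bd 3).2 ?_ zb.1 zb.2 ?_ ?_ <;> norm_num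
lemma nd8 : (Bl.mk 50716900622374505 0 2000).Mem (completedRiemannZeta₀ ((8:ℕ):ℂ)) := by
  have zb := zb8
  refine node_mem 8 (by norm_num) 6 (Real.pi^4) (1/56) _ _ _ _ _ GR8 (by norm_num) (by positivity) (by norm_num) (pi_pow_bd 4).1 (pi_pow_bd 4).2 ?_ zb.1 zb.2 ?_ ?_ <;> norm_num
lemma nd9 : (Bl.mk 61816107115677196 0 2000).Mem (completedRiemannZeta₀ ((9:ℕ):ℂ)) := by
  have zb := zb9
  refine node_mem 9 (by norm_num) (105/16) (Real.pi^4) (1/72) _ _ _ _ _ GR9 (by norm_num) (by positivity) (by norm_num) (pi_pow_bd 4).1 (pi_pow_bd 4).2 ?_ zb.1 zb.2 ?_ ?_ <;> norm_num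
lemma nd10 : (Bl.mk 77699089370832302 0 2000).Mem (completedRiemannZeta₀ ((10:ℕ):ℂ)) := by
  have zb := zb10
  refine node_mem 10 (by norm_num) 24 (Real.pi^5) (1/90) _ _ _ _ _ GR10 (by norm_num) (by positivity) (by norm_num) (pi_pow_bd 5).1 (pi_pow_bd 5).2 ?_ zb.1 zb.2 ?_ ?_ <;> norm_num

theorem nodesOK : NodesOK := by
  intro p hp
  simp only [Bl.T0, Bl.T1, List.cons_append, List.nil_append, List.mem_cons, List.not_mem_nil, or_false] at hp
  rcases hp with rfl | rfl | rfl | rfl | rfl | rfl | rfl | rfl | rfl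
  exacts [nd2, nd3, nd4, nd5, nd6, nd7, nd8, nd9, nd10]

theorem AB_mem : Bl.AB.Mem A := by
  have h1 := (pi_pow_bd 1).1
  have h2 := (pi_pow_bd 1).2
  simp only [pow_one] at h1 h2
  have : ‖((2^60 * (Real.pi/3 - 1) - 54415071739340165 : ℝ):ℂ)‖ ≤ 10 := by
    rw [Complex.norm_real, Real.norm_eq_abs, abs_le]
    constructor <;> norm_num at h1 h2 ⊢ <;> linarith
  unfold Bl.Mem Bl.c A Bl.AB
  convert this using 1
  · congr 1; simp [Bl.S]; norm_num
  · simp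
end nodes

section partC
lemma chi_one_sub (s : ℂ) : chi (1 - s) = chi s := by
  unfold chi; rw [completedRiemannZeta₀_one_sub]; ring

lemma chi_conj (s : ℂ) : chi ((starRingEnd ℂ) s) = (starRingEnd ℂ) (chi s) := by
  obtain ⟨f, hf, hz⟩ := zeta0_posSer
  have key : ∀ s, completedRiemannZeta₀ s = f ((s - 1/2)^2) := fun s => by
    rw [← hz]; ring_nf
  unfold chi
  rw [key s, key, map_add, map_mul, ← hf.conj]
  have c2 : (starRingEnd ℂ) 2 = 2 := conj_ofNat 2
  simp [c2]

lemma chi_diff : Differentiable ℂ chi := by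
  unfold chi
  have := differentiable_completedZeta₀
  fun_prop

lemma chi_eq {s : ℂ} (h0 : s ≠ 0) (h1 : s ≠ 1) : chi s = s * (s - 1) * completedRiemannZeta s := by
  unfold chi
  rw [completedRiemannZeta_eq]
  have h1' : s - 1 ≠ 0 := sub_ne_zero.2 h1
  have h1'' : 1 - s ≠ 0 := sub_ne_zero.2 h1.symm
  field_simp
  ring

lemma chi_eq' {s : ℂ} (h0 : 1 < s.re) : chi s = s * (s - 1) * ((Real.pi:ℂ)^(-s/2) * Gamma (s/2) * riemannZeta s) := by
  have hs0 : s ≠ 0 := by rintro rfl; simp at h0; linarith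
  have hs1 : s ≠ 1 := by rintro rfl; simp at h0
  rw [chi_eq hs0 hs1, riemannZeta_def_of_ne_zero hs0, ← Gammaℝ_def, mul_div_cancel₀ _ (Gammaℝ_ne_zero_of_re_pos (by linarith))]

lemma chi_ne {s : ℂ} (h0 : 1 ≤ s.re) : chi s ≠ 0 := by
  by_cases h1 : s = 1
  · subst h1; simp [chi]
  have hs0 : s ≠ 0 := by rintro rfl; simp at h0; linarith
  have := riemannZeta_ne_zero_of_one_le_re h0
  rw [riemannZeta_def_of_ne_zero hs0] at this
  rw [chi_eq hs0 h1]
  exact mul_ne_zero (mul_ne_zero hs0 (sub_ne_zero.2 h1)) (fun h => this (by simp [h]))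

lemma LS_bd (f : ℕ → ℂ) (x : ℝ) (hf : LSeriesSummable f x) (s : ℂ) (hs : x ≤ s.re) :
    ‖LSeries f s‖ ≤ ∑' n, ‖LSeries.term f x n‖ := by
  have h2 : ∀ n, ‖LSeries.term f s n‖ ≤ ‖LSeries.term f x n‖ := LSeries.norm_term_le_of_re_le_re f (by simpa using hs)
  have hs1 := hf.norm
  have hs2 : Summable (fun n => ‖LSeries.term f s n‖) := hs1.of_nonneg_of_le (fun _ => norm_nonneg _) h2
  exact (norm_tsum_le_tsum_norm hs2).trans (hs2.tsum_le_tsum h2 hs1)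

open scoped LSeries.notation in
lemma zeta_bd (x : ℝ) (hx : 1 < x) : ∃ C : ℝ, 0 < C ∧ ∀ s : ℂ, x ≤ s.re → ‖riemannZeta s‖ ≤ C ∧ ‖(riemannZeta s)⁻¹‖ ≤ C := by
  have h1 := LS_bd 1 x (by rw [LSeriesSummable_one_iff]; simpa using hx)
  have h2 := LS_bd (fun n => ((ArithmeticFunction.moebius n : ℤ) : ℂ)) x (by rw [ArithmeticFunction.LSeriesSummable_moebius_iff]; simpa using hx)
  refine ⟨max (∑' n, ‖LSeries.term 1 x n‖) (∑' n, ‖LSeries.term (fun n => ((ArithmeticFunction.moebius n : ℤ) : ℂ)) x n‖) + 1, ?_, fun s hs => ⟨?_, ?_⟩⟩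
  · have : 0 ≤ ∑' n, ‖LSeries.term 1 x n‖ := tsum_nonneg fun _ => norm_nonneg _
    linarith [le_max_left (∑' n, ‖LSeries.term 1 x n‖) (∑' n, ‖LSeries.term (fun n => ((ArithmeticFunction.moebius n : ℤ) : ℂ)) x n‖)]
  · rw [← LSeries_one_eq_riemannZeta (by linarith)]
    exact (h1 s hs).trans ((le_max_left _ _).trans (by linarith))
  · have := LSeries_one_mul_Lseries_moebius (s := s) (by linarith)
    rw [LSeries_one_eq_riemannZeta (by linarith)] at this
    rw [← eq_inv_of_mul_eq_one_right this]
    exact (h2 s hs).trans ((le_max_right _ _).trans (by linarith))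

lemma beta_bd (a : ℂ) (ha : 1 ≤ a.re) (b : ℝ) (hb : 0 < b) : ‖Gamma a‖ ≤ ‖Gamma (a + b)‖ * (1 / (b * Real.Gamma b)) := by
  have h := Gamma_mul_Gamma_eq_betaIntegral (s := a) (t := (b:ℂ)) (by linarith) (by simpa using hb)
  have hB : ‖betaIntegral a b‖ ≤ 1/b := by
    rw [← betaIntegral_symm]
    unfold betaIntegral
    have hi : ∫ x in (0:ℝ)..1, x^(b-1) = 1/b := by
      rw [integral_rpow (Or.inl (by linarith))]; simp [hb.ne']
    rw [← hi]
    refine intervalIntegral.norm_integral_le_of_norm_le zero_le_one ?_ (intervalIntegral.intervalIntegrable_rpow' (by linarith))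
    refine Filter.Eventually.of_forall fun x hx => ?_
    rw [norm_mul, norm_cpow_eq_rpow_re_of_pos hx.1]
    have : ((b:ℂ) - 1).re = b - 1 := by simp
    rw [this]
    refine mul_le_of_le_one_right (Real.rpow_nonneg hx.1.le _) ?_
    rcases hx.2.lt_or_eq with h1 | h1
    · rw [show (1:ℂ) - x = ((1 - x : ℝ):ℂ) by push_cast; ring, norm_cpow_eq_rpow_re_of_pos (by linarith)]
      exact Real.rpow_le_one (by linarith) (by linarith [hx.1]) (by simpa using ha)
    · subst h1
      by_cases h2 : a - 1 = 0
      · simp [h2]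
      · simp [zero_cpow h2]
  have hg : 0 < Real.Gamma b := Real.Gamma_pos_of_pos hb
  have e : ‖Gamma a‖ * Real.Gamma b = ‖Gamma (a + b)‖ * ‖betaIntegral a b‖ := by
    rw [← norm_mul, ← h, norm_mul, Complex.Gamma_ofReal, Complex.norm_real, Real.norm_of_nonneg hg.le]
  have : ‖Gamma a‖ * Real.Gamma b ≤ ‖Gamma (a + b)‖ * (1/b) := by rw [e]; gcongr
  rw [← le_div_iff₀ hg] at this
  refine this.trans (le_of_eq ?_)
  field_simp

lemma gam_le (z : ℂ) (hz : 0 < z.re) : ‖Gamma z‖ ≤ Real.Gamma z.re := by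
  rw [Gamma_eq_integral hz, Real.Gamma_eq_integral hz]
  unfold GammaIntegral
  refine MeasureTheory.norm_integral_le_of_norm_le (Real.GammaIntegral_convergent hz) ?_
  refine (MeasureTheory.ae_restrict_iff' measurableSet_Ioi).2 (Filter.Eventually.of_forall fun x hx => ?_)
  rw [norm_mul, norm_cpow_eq_rpow_re_of_pos hx]
  rw [Complex.norm_real, Real.norm_of_nonneg (Real.exp_pos _).le]; simp

lemma sin_bd (z : ℂ) : ‖sin z‖ ≤ Real.exp |z.im| := by
  unfold Complex.sin
  rw [norm_div, norm_mul, norm_I, mul_one]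
  have h1 : ‖exp (-z * I)‖ ≤ Real.exp |z.im| := by
    rw [norm_exp]; simp [le_abs_self]
  have h2 : ‖exp (z * I)‖ ≤ Real.exp |z.im| := by
    rw [norm_exp]; simp [neg_le_abs]
  have := norm_sub_le (exp (-z * I)) (exp (z * I))
  rw [div_le_iff₀ (by simp)]
  rw [Complex.norm_ofNat]
  linarith

lemma rgam_bd : ∃ C : ℝ, 0 < C ∧ ∀ z : ℂ, 1/2 ≤ z.re → z.re ≤ 5/2 → 1 ≤ |z.im| → ‖(Gamma z)⁻¹‖ ≤ C * Real.exp (Real.pi * |z.im|) := by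
  have hc : ContinuousOn Real.Gamma (Set.Icc (1/2) (5/2)) := by
    intro x hx
    refine (Real.differentiableAt_Gamma fun m => ?_).continuousAt.continuousWithinAt
    have := hx.1
    have : (0:ℝ) ≤ m := Nat.cast_nonneg m
    linarith
  obtain ⟨C, hC⟩ := isCompact_Icc.exists_bound_of_continuousOn hc
  have hC0 : 0 < C := lt_of_lt_of_le (by
    rw [norm_pos_iff]; exact (Real.Gamma_pos_of_pos one_pos).ne') (hC 1 (by norm_num))
  refine ⟨C, hC0, fun z h1 h2 h3 => ?_⟩
  have b3 : ‖Gamma (3 - z)‖ ≤ C := by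
    refine (gam_le _ (by simp; linarith)).trans ((le_abs_self _).trans ?_)
    exact hC _ (by simp; constructor <;> linarith)
  have n1 : 1 ≤ ‖1 - z‖ := h3.trans (by simpa using abs_im_le_norm (1 - z))
  have n2 : 1 ≤ ‖2 - z‖ := h3.trans (by simpa using abs_im_le_norm (2 - z))
  have z1 : 1 - z ≠ 0 := by rw [← norm_pos_iff]; linarith
  have z2 : 2 - z ≠ 0 := by rw [← norm_pos_iff]; linarith
  have r1 : Gamma (3 - z) = (2 - z) * ((1 - z) * Gamma (1 - z)) := by
    rw [← Gamma_add_one _ z1, show 1 - z + 1 = 2 - z by ring, ← Gamma_add_one _ z2]; ring_nf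
  have b1 : ‖Gamma (1 - z)‖ ≤ C := by
    rw [r1, norm_mul, norm_mul] at b3
    have g0 := norm_nonneg (Gamma (1 - z))
    have : ‖Gamma (1 - z)‖ ≤ ‖1 - z‖ * ‖Gamma (1 - z)‖ := le_mul_of_one_le_left g0 n1
    have h' : ‖1 - z‖ * ‖Gamma (1 - z)‖ ≤ ‖2 - z‖ * (‖1 - z‖ * ‖Gamma (1 - z)‖) := le_mul_of_one_le_left (by positivity) n2
    linarith
  have hrf := Gamma_mul_Gamma_one_sub z
  have gz : Gamma z ≠ 0 := Gamma_ne_zero_of_re_pos (by linarith)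
  have g1 : Gamma (1 - z) ≠ 0 := by
    refine Gamma_ne_zero fun m h => ?_
    have := congrArg Complex.im h
    simp at this
    rw [this] at h3; norm_num at h3
  have hs : sin (Real.pi * z) ≠ 0 := by
    intro h0
    rw [h0, div_zero] at hrf
    exact mul_ne_zero gz g1 hrf
  have e : (Gamma z)⁻¹ = Gamma (1 - z) * sin (Real.pi * z) / Real.pi := by
    have hp : (Real.pi:ℂ) ≠ 0 := by exact_mod_cast Real.pi_ne_zero
    rw [eq_div_iff hs] at hrf
    rw [inv_eq_iff_eq_inv, inv_div, eq_div_iff (mul_ne_zero g1 hs), ← mul_assoc, hrf]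
  rw [e, norm_div, norm_mul, Complex.norm_real, Real.norm_of_nonneg Real.pi_pos.le]
  refine (div_le_self (by positivity) (by linarith [Real.pi_gt_three])).trans ?_
  have := sin_bd (Real.pi * z)
  have e2 : |((Real.pi:ℂ) * z).im| = Real.pi * |z.im| := by
    simp [abs_mul, abs_of_pos Real.pi_pos]
  rw [e2] at this
  gcongr

lemma right_bd (ε : ℝ) (h0 : 0 < ε) (h1 : ε ≤ 1/2) : ∃ C : ℝ, 0 < C ∧ ∀ s : ℂ, 3 ≤ s.re → ‖chi (s - ε)‖ ≤ C * ‖chi (s + 1 + ε)‖ := by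
  obtain ⟨Z, hZ, hz⟩ := zeta_bd 2 (by norm_num)
  have hb : 0 < 1/2 + ε := by linarith
  set K := 1/((1/2+ε) * Real.Gamma (1/2 + ε)) with hK
  have hK0 : 0 < K := by have := Real.Gamma_pos_of_pos hb; positivity
  refine ⟨Real.pi^(1/2+ε) * K * Z * Z, by have := Real.pi_pos; positivity, fun s hs => ?_⟩
  have ha := beta_bd ((s - ε)/2) (by simp; linarith) (1/2+ε) hb
  rw [← hK] at ha
  rw [chi_eq' (s := s - ε) (by simp; linarith), chi_eq' (s := s + 1 + ε) (by simp; linarith)]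
  rw [show (s - ε)/2 + ((1/2 + ε : ℝ):ℂ) = (s + 1 + ε)/2 by push_cast; ring] at ha
  simp only [norm_mul]
  have n1 : ‖s - ε‖ ≤ ‖s + 1 + ε‖ := by
    rw [norm_def, norm_def]
    apply Real.sqrt_le_sqrt
    simp only [normSq_apply]; simp
    nlinarith
  have n2 : ‖s - ε - 1‖ ≤ ‖s + 1 + ε - 1‖ := by
    rw [norm_def, norm_def]
    apply Real.sqrt_le_sqrt
    simp only [normSq_apply]; simp
    nlinarith
  have n3 : ‖(Real.pi:ℂ)^(-(s-ε)/2)‖ = Real.pi^(1/2+ε) * ‖(Real.pi:ℂ)^(-(s+1+ε)/2)‖ := by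
    rw [norm_cpow_eq_rpow_re_of_pos Real.pi_pos, norm_cpow_eq_rpow_re_of_pos Real.pi_pos, ← Real.rpow_add Real.pi_pos]
    congr 1
    simp; ring
  have n4 := (hz (s - ε) (by simp; linarith)).1
  have n5 := (hz (s + 1 + ε) (by simp; linarith)).2
  have z0 : 0 < ‖riemannZeta (s+1+ε)‖ := norm_pos_iff.2 (riemannZeta_ne_zero_of_one_le_re (by simp; linarith))
  have n6 : 1 ≤ Z * ‖riemannZeta (s+1+ε)‖ := by
    rw [norm_inv] at n5
    rwa [inv_le_iff_one_le_mul₀ z0] at n5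
  rw [n3]
  have n7 : ‖riemannZeta (s - ε)‖ ≤ Z * (Z * ‖riemannZeta (s+1+ε)‖) := n4.trans (le_mul_of_one_le_right hZ.le n6)
  calc _ ≤ ‖s + 1 + ε‖ * ‖s + 1 + ε - 1‖ * (Real.pi^(1/2+ε) * ‖(Real.pi:ℂ)^(-(s+1+ε)/2)‖ * (‖Gamma ((s+1+ε)/2)‖ * K) * (Z * (Z * ‖riemannZeta (s+1+ε)‖))) := by gcongr
    _ = _ := by ring

lemma strip_bd (ε : ℝ) (h0 : 0 < ε) (h1 : ε ≤ 1/2) : ∃ C : ℝ, 0 < C ∧ ∀ s : ℂ, 0 ≤ s.re → s.re ≤ 3 → 2 ≤ |s.im| →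
    ‖chi (s - ε)‖ ≤ C * Real.exp (4 * ‖s‖) * ‖chi (s + 1 + ε)‖ := by
  obtain ⟨Z, hZ, hz⟩ := zeta_bd (1 + ε) (by linarith)
  obtain ⟨G, hG, hg⟩ := rgam_bd
  have hc : ContinuousOn (fun x : ℝ => completedRiemannZeta₀ (x:ℂ)) (Set.Icc (-1) 3) :=
    (differentiable_completedZeta₀.continuous.comp continuous_ofReal).continuousOn
  obtain ⟨M, hM⟩ := isCompact_Icc.exists_bound_of_continuousOn hc
  have hM0 : 0 ≤ M := (norm_nonneg _).trans (hM 0 (by norm_num))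
  have hp := Real.pi_pos
  refine ⟨(1 + M) * Real.exp 4 * (Real.pi^(3:ℝ) * G * Z), by positivity, fun s hs hs3 hi => ?_⟩
  have num : ‖chi (s - ε)‖ ≤ (1 + M) * Real.exp 4 * Real.exp (2 * ‖s‖) := by
    unfold chi
    have e1 : ‖completedRiemannZeta₀ (s - ε)‖ ≤ M := (zeta0_norm_le _).trans (hM _ (by simp; constructor <;> linarith))
    have e2 : ‖s - ε‖ ≤ ‖s‖ + 2 := (norm_sub_le _ _).trans (by simp [abs_of_pos h0]; linarith)
    have e3 : ‖s - ε - 1‖ ≤ ‖s‖ + 2 := (norm_sub_le _ _).trans (by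
      have : ‖s - ε‖ ≤ ‖s‖ + 1 := (norm_sub_le _ _).trans (by simp [abs_of_pos h0]; linarith)
      simp; linarith)
    have e4 : ‖s‖ + 2 ≤ Real.exp (‖s‖ + 2) := by linarith [Real.add_one_le_exp (‖s‖ + 2)]
    have e5 : Real.exp 4 * Real.exp (2 * ‖s‖) = Real.exp (‖s‖ + 2) * Real.exp (‖s‖ + 2) := by
      rw [← Real.exp_add, ← Real.exp_add]; ring_nf
    refine (norm_add_le _ _).trans ?_
    rw [norm_mul, norm_mul, norm_one, mul_assoc (1 + M), e5]
    have n0 := norm_nonneg s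
    have e6 : 1 ≤ Real.exp (‖s‖ + 2) := Real.one_le_exp (by linarith)
    have e7 : ‖s - ε‖ * ‖s - ε - 1‖ * ‖completedRiemannZeta₀ (s - ε)‖ ≤ Real.exp (‖s‖ + 2) * Real.exp (‖s‖ + 2) * M := by
      gcongr
      · linarith
      · linarith
    nlinarith
  have w1 : 1 ≤ ‖s + 1 + ε‖ := by
    have := abs_im_le_norm (s + 1 + ε)
    simp at this; linarith
  have w2 : 1 ≤ ‖s + 1 + ε - 1‖ := by
    have := abs_im_le_norm (s + 1 + ε - 1)
    simp at this; simp; linarith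
  have ime : ((s + 1 + ε)/2).im = s.im / 2 := by simp
  have ree : ((s + 1 + ε)/2).re = (s.re + 1 + ε) / 2 := by simp
  have abe : |((s + 1 + ε)/2).im| = |s.im|/2 := by rw [ime, abs_div]; norm_num
  have g1 := hg ((s + 1 + ε)/2) (by rw [ree]; linarith) (by rw [ree]; linarith) (by rw [abe]; linarith)
  have gpos : 0 < ‖Gamma ((s + 1 + ε)/2)‖ := norm_pos_iff.2 (Gamma_ne_zero_of_re_pos (by rw [ree]; linarith))
  rw [norm_inv, inv_le_iff_one_le_mul₀ gpos, abe] at g1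
  have n5 := (hz (s + 1 + ε) (by simp; linarith)).2
  have z0 : 0 < ‖riemannZeta (s+1+ε)‖ := norm_pos_iff.2 (riemannZeta_ne_zero_of_one_le_re (by simp; linarith))
  rw [norm_inv, inv_le_iff_one_le_mul₀ z0] at n5
  have n3 : 1 ≤ Real.pi^(3:ℝ) * ‖(Real.pi:ℂ)^(-(s+1+ε)/2)‖ := by
    rw [norm_cpow_eq_rpow_re_of_pos Real.pi_pos, ← Real.rpow_add Real.pi_pos]
    apply Real.one_le_rpow (by linarith [Real.pi_gt_three])
    simp; linarith
  have ex : Real.exp (Real.pi * (|s.im|/2)) ≤ Real.exp (2 * ‖s‖) := by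
    apply Real.exp_le_exp.2
    have := abs_im_le_norm s
    nlinarith [Real.pi_lt_four, abs_nonneg s.im]
  have den : 1 ≤ Real.pi^(3:ℝ) * G * Z * Real.exp (2 * ‖s‖) * ‖chi (s + 1 + ε)‖ := by
    rw [chi_eq' (s := s + 1 + ε) (by simp; linarith)]
    simp only [norm_mul]
    calc 1 ≤ (‖s + 1 + ε‖ * ‖s + 1 + ε - 1‖) * ((Real.pi^(3:ℝ) * ‖(Real.pi:ℂ)^(-(s+1+ε)/2)‖) * ((G * Real.exp (Real.pi * (|s.im|/2)) * ‖Gamma ((s + 1 + ε)/2)‖) * (Z * ‖riemannZeta (s+1+ε)‖))) :=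
          one_le_mul_of_one_le_of_one_le (one_le_mul_of_one_le_of_one_le w1 w2) (one_le_mul_of_one_le_of_one_le n3 (one_le_mul_of_one_le_of_one_le g1 n5))
      _ ≤ (‖s + 1 + ε‖ * ‖s + 1 + ε - 1‖) * ((Real.pi^(3:ℝ) * ‖(Real.pi:ℂ)^(-(s+1+ε)/2)‖) * ((G * Real.exp (2 * ‖s‖) * ‖Gamma ((s + 1 + ε)/2)‖) * (Z * ‖riemannZeta (s+1+ε)‖))) := by gcongr
      _ = _ := by ring
  calc ‖chi (s - ε)‖ ≤ (1 + M) * Real.exp 4 * Real.exp (2 * ‖s‖) * (Real.pi^(3:ℝ) * G * Z * Real.exp (2 * ‖s‖) * ‖chi (s + 1 + ε)‖) :=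
        num.trans (le_mul_of_one_le_right (by positivity) den)
    _ = _ := by rw [show 4 * ‖s‖ = 2 * ‖s‖ + 2 * ‖s‖ by ring, Real.exp_add]; ring

lemma unit_eps (ε : ℝ) (h0 : 0 < ε) (h1 : ε ≤ 1/2) (s : ℂ) (hs : 0 ≤ s.re) : ‖chi (s - ε)‖ ≤ ‖chi (s + 1 + ε)‖ := by
  obtain ⟨C1, hC1, hr⟩ := right_bd ε h0 h1
  obtain ⟨C2, hC2, hst⟩ := strip_bd ε h0 h1
  have ne : ∀ z : ℂ, 0 ≤ z.re → 0 < ‖chi (z + 1 + ε)‖ := fun z hz => norm_pos_iff.2 (chi_ne (by simp; linarith))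
  have key : ‖chi (s - ε) / chi (s + 1 + ε)‖ ≤ 1 := by
    refine PhragmenLindelof.right_half_plane_of_bounded_on_real (f := fun s => chi (s - ε) / chi (s + 1 + ε)) ?_ ?_ ?_ ?_ hs
    · refine DifferentiableOn.diffContOnCl fun z hz => ?_
      rw [closure_setOfPred_lt_re] at hz
      have d1 := chi_diff
      have d2 : Differentiable ℂ (fun s : ℂ => chi (s - ε)) := by fun_prop
      have d3 : Differentiable ℂ (fun s : ℂ => chi (s + 1 + ε)) := by fun_prop
      exact ((d2 z).fun_div (d3 z) (norm_pos_iff.1 (ne z hz))).differentiableWithinAt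
    · refine ⟨1, by norm_num, 4, Asymptotics.IsBigO.of_bound (C1 + C2) ?_⟩
      rw [Filter.eventually_inf_principal]
      filter_upwards [(tendsto_norm_cobounded_atTop (E := ℂ)).eventually_ge_atTop (5:ℝ)] with z hz hz0
      have hz0' : 0 < z.re := hz0
      have e1 : 1 ≤ Real.exp (4 * ‖z‖) := Real.one_le_exp (by positivity)
      rw [norm_div, div_le_iff₀ (ne z hz0'.le), Real.rpow_one, Real.norm_of_nonneg (Real.exp_pos _).le]
      have hn := norm_nonneg (chi (z + 1 + ε))
      rcases le_or_gt 3 z.re with h3 | h3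
      · refine (hr z h3).trans ?_
        gcongr
        nlinarith
      · have h4 := norm_le_abs_re_add_abs_im z
        rw [abs_of_pos hz0'] at h4
        refine (hst z hz0'.le h3.le (by linarith)).trans ?_
        gcongr
        linarith
    · refine ⟨C1, ?_⟩
      rw [Filter.eventually_map]
      filter_upwards [Filter.eventually_ge_atTop (3:ℝ)] with x hx
      rw [norm_div, div_le_iff₀ (ne x (by simp; linarith))]
      exact hr x (by simpa using hx)
    · intro x
      rw [norm_div, div_le_iff₀ (ne _ (by simp)), one_mul, ← chi_one_sub,
        show 1 - ((x:ℂ) * I - ε) = (starRingEnd ℂ) ((x:ℂ) * I + 1 + ε) by simp; ring, chi_conj, norm_conj]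
  rwa [norm_div, div_le_one (ne s hs)] at key

theorem unitOK : UnitOK := by
  intro s hs
  unfold uu
  rw [norm_div, div_le_one (norm_pos_iff.2 (chi_ne (by simp; linarith)))]
  have hc := chi_diff.continuous
  have t1 : Filter.Tendsto (fun ε : ℝ => ‖chi (s - ε)‖) (nhdsWithin 0 (Set.Ioi 0)) (nhds ‖chi s‖) :=
    (Continuous.tendsto' (by fun_prop) _ _ (by simp)).mono_left nhdsWithin_le_nhds
  have t2 : Filter.Tendsto (fun ε : ℝ => ‖chi (s + 1 + ε)‖) (nhdsWithin 0 (Set.Ioi 0)) (nhds ‖chi (s + 1)‖) :=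
    (Continuous.tendsto' (by fun_prop) _ _ (by simp)).mono_left nhdsWithin_le_nhds
  refine le_of_tendsto_of_tendsto t1 t2 ?_
  filter_upwards [Ioc_mem_nhdsGT (show (0:ℝ) < 1/2 by norm_num)] with ε hε
  exact unit_eps ε hε.1 hε.2 s hs
end partC

section SP
lemma psi_re (c w : ℂ) (hc : 0 < c.re) (hw : ‖w‖ < 1) : 0 < ((c + (starRingEnd ℂ) c * w) / (1 - w)).re := by
  have hw1 : 1 - w ≠ 0 := by
    intro h
    have : w = 1 := (sub_eq_zero.1 h).symm
    rw [this] at hw; simp at hw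
  have hn : 0 < normSq (1 - w) := normSq_pos.2 hw1
  have hw2 : w.re^2 + w.im^2 < 1 := by
    have : ‖w‖^2 < 1 := by nlinarith [norm_nonneg w]
    rwa [← normSq_eq_norm_sq, normSq_apply, ← sq, ← sq] at this
  rw [div_re, ← add_div]
  refine div_pos ?_ hn
  simp
  nlinarith [mul_pos hc (sub_pos.2 hw2)]

lemma phi_le (b z : ℂ) (hb : ‖b‖ < 1) (hz : ‖z‖ ≤ 1) : 1 - (starRingEnd ℂ) b * z ≠ 0 ∧ ‖(z - b) / (1 - (starRingEnd ℂ) b * z)‖ ≤ 1 := by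
  have h0 : 1 - (starRingEnd ℂ) b * z ≠ 0 := by
    intro h
    have h1 : (starRingEnd ℂ) b * z = 1 := (sub_eq_zero.1 h).symm
    have := congrArg norm h1
    rw [norm_mul, norm_conj, norm_one] at this
    nlinarith [norm_nonneg b, norm_nonneg z]
  refine ⟨h0, ?_⟩
  rw [norm_div, div_le_one (norm_pos_iff.2 h0)]
  rw [norm_def, norm_def]
  apply Real.sqrt_le_sqrt
  have h1 : b.re^2 + b.im^2 < 1 := by
    have : ‖b‖^2 < 1 := by nlinarith [norm_nonneg b]
    rwa [← normSq_eq_norm_sq, normSq_apply, ← sq, ← sq] at this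
  have h2 : z.re^2 + z.im^2 ≤ 1 := by
    have : ‖z‖^2 ≤ 1 := by nlinarith [norm_nonneg z]
    rwa [← normSq_eq_norm_sq, normSq_apply, ← sq, ← sq] at this
  simp only [normSq_apply]; simp
  nlinarith [mul_nonneg (sub_nonneg.2 h1.le) (sub_nonneg.2 h2)]

lemma sp_strict (f : ℂ → ℂ) (hf : ∀ z : ℂ, 0 < z.re → DifferentiableAt ℂ f z) (hb : ∀ z : ℂ, 0 < z.re → ‖f z‖ < 1)
    (s c : ℂ) (hs : 0 < s.re) (hc : 0 < c.re) :
    ‖f s - f c‖ * ‖s + (starRingEnd ℂ) c‖ ≤ ‖s - c‖ * ‖1 - (starRingEnd ℂ) (f c) * f s‖ := by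
  have hsc : s + (starRingEnd ℂ) c ≠ 0 := by
    intro h
    have := congrArg Complex.re h
    simp at this; linarith
  have hw : ‖(s - c) / (s + (starRingEnd ℂ) c)‖ < 1 := by
    rw [norm_div, div_lt_one (norm_pos_iff.2 hsc), norm_def, norm_def]
    apply Real.sqrt_lt_sqrt (normSq_nonneg _)
    simp only [normSq_apply]; simp
    nlinarith [mul_pos hs hc]
  set h : ℂ → ℂ := fun w => (f ((c + (starRingEnd ℂ) c * w) / (1 - w)) - f c) / (1 - (starRingEnd ℂ) (f c) * f ((c + (starRingEnd ℂ) c * w) / (1 - w))) with hh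
  have hw1 : ∀ w : ℂ, ‖w‖ < 1 → 1 - w ≠ 0 := by
    intro w hw h
    have : w = 1 := (sub_eq_zero.1 h).symm
    rw [this] at hw; simp at hw
  have key := norm_le_norm_of_mapsTo_ball (f := h) (R := 1) (z := (s - c) / (s + (starRingEnd ℂ) c)) ?_ ?_ ?_ hw
  · have e : (c + (starRingEnd ℂ) c * ((s - c) / (s + (starRingEnd ℂ) c))) / (1 - (s - c) / (s + (starRingEnd ℂ) c)) = s := by
      rw [div_eq_iff (hw1 _ hw)]
      field_simp
      ring
    simp only [hh, e] at key
    rw [norm_div, norm_div, div_le_div_iff₀ (norm_pos_iff.2 (phi_le _ _ (hb c hc) (hb s hs).le).1) (norm_pos_iff.2 hsc)] at key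
    exact key
  · intro w hw
    rw [mem_ball_zero_iff] at hw
    have hp := psi_re c w hc hw
    have d1 : DifferentiableAt ℂ (fun w : ℂ => (c + (starRingEnd ℂ) c * w) / (1 - w)) w :=
      DifferentiableAt.fun_div (by fun_prop) (by fun_prop) (hw1 w hw)
    have d2 : DifferentiableAt ℂ (fun w : ℂ => f ((c + (starRingEnd ℂ) c * w) / (1 - w))) w :=
      DifferentiableAt.fun_comp' w (hf _ hp) d1
    exact (DifferentiableAt.fun_div (d2.sub_const _) ((d2.const_mul _).const_sub _) (phi_le _ _ (hb c hc) (hb _ hp).le).1).differentiableWithinAt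
  · intro w hw
    rw [mem_ball_zero_iff] at hw
    rw [mem_closedBall_zero_iff]
    exact (phi_le _ _ (hb c hc) (hb _ (psi_re c w hc hw)).le).2
  · simp [hh]

theorem spOK : SPOK := by
  intro s c hs hc
  have t1 : Filter.Tendsto (fun l : ℝ => ‖l * uu s - l * uu c‖ * ‖s + (starRingEnd ℂ) c‖) (nhdsWithin 1 (Set.Iio 1)) (nhds (‖uu s - uu c‖ * ‖s + (starRingEnd ℂ) c‖)) :=
    (Continuous.tendsto' (by fun_prop) _ _ (by simp)).mono_left nhdsWithin_le_nhds
  have t2 : Filter.Tendsto (fun l : ℝ => ‖s - c‖ * ‖1 - l * (starRingEnd ℂ) (uu c) * (l * uu s)‖) (nhdsWithin 1 (Set.Iio 1)) (nhds (‖s - c‖ * ‖1 - (starRingEnd ℂ) (uu c) * uu s‖)) :=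
    (Continuous.tendsto' (by fun_prop) _ _ (by simp)).mono_left nhdsWithin_le_nhds
  refine le_of_tendsto_of_tendsto t1 t2 ?_
  filter_upwards [Ico_mem_nhdsLT (show (0:ℝ) < 1 by norm_num)] with l hl
  have := sp_strict (fun z => l * uu z) (fun z hz => by
    refine DifferentiableAt.const_mul (DifferentiableAt.div (chi_diff z) ?_ (chi_ne (s := z + 1) (by simp; linarith))) _
    exact chi_diff.differentiableAt.fun_comp' z (by fun_prop)) (fun z hz => by
    rw [norm_mul, Complex.norm_real, Real.norm_of_nonneg hl.1]
    have := unitOK z hz.le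
    nlinarith [norm_nonneg (uu z), hl.1, hl.2]) s c hs hc
  simpa using this
end SP

namespace Bl
def cB : Bl := ⟨Int.ofNat 1037975230597544332, Int.ofNat 2408222438822781963, Int.ofNat 0⟩
def u0B : Bl := ⟨Int.ofNat 1099865688983692230, Int.negSucc 106773494327463352, Int.ofNat 4558194804⟩
def v0B : Bl := ⟨Int.ofNat 998298402463108305, Int.negSucc 313431299443205407, Int.ofNat 145339722847768⟩
/-- radius 0.0112 -/
def u1B : Bl := ⟨Int.ofNat 1099865688983692230, Int.negSucc 106773494327463352, Int.ofNat 12912725409791490⟩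
/-- radius 0.018 -/
def v1B : Bl := ⟨Int.ofNat 998298402463108305, Int.negSucc 313431299443205407, Int.ofNat 20897926805771013⟩
def xB : Bl := rB.sub one
def x0B : Bl := cB.sub one
def pB : Bl := (((((AB.sc 3).mul (((xB.mul xB).add (xB.mul x0B)).add (x0B.mul x0B))).add (((one.sc 3).add AB).mul (xB.add x0B))).add one).sub
   ((((xB.add x0B).sub one).sc 2).mul u0B)).sub (((xB.add x0B).add one).mul (u0B.mul v0B))
def qB : Bl := (rB.add one).mul (rB.sub (one.sc 2))
def gB : Bl := ((xB.sc 2).mul (rB.sub (one.sc 2))).add (qB.mul v1B)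
def hB : Bl := u0B.mul qB
def kB : Bl := one.sub (u0B.cj.mul u1B)
def lB : Bl := one.sub (v0B.cj.mul v1B)
def fB : Bl := fullF cB one u0B v0B x0B
def ub (p : Bl) (n : ℕ) : Bool := lt (Int.mul (Int.ofNat 10000) (Int.add p.nb p.r)) (Int.mul (Int.ofNat n) S)
end Bl

noncomputable def Ff (s : ℂ) : ℂ := Fh s 1 (uu s) (uu (3 * s - 1))

noncomputable def c0 : ℂ := (1037975230597544332 + 2408222438822781963 * I) / 1152921504606846976
noncomputable def r0 : ℝ := 11529215046068480 / 1152921504606846976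

lemma uu_diff {s : ℂ} (hs : 0 ≤ s.re) : DifferentiableAt ℂ uu s := by
  refine DifferentiableAt.fun_div (chi_diff s) ?_ (chi_ne (s := s + 1) (by simp; linarith))
  exact chi_diff.differentiableAt.fun_comp' s (by fun_prop)

lemma Ff_diff {s : ℂ} (hs : 1/2 ≤ s.re) : DifferentiableAt ℂ Ff s := by
  have h1 : DifferentiableAt ℂ uu s := uu_diff (by linarith)
  have h2 : DifferentiableAt ℂ (fun s => uu (3 * s - 1)) s := by
    refine DifferentiableAt.fun_comp' s (uu_diff ?_) (by fun_prop)
    simp; linarith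
  unfold Ff Fh
  fun_prop

namespace Bl
lemma ub_le {p : Bl} {z : ℂ} {n : ℕ} (h : p.Mem z) (hb : ub p n = true) : ‖z‖ ≤ n / 10000 := by
  unfold ub at hb
  rw [lt_iff] at hb
  have hb' : (10000:ℤ) * (p.nb + p.r) < (n:ℤ) * S := hb
  have hb2 : (10000:ℝ) * (p.nb + p.r) < n * S := by exact_mod_cast hb'
  have := h.norm_le
  have hS := S_pos
  rw [le_div_iff₀ (by norm_num)]
  by_contra hc
  push Not at hc
  nlinarith

lemma cB_mem : cB.Mem c0 := by
  apply exact_mem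
  unfold S c0; push_cast; field_simp

lemma rB_iff (s : ℂ) : rB.Mem s ↔ ‖s - c0‖ ≤ r0 := by
  have e : ‖(S:ℂ) * s - rB.c‖ = S * ‖s - c0‖ := by
    have h : (S:ℂ) * s - rB.c = S * (s - c0) := by
      have : rB.c = S * c0 := by
        unfold c rB c0 S; push_cast; field_simp
      rw [this]; ring
    rw [h, norm_mul]; simp [S]
  unfold Mem
  rw [e]
  have : (rB.r : ℝ) = S * r0 := by
    unfold rB r0 S; push_cast; field_simp
  rw [this]
  exact mul_le_mul_iff_right₀ S_pos

theorem u0_eq : uB ⟨Int.ofNat 461514478294120844, Int.ofNat 2408222438822781963, Int.ofNat 0⟩ = u0B := by rfl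
theorem v0_eq : uB ⟨Int.ofNat 1384543434882362532, Int.ofNat 7224667316468345889, Int.ofNat 0⟩ = v0B := by rfl
theorem kb : ub kB 921 = true := by rfl
theorem lb : ub lB 1930 = true := by rfl
theorem gb : ub gB 140180 = true := by rfl
theorem hb : ub hB 64421 = true := by rfl
theorem fb : ub fB 14 = true := by rfl
theorem pb : lt (Int.mul (Int.ofNat 23084) S) (Int.mul (Int.ofNat 10000) pB.lbd) = true := by rfl

lemma u0_mem : u0B.Mem (uu c0) := by
  rw [← u0_eq]
  have h : c0 = 1/2 + (461514478294120844 + 2408222438822781963 * I) / 1152921504606846976 := by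
    unfold c0; ring
  rw [h]
  refine uB_mem nodesOK unitOK ?_ ?_ ?_
  · apply exact_mem
    unfold S; push_cast; field_simp
  · refine (Complex.norm_le_abs_re_add_abs_im _).trans ?_
    norm_num
  · norm_num

lemma v0_mem : v0B.Mem (uu (3 * c0 - 1)) := by
  rw [← v0_eq]
  have h : 3 * c0 - 1 = 1/2 + (1384543434882362532 + 7224667316468345889 * I) / 1152921504606846976 := by
    unfold c0; ring
  rw [h]
  refine uB_mem nodesOK unitOK ?_ ?_ ?_
  · apply exact_mem
    unfold S; push_cast; field_simp
  · refine (Complex.norm_le_abs_re_add_abs_im _).trans ?_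
    norm_num
  · norm_num

lemma Mem.widen {p q : Bl} {z w : ℂ} {e : ℝ} (h : p.Mem z) (hx : q.x = p.x) (hy : q.y = p.y)
    (hd : ‖w - z‖ ≤ e) (hr : (p.r:ℝ) + S * e ≤ q.r) : q.Mem w := by
  unfold Mem at *
  have : q.c = p.c := by unfold c; rw [hx, hy]
  rw [this, show (S:ℂ) * w - p.c = (S * z - p.c) + S * (w - z) by ring]
  refine (norm_add_le _ _).trans ?_
  rw [norm_mul]
  have h3 : ‖(S:ℂ)‖ = (S:ℝ) := by simp [S]
  rw [h3]
  have := mul_le_mul_of_nonneg_left hd S_pos.le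
  linarith
end Bl

lemma c0_re : c0.re = 1037975230597544332 / 1152921504606846976 := by
  unfold c0; norm_num
lemma c0_im : c0.im = 2408222438822781963 / 1152921504606846976 := by
  unfold c0; norm_num

lemma near_re {s : ℂ} (h : ‖s - c0‖ ≤ r0) : 0.8902 ≤ s.re := by
  have := (Complex.abs_re_le_norm _).trans h
  rw [Complex.sub_re, c0_re, abs_le] at this
  unfold r0 at this
  norm_num at this ⊢
  linarith [this.1]

lemma sp_use {s c : ℂ} {d : ℝ} (hs : 0 < s.re) (hc : 0 < c.re) (hd : 0 < d) (h : d ≤ s.re + c.re) :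
    ‖uu s - uu c‖ ≤ ‖s - c‖ * ‖1 - (starRingEnd ℂ) (uu c) * uu s‖ / d := by
  have h1 := spOK s c hs hc
  rw [le_div_iff₀ hd]
  refine le_trans (mul_le_mul_of_nonneg_left ?_ (norm_nonneg _)) h1
  refine le_trans ?_ (Complex.re_le_norm _)
  simpa using h

lemma slopeF {s : ℂ} (h : ‖s - c0‖ ≤ r0) : 3/8 * ‖s - c0‖ ≤ ‖Ff s - Ff c0‖ := by
  have hre := near_re h
  have hc := c0_re
  have hs0 : 0 < s.re := by linarith
  have hc0 : 0 < c0.re := by rw [hc]; norm_num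
  have hs1 : 0 < (3 * s - 1).re := by simp; linarith
  have hc1 : 0 < (3 * c0 - 1).re := by simp; rw [hc]; norm_num
  have hr : r0 ≤ 0.0100001 := by unfold r0; norm_num
  have su := sp_use (d := 1.79) hs0 hc0 (by norm_num) (by
    have : (0.9002:ℝ) ≤ c0.re := by rw [hc]; norm_num
    linarith)
  have sv := sp_use (d := 3.37) hs1 hc1 (by norm_num) (by
    have : (0.9002:ℝ) ≤ c0.re := by rw [hc]; norm_num
    simp; linarith)
  rw [show 3 * s - 1 - (3 * c0 - 1) = 3 * (s - c0) by ring, norm_mul] at sv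
  have n3 : ‖(3:ℂ)‖ = 3 := by simp
  rw [n3] at sv
  have two : ∀ a b : ℂ, ‖a‖ ≤ 1 → ‖b‖ ≤ 1 → ‖1 - (starRingEnd ℂ) a * b‖ ≤ 2 := by
    intro a b ha hb
    refine (norm_sub_le _ _).trans ?_
    rw [norm_mul, RCLike.norm_conj, norm_one]
    nlinarith [norm_nonneg a, norm_nonneg b]
  have t1 := two _ _ (unitOK c0 hc0.le) (unitOK s hs0.le)
  have t2 := two _ _ (unitOK _ hc1.le) (unitOK _ hs1.le)
  have hu1 : Bl.u1B.Mem (uu s) := by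
    refine Bl.u0_mem.widen rfl rfl (e := 0.01118) (su.trans ?_) ?_
    · rw [div_le_iff₀ (by norm_num)]
      nlinarith [norm_nonneg (s - c0), norm_nonneg (1 - (starRingEnd ℂ) (uu c0) * uu s)]
    · unfold Bl.u0B Bl.u1B Bl.S; push_cast; norm_num
  have hv1 : Bl.v1B.Mem (uu (3 * s - 1)) := by
    refine Bl.v0_mem.widen rfl rfl (e := 0.01781) (sv.trans ?_) ?_
    · rw [div_le_iff₀ (by norm_num)]
      nlinarith [norm_nonneg (s - c0), norm_nonneg (1 - (starRingEnd ℂ) (uu (3*c0-1)) * uu (3*s-1))]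
    · unfold Bl.v0B Bl.v1B Bl.S; push_cast; norm_num
  have hsB := (Bl.rB_iff s).2 h
  have hA := AB_mem
  have h1 := Bl.one_mem
  have hu0 := Bl.u0_mem
  have hv0 := Bl.v0_mem
  have hx := hsB.sub h1
  have hx0 := Bl.cB_mem.sub h1
  have hk := Bl.ub_le (h1.sub (hu0.cj.mul hu1)) Bl.kb
  have hl := Bl.ub_le (h1.sub (hv0.cj.mul hv1)) Bl.lb
  have hq := (hsB.add h1).mul (hsB.sub (h1.sc 2))
  have hg := Bl.ub_le (((hx.sc 2).mul (hsB.sub (h1.sc 2))).add (hq.mul hv1)) Bl.gb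
  have hh := Bl.ub_le (hu0.mul hq) Bl.hb
  have hP := (((((hA.sc 3).mul (((hx.mul hx).add (hx.mul hx0)).add (hx0.mul hx0))).add (((h1.sc 3).add hA).mul (hx.add hx0))).add h1).sub
   ((((hx.add hx0).sub h1).sc 2).mul hu0)).sub (((hx.add hx0).add h1).mul (hu0.mul hv0))
  have hPl := hP.le_norm
  have hpb : (23084:ℤ) * Bl.S < 10000 * Bl.pB.lbd := Bl.lt_iff.1 Bl.pb
  have hpb2 : (23084:ℝ) * Bl.S < 10000 * Bl.pB.lbd := by exact_mod_cast hpb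
  have hPn := le_of_mul_le_mul_left (le_trans (show (Bl.S:ℝ) * 2.3084 ≤ (Bl.pB.lbd:ℝ) by norm_num; linarith) hPl) Bl.S_pos
  push_cast at hPn hg hh hk hl
  have key : ∀ u v u0 v0 : ℂ, Fh s 1 u v - Fh c0 1 u0 v0 = (s - c0) * (3 * A * ((s - 1) * (s - 1) + (s - 1) * (c0 - 1) + (c0 - 1) * (c0 - 1)) + (3 * 1 + A) * (s - 1 + (c0 - 1)) + 1 -
              2 * (s - 1 + (c0 - 1) - 1) * u0 -
            (s - 1 + (c0 - 1) + 1) * (u0 * v0)) - (u - u0) * (2 * (s - 1) * (s - 2 * 1) + (s + 1) * (s - 2 * 1) * v)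
        - (v - v0) * (u0 * ((s + 1) * (s - 2 * 1))) := by
    intro u v u0 v0; unfold Fh; ring
  have k1 : ∀ D P a g b h : ℂ, 2.3084 ≤ ‖P‖ → ‖g‖ ≤ 140180 / 10000 → ‖h‖ ≤ 64421 / 10000 →
      ‖a‖ ≤ ‖D‖ * (921 / 10000) / 1.79 → ‖b‖ ≤ 3 * ‖D‖ * (1930 / 10000) / 3.37 → 3/8 * ‖D‖ ≤ ‖D * P - a * g - b * h‖ := by
    intro D P a g b h hP hg hh ha hb
    have e1 := norm_sub_norm_le (D * P - a * g) (b * h)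
    have e2 := norm_sub_norm_le (D * P) (a * g)
    rw [norm_mul] at e1 e2
    rw [norm_mul] at e2
    have e3 : ‖a‖ * ‖g‖ ≤ ‖D‖ * (921 / 10000) / 1.79 * (140180 / 10000) := by gcongr
    have e4 : ‖b‖ * ‖h‖ ≤ 3 * ‖D‖ * (1930 / 10000) / 3.37 * (64421 / 10000) := by gcongr
    have e5 : ‖D‖ * 2.3084 ≤ ‖D‖ * ‖P‖ := by gcongr
    norm_num at e1 e2 e3 e4 e5
    linarith [norm_nonneg D]
  unfold Ff
  rw [key]
  refine k1 _ _ _ _ _ _ hPn hg hh (su.trans ?_) (sv.trans ?_)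
  · gcongr
  · gcongr

lemma Ff_c0 : ‖Ff c0‖ ≤ 14 / 10000 := by
  have h1 := Bl.one_mem
  have hu0 := Bl.u0_mem
  have hv0 := Bl.v0_mem
  have hs := Bl.cB_mem
  have hs1 := hs.sub h1
  have hf := Bl.ub_le (((hs1.mul ((hs.sc 3).sub (h1.sc 2))).mul (h1.add (AB_mem.mul hs1))).sub
    ((h1.mul ((hs.sub (h1.sc 2)).mul hu0)).mul ((hs1.sc 2).add ((hs.add h1).mul hv0)))) Bl.fb
  unfold Ff Fh
  exact_mod_cast hf

theorem exists_rho : ∃ ρ : ℂ, ‖ρ - c0‖ ≤ r0 ∧ Ff ρ = 0 := by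
  have hr : 0 < r0 := by unfold r0; norm_num
  have hd : DiffContOnCl ℂ Ff (Metric.ball c0 r0) := by
    refine DifferentiableOn.diffContOnCl ?_
    rw [closure_ball _ hr.ne']
    intro s hs
    refine (Ff_diff ?_).differentiableWithinAt
    have := near_re (mem_closedBall_iff_norm.1 hs)
    linarith
  have h := hd.ball_subset_image_closedBall hr (ε := 3/8 * r0) (fun z hz => by
    have hz' := mem_sphere_iff_norm.1 hz
    have := slopeF hz'.le
    rwa [hz'] at this) (by
    apply Filter.Eventually.frequently (f := nhdsWithin c0 {c0}ᶜ) ?_ |>.filter_mono nhdsWithin_le_nhds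
    have hb : Metric.ball c0 r0 ∈ nhdsWithin c0 {c0}ᶜ := nhdsWithin_le_nhds (Metric.ball_mem_nhds c0 hr)
    filter_upwards [hb, self_mem_nhdsWithin] with z hz hne heq
    have h1 := slopeF (mem_ball_iff_norm.1 hz).le
    rw [heq, sub_self, norm_zero] at h1
    have : 0 < ‖z - c0‖ := norm_pos_iff.2 (sub_ne_zero.2 hne)
    linarith)
  have h0 : (0:ℂ) ∈ Metric.ball (Ff c0) (3/8 * r0 / 2) := by
    rw [mem_ball_iff_norm, zero_sub, norm_neg]
    refine lt_of_le_of_lt Ff_c0 ?_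
    unfold r0; norm_num
  obtain ⟨ρ, h1, h2⟩ := h h0
  exact ⟨ρ, mem_closedBall_iff_norm.1 h1, h2⟩


lemma conj_two : (starRingEnd ℂ) 2 = 2 := map_ofNat _ 2
lemma conj_three : (starRingEnd ℂ) 3 = 3 := map_ofNat _ 3
lemma conj_five : (starRingEnd ℂ) 5 = 5 := map_ofNat _ 5

lemma uu_conj (s : ℂ) : uu ((starRingEnd ℂ) s) = (starRingEnd ℂ) (uu s) := by
  unfold uu
  rw [map_div₀, chi_conj, show (starRingEnd ℂ) s + 1 = (starRingEnd ℂ) (s + 1) by simp, chi_conj]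

lemma A_conj : (starRingEnd ℂ) A = A := by
  unfold A
  simp [map_div₀, conj_two, conj_three, conj_five]

lemma Ff_conj (s : ℂ) : Ff ((starRingEnd ℂ) s) = (starRingEnd ℂ) (Ff s) := by
  unfold Ff Fh
  rw [show 3 * (starRingEnd ℂ) s - 1 = (starRingEnd ℂ) (3 * s - 1) by simp [conj_two, conj_three, conj_five], uu_conj, uu_conj]
  simp [A_conj, conj_two, conj_three, conj_five]

lemma Ff_diff' {s : ℂ} (hs : 1/3 ≤ s.re) : DifferentiableAt ℂ Ff s := by
  have h1 : DifferentiableAt ℂ uu s := uu_diff (by linarith)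
  have h2 : DifferentiableAt ℂ (fun s => uu (3 * s - 1)) s := by
    refine DifferentiableAt.fun_comp' s (uu_diff ?_) (by fun_prop)
    simp; linarith
  unfold Ff Fh
  fun_prop

lemma f1_eq {s : ℂ} (hs : 1/3 ≤ s.re) : f1 s = (s - 1) * (chi (s + 1) * chi (3 * s)) * Ff s := by
  have h1 : chi (s + 1) ≠ 0 := chi_ne (by simp; linarith)
  have h2 : chi (3 * s) ≠ 0 := chi_ne (by simp; linarith)
  unfold Ff Fh uu f1
  rw [show 3 * s - 1 + 1 = 3 * s by ring]
  generalize chi (3 * s) = X at *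
  field_simp
  ring

lemma Mh_conj (s ρ : ℂ) : Mh ((starRingEnd ℂ) s) 1 ρ = (starRingEnd ℂ) (Mh s 1 ρ) := by
  unfold Mh; simp only [map_mul, map_sub, map_add, map_one, Complex.conj_conj, conj_five]; ring

lemma bdry_pos {ρ : ℂ} (hρ : Bl.rB.Mem ρ) (t : ℝ) :
    0 < (Ff (1/2 + t * I) * (starRingEnd ℂ) (Mh (1/2 + t * I) 1 ρ)).re := by
  have pos : ∀ t : ℝ, 0 ≤ t → 0 < (Ff (1/2 + t * I) * (starRingEnd ℂ) (Mh (1/2 + t * I) 1 ρ)).re := by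
    intro t ht
    rcases le_total t 20 with h | h
    · exact Bl.seg_all AB_mem nodesOK unitOK spOK hρ t ht h
    have ht0 : 0 < t := by linarith
    have hh : 1 / t ≤ 1 / 20 := one_div_le_one_div_of_le (by norm_num) h
    have := Bl.hseg_all AB_mem hρ (1/t) (by positivity) hh (uu (1/2 + t * I)) (uu (3 * (1/2 + t * I) - 1))
      (unitOK _ (by simp)) (unitOK _ (by simp; norm_num))
    have htc : (t:ℂ) ≠ 0 := by exact_mod_cast ht0.ne'
    have e1 : Fh (((1/t : ℝ):ℂ)/2 + I) ((1/t : ℝ):ℂ) (uu (1/2 + t * I)) (uu (3 * (1/2 + t * I) - 1)) = ((1/t^3 : ℝ):ℂ) * Ff (1/2 + t * I) := by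
      unfold Ff Fh; push_cast; field_simp
    have e2 : Mh (((1/t : ℝ):ℂ)/2 + I) ((1/t : ℝ):ℂ) ρ = ((1/t^3 : ℝ):ℂ) * Mh (1/2 + t * I) 1 ρ := by
      unfold Mh; push_cast; field_simp
    rw [e1, e2, map_mul, Complex.conj_ofReal, show ∀ a b c : ℂ, a * b * (a * c) = a * (a * (b * c)) by intros; ring,
      Complex.re_ofReal_mul, Complex.re_ofReal_mul] at this
    have h3 : 0 < 1/t^3 := by positivity
    exact pos_of_mul_pos_right (pos_of_mul_pos_right this h3.le) h3.le
  rcases le_total 0 t with h | h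
  · exact pos t h
  have h1 := pos (-t) (by linarith)
  have e : (1/2 + ((-t:ℝ):ℂ) * I) = (starRingEnd ℂ) (1/2 + t * I) := by
    simp [conj_two, conj_three, conj_five]
  rw [e, Ff_conj, Mh_conj, ← map_mul, Complex.conj_re] at h1
  exact h1

lemma deriv_simple {g : ℂ → ℂ} {a : ℂ} (hg : DifferentiableAt ℂ g a) : deriv (fun s => (s - a) * g s) a = g a := by
  have h := ((hasDerivAt_id a).sub_const a).mul hg.hasDerivAt
  have := h.deriv
  simp at this
  exact this

section final
variable {ρ : ℂ}

noncomputable def kk (ρ : ℂ) : ℂ → ℂ := dslope (dslope Ff ρ) ((starRingEnd ℂ) ρ)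
noncomputable def KK (ρ : ℂ) (s : ℂ) : ℂ := kk ρ s / (s + 5)
def UU : Set ℂ := {z | 1/3 < z.re}
lemma UU_open : IsOpen UU := isOpen_lt continuous_const Complex.continuous_re

lemma kk_diff (hre : 1/2 < ρ.re) : DifferentiableOn ℂ (kk ρ) UU := by
  unfold kk
  rw [Complex.differentiableOn_dslope (UU_open.mem_nhds (by simp [UU]; linarith)),
    Complex.differentiableOn_dslope (UU_open.mem_nhds (by simp [UU]; linarith))]
  intro s hs
  exact (Ff_diff' (le_of_lt hs)).differentiableWithinAt

lemma kk_diffAt (hre : 1/2 < ρ.re) {s : ℂ} (hs : 1/2 ≤ s.re) : DifferentiableAt ℂ (kk ρ) s :=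
  (kk_diff hre).differentiableAt (UU_open.mem_nhds (by simp [UU]; linarith))

lemma conj_ne (him : 0 < ρ.im) : (starRingEnd ℂ) ρ ≠ ρ := by
  intro h
  have := congrArg Complex.im h
  simp at this
  linarith

lemma kk_eq (h0 : Ff ρ = 0) (him : 0 < ρ.im) (s : ℂ) : Ff s = (s - ρ) * ((s - (starRingEnd ℂ) ρ) * kk ρ s) := by
  have h1 := sub_smul_dslope Ff ρ s
  have h2 := sub_smul_dslope (dslope Ff ρ) ((starRingEnd ℂ) ρ) s
  have h3 := sub_smul_dslope Ff ρ ((starRingEnd ℂ) ρ)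
  rw [h0, Ff_conj, h0, map_zero, sub_zero, smul_eq_zero] at h3
  have h4 := h3.resolve_left (sub_ne_zero.2 (conj_ne him))
  rw [h4, sub_zero] at h2
  unfold kk
  rw [h0, sub_zero] at h1
  simp only [smul_eq_mul] at h1 h2
  rw [h2, h1]

lemma KK_mul (h0 : Ff ρ = 0) (him : 0 < ρ.im) {s : ℂ} (hs : 1/2 ≤ s.re) : KK ρ s * Mh s 1 ρ = Ff s := by
  have : s + 5 ≠ 0 := by
    intro h
    have := congrArg Complex.re h
    simp at this
    linarith
  rw [kk_eq h0 him s]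
  unfold KK Mh
  field_simp

lemma KK_diffAt (hre : 1/2 < ρ.re) {s : ℂ} (hs : 1/2 ≤ s.re) : DifferentiableAt ℂ (KK ρ) s := by
  have : s + 5 ≠ 0 := by
    intro h
    have := congrArg Complex.re h
    simp at this
    linarith
  have := kk_diffAt hre hs
  unfold KK
  fun_prop (disch := assumption)

lemma KK_bdry (hρ : Bl.rB.Mem ρ) (h0 : Ff ρ = 0) (him : 0 < ρ.im) (t : ℝ) : 0 < (KK ρ (1/2 + t * I)).re := by
  have h1 := bdry_pos hρ t
  rw [← KK_mul h0 him (by simp), mul_assoc, Complex.mul_conj, mul_comm, Complex.re_ofReal_mul] at h1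
  exact pos_of_mul_pos_right h1 (Complex.normSq_nonneg _)

lemma A_norm : ‖A‖ ≤ 1 := by
  have : A = ((Real.pi / 3 - 1 : ℝ):ℂ) := by unfold A; push_cast; rfl
  rw [this, Complex.norm_real, Real.norm_eq_abs, abs_le]
  constructor <;> linarith [Real.pi_gt_three, Real.pi_lt_d2]

lemma Ff_le {s : ℂ} (hs : 1/2 ≤ s.re) (h10 : 10 ≤ ‖s‖) : ‖Ff s‖ ≤ 36 * ‖s‖^3 := by
  have hu := unitOK s (by linarith)
  have hv := unitOK (3 * s - 1) (by simp; linarith)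
  set n := ‖s‖
  have a1 : ‖s - 1‖ ≤ 2 * n := (norm_sub_le _ _).trans (by rw [norm_one]; linarith)
  have a2 : ‖3 * s - 2 * 1‖ ≤ 4 * n := (norm_sub_le _ _).trans (by simp; linarith)
  have a3 : ‖1 + A * (s - 1)‖ ≤ 3 * n := (norm_add_le _ _).trans (by
    rw [norm_one, norm_mul]; nlinarith [A_norm, norm_nonneg A, norm_nonneg (s - 1)])
  have a4 : ‖s - 2 * 1‖ ≤ 2 * n := (norm_sub_le _ _).trans (by simp; linarith)
  have a6 : ‖s + 1‖ ≤ 2 * n := (norm_add_le _ _).trans (by rw [norm_one]; linarith)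
  have a5 : ‖2 * (s - 1) + (s + 1) * uu (3 * s - 1)‖ ≤ 6 * n := (norm_add_le _ _).trans (by
    rw [norm_mul, norm_mul]; norm_num; nlinarith [norm_nonneg (s + 1), norm_nonneg (uu (3 * s - 1))])
  unfold Ff Fh
  refine (norm_sub_le _ _).trans ?_
  simp only [norm_mul, norm_one, one_mul]
  have b1 : ‖s - 1‖ * ‖3 * s - 2 * 1‖ * ‖1 + A * (s - 1)‖ ≤ (2 * n) * (4 * n) * (3 * n) := by gcongr
  have b2 : ‖s - 2 * 1‖ * ‖uu s‖ * ‖2 * (s - 1) + (s + 1) * uu (3 * s - 1)‖ ≤ (2 * n) * 1 * (6 * n) := by gcongr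
  simp only [norm_mul, norm_one, mul_one] at b1 b2 ⊢
  nlinarith [sq_nonneg n, mul_nonneg (sq_nonneg n) (by linarith : 0 ≤ n - 1)]

lemma KK_le (h0 : Ff ρ = 0) (him : 0 < ρ.im) (hn : ‖ρ‖ ≤ 5) {s : ℂ} (hs : 1/2 ≤ s.re) (h10 : 10 ≤ ‖s‖) : ‖KK ρ s‖ ≤ 288 := by
  have h1 := Ff_le hs h10
  rw [← KK_mul h0 him hs, norm_mul] at h1
  have b1 : ‖s‖ / 2 ≤ ‖s - ρ * 1‖ := by
    have := norm_sub_norm_le s (ρ * 1)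
    rw [mul_one] at *; linarith
  have b2 : ‖s‖ / 2 ≤ ‖s - (starRingEnd ℂ) ρ * 1‖ := by
    have := norm_sub_norm_le s ((starRingEnd ℂ) ρ * 1)
    rw [mul_one, RCLike.norm_conj] at *; linarith
  have b3 : ‖s‖ / 2 ≤ ‖s + 5 * 1‖ := by
    have := norm_sub_norm_le s (-(5 * 1))
    rw [norm_neg, sub_neg_eq_add] at this
    norm_num at this ⊢; linarith
  have b4 : ‖s‖ / 2 * (‖s‖ / 2) * (‖s‖ / 2) ≤ ‖Mh s 1 ρ‖ := by
    unfold Mh; rw [norm_mul, norm_mul]; gcongr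
  have b5 := mul_le_mul_of_nonneg_left b4 (norm_nonneg (KK ρ s))
  have hp : 0 < ‖s‖^3 := by positivity
  refine le_of_mul_le_mul_right ?_ hp
  linarith

lemma KK_re (hρ : Bl.rB.Mem ρ) (h0 : Ff ρ = 0) (him : 0 < ρ.im) (hre : 1/2 < ρ.re) (hn : ‖ρ‖ ≤ 5)
    {s : ℂ} (hs : 1/2 ≤ s.re) : 0 ≤ (KK ρ s).re := by
  have hb : ∀ z : ℂ, 0 ≤ z.re → 20 ≤ ‖z‖ → ‖Complex.exp (- KK ρ (1/2 + z))‖ ≤ Real.exp 288 := by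
    intro z hz h20
    rw [Complex.norm_exp, Real.exp_le_exp]
    refine (Complex.re_le_norm _).trans ?_
    rw [norm_neg]
    refine KK_le h0 him hn (by simp; linarith) ?_
    have := norm_sub_norm_le z (-(1/2))
    rw [sub_neg_eq_add, norm_neg, add_comm] at this
    norm_num at this ⊢
    linarith
  have h := PhragmenLindelof.right_half_plane_of_bounded_on_real (f := fun z => Complex.exp (- KK ρ (1/2 + z))) (C := 1) (z := s - 1/2)
    (by
      refine DifferentiableOn.diffContOnCl ?_
      rw [Complex.closure_setOfPred_lt_re]
      intro z hz
      have hz' : 0 ≤ z.re := hz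
      refine DifferentiableAt.differentiableWithinAt ?_
      have : DifferentiableAt ℂ (fun z => KK ρ (1/2 + z)) z :=
        DifferentiableAt.fun_comp' z (KK_diffAt hre (by simp; linarith)) (by fun_prop)
      fun_prop)
    ⟨0, by norm_num, 0, by
      refine Asymptotics.IsBigO.of_bound (Real.exp 288) ?_
      rw [Filter.eventually_inf_principal]
      have := Metric.cobounded_eq_cocompact (α := ℂ)
      filter_upwards [(tendsto_norm_cobounded_atTop (E := ℂ)).eventually_ge_atTop 20] with z hz hz0
      simpa using hb z (le_of_lt hz0) hz⟩
    ⟨Real.exp 288, by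
      rw [Filter.eventually_map]
      filter_upwards [Filter.eventually_ge_atTop (20:ℝ)] with x hx
      exact hb x (by simp; linarith) (by simp; rw [abs_of_nonneg] <;> linarith)⟩
    (by
      intro x
      rw [Complex.norm_exp, Real.exp_le_one_iff, Complex.neg_re]
      linarith [KK_bdry hρ h0 him x])
    (by simp; linarith)
  rw [Complex.norm_exp, Real.exp_le_one_iff, Complex.neg_re] at h
  rw [show (1/2 + (s - 1/2) : ℂ) = s by ring] at h
  linarith

lemma kk_ne (hρ : Bl.rB.Mem ρ) (h0 : Ff ρ = 0) (him : 0 < ρ.im) (hre : 1/2 < ρ.re) (hn : ‖ρ‖ ≤ 5)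
    {s : ℂ} (hs : 1/2 ≤ s.re) : kk ρ s ≠ 0 := by
  intro hk
  have hK : KK ρ s = 0 := by unfold KK; rw [hk, zero_div]
  rcases hs.eq_or_lt with h | h
  · have := KK_bdry hρ h0 him s.im
    rw [show (1/2 + s.im * I : ℂ) = s by apply Complex.ext <;> simp; linarith, hK] at this
    simp at this
  have hcl : closure {z : ℂ | 1/2 < z.re} = {z : ℂ | 1/2 ≤ z.re} := Complex.closure_setOfPred_lt_re _
  have := Complex.eqOn_closure_of_isPreconnected_of_isMaxOn_norm (f := fun z => Complex.exp (- KK ρ z)) (U := {z : ℂ | 1/2 < z.re}) (c := s)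
    (convex_halfSpace_re_gt _).isPreconnected (isOpen_lt continuous_const Complex.continuous_re)
    (by
      refine DifferentiableOn.diffContOnCl ?_
      rw [hcl]
      intro z hz
      have := KK_diffAt hre (s := z) hz
      refine DifferentiableAt.differentiableWithinAt ?_
      fun_prop) h
    (by
      intro z hz
      have hz' : 1/2 < z.re := hz
      simp only [Function.comp, Set.mem_ofPred_eq]
      rw [hK, Complex.norm_exp]
      simp
      exact KK_re hρ h0 him hre hn hz'.le)
  have h2 := this (x := 1/2 + (0:ℝ) * I) (by rw [hcl]; simp)
  simp only [Function.const, hK, neg_zero, Complex.exp_zero] at h2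
  have h3 := congrArg norm h2
  rw [Complex.norm_exp, norm_one, Real.exp_eq_one_iff, Complex.neg_re] at h3
  linarith [KK_bdry hρ h0 him 0]
end final

theorem f1_zeros_right_halfplane :
    ∃ ρ₀ : ℂ, (0.85 : ℝ) < ρ₀.re ∧ ρ₀.re < (0.95 : ℝ) ∧
      (2.0 : ℝ) < ρ₀.im ∧ ρ₀.im < (2.2 : ℝ) ∧
      {s : ℂ | 1 / 2 ≤ s.re ∧ f1 s = 0} = {1, ρ₀, (starRingEnd ℂ) ρ₀} ∧
      deriv f1 1 ≠ 0 ∧ deriv f1 ρ₀ ≠ 0 ∧ deriv f1 ((starRingEnd ℂ) ρ₀) ≠ 0 := by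
  obtain ⟨ρ, hr, h0⟩ := exists_rho
  have hρ := (Bl.rB_iff ρ).2 hr
  have d1 := (Complex.abs_re_le_norm _).trans hr
  have d2 := (Complex.abs_im_le_norm _).trans hr
  rw [Complex.sub_re, c0_re, abs_le] at d1
  rw [Complex.sub_im, c0_im, abs_le] at d2
  unfold r0 at d1 d2
  obtain ⟨d1, d3⟩ := d1
  obtain ⟨d2, d4⟩ := d2
  norm_num at d1 d2 d3 d4
  have him : 2 < ρ.im := by linarith
  have him0 : 0 < ρ.im := by linarith
  have him' : ρ.im < 2.2 := by norm_num; linarith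
  have hre : 0.85 < ρ.re := by norm_num; linarith
  have hre' : ρ.re < 0.95 := by norm_num; linarith
  have hre2 : 1/2 < ρ.re := by norm_num at hre ⊢; linarith
  have hn : ‖ρ‖ ≤ 5 := by
    refine (Complex.norm_le_abs_re_add_abs_im _).trans ?_
    rw [abs_of_pos (by linarith), abs_of_pos (by linarith)]
    norm_num at hre' him'; linarith
  have hre3 : 1/2 < ((starRingEnd ℂ) ρ).re := by simpa using hre2
  have kne : ∀ {s : ℂ}, 1/2 ≤ s.re → kk ρ s ≠ 0 := fun hs => kk_ne hρ h0 him0 hre2 hn hs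
  have cne : ∀ {s : ℂ}, 1/2 ≤ s.re → chi (s + 1) * chi (3 * s) ≠ 0 := fun hs =>
    mul_ne_zero (chi_ne (by simp; linarith)) (chi_ne (by simp; linarith))
  have cd : Differentiable ℂ (fun s : ℂ => chi (s + 1) * chi (3 * s)) :=
    (chi_diff.fun_comp (by fun_prop)).fun_mul (chi_diff.fun_comp (by fun_prop))
  have fe : ∀ {s : ℂ}, 1/3 ≤ s.re → f1 s = (s - 1) * (chi (s + 1) * chi (3 * s)) * ((s - ρ) * ((s - (starRingEnd ℂ) ρ) * kk ρ s)) := by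
    intro s hs
    rw [f1_eq hs, ← kk_eq h0 him0 s]
  have ne1 : ρ ≠ 1 := by intro h; rw [h] at him0; simp at him0
  have ne2 : (starRingEnd ℂ) ρ ≠ 1 := by
    intro h
    have := congrArg Complex.im h
    simp at this; linarith
  have ne3 := conj_ne him0
  have ev : ∀ {a : ℂ}, 1/2 < a.re → ∀ᶠ s in nhds a, 1/3 ≤ s.re := by
    intro a ha
    filter_upwards [(isOpen_lt continuous_const Complex.continuous_re).mem_nhds (show a ∈ {z : ℂ | 1/2 < z.re} from ha)] with s hs
    have : 1/2 < s.re := hs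
    linarith
  refine ⟨ρ, hre, hre', by norm_num; linarith, him', ?_, ?_, ?_, ?_⟩
  · ext s
    simp only [Set.mem_ofPred_eq, Set.mem_insert_iff, Set.mem_singleton_iff]
    constructor
    · rintro ⟨hs, hf⟩
      rw [fe (by linarith)] at hf
      simp only [mul_eq_zero, sub_eq_zero] at hf
      have h1 := cne hs
      have h2 := kne hs
      rw [mul_ne_zero_iff] at h1
      tauto
    · intro h
      have hs : 1/2 ≤ s.re := by
        rcases h with rfl | rfl | rfl
        · norm_num
        · exact hre2.le
        · exact hre3.le
      refine ⟨hs, ?_⟩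
      rw [fe (by linarith)]
      rcases h with rfl | rfl | rfl <;> simp
  · have : f1 = fun s => (s - 1) * ((s - 1) * (3 * s - 2) * (A * s - A + 1) * chi (s + 1) * chi (3 * s)
      - (s + 1) * (s - 2) * chi s * chi (3 * s - 1) - 2 * (s - 1) * (s - 2) * chi s * chi (3 * s)) := by
      funext s; rfl
    rw [this, deriv_simple]
    · have h1 : chi 1 ≠ 0 := chi_ne (by simp)
      have h2 : chi 2 ≠ 0 := chi_ne (by simp)
      norm_num [h1, h2]
    · have e1 : Differentiable ℂ (fun s : ℂ => chi (s + 1)) := chi_diff.fun_comp (by fun_prop)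
      have e2 : Differentiable ℂ (fun s : ℂ => chi (3 * s)) := chi_diff.fun_comp (by fun_prop)
      have e3 : Differentiable ℂ (fun s : ℂ => chi (3 * s - 1)) := chi_diff.fun_comp (by fun_prop)
      have e4 := chi_diff
      fun_prop
  · have h1 : f1 =ᶠ[nhds ρ] fun s => (s - ρ) * ((s - 1) * (chi (s + 1) * chi (3 * s)) * (s - (starRingEnd ℂ) ρ) * kk ρ s) := by
      filter_upwards [ev hre2] with s hs
      rw [fe hs]; ring
    have hk := kk_diffAt hre2 hre2.le
    have e := cd ρ
    rw [h1.deriv_eq, deriv_simple (by fun_prop)]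
    exact mul_ne_zero (mul_ne_zero (mul_ne_zero (sub_ne_zero.2 ne1) (cne hre2.le)) (sub_ne_zero.2 ne3.symm)) (kne hre2.le)
  · have h1 : f1 =ᶠ[nhds ((starRingEnd ℂ) ρ)] fun s => (s - (starRingEnd ℂ) ρ) * ((s - 1) * (chi (s + 1) * chi (3 * s)) * (s - ρ) * kk ρ s) := by
      filter_upwards [ev hre3] with s hs
      rw [fe hs]; ring
    have hk := kk_diffAt hre2 hre3.le
    have e := cd ((starRingEnd ℂ) ρ)
    rw [h1.deriv_eq, deriv_simple (by fun_prop)]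
    exact mul_ne_zero (mul_ne_zero (mul_ne_zero (sub_ne_zero.2 ne2) (cne hre3.le)) (sub_ne_zero.2 ne3)) (kne hre3.le)
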